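/- Let G be a 2-connected claw-free simple graph of order n with n ≥ 33. If every endvertex of each induced net of G has degree at least (n-2)/3 in G, then G is hamiltonian. -/

import Mathlib

open SimpleGraph

/-- The net: vertices 0,1,2 form a triangle, and 3,4,5 are pendant vertices
attached to 0,1,2 respectively.  Its endvertices are 3,4,5. -/
def netGraph : SimpleGraph (Fin 6) :=
  SimpleGraph.fromEdgeSet {s(0, 1), s(1, 2), s(0, 2), s(0, 3), s(1, 4), s(2, 5)}

/-- `f` is an induced copy of `G'` in `G`: an injective map which preserves and
reflects adjacency. -/
def IsInducedCopy {W V : Type*} (G' : SimpleGraph W) (G : SimpleGraph V) (f : W → V) : Prop :=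
  Function.Injective f ∧ ∀ a b : W, G'.Adj a b ↔ G.Adj (f a) (f b)

/-- A graph is claw-free if it has no induced subgraph isomorphic to `K_{1,3}`. -/
def ClawFree {V : Type*} (G : SimpleGraph V) : Prop :=
  ¬ ∃ f : (Fin 1 ⊕ Fin 3) → V, IsInducedCopy (completeBipartiteGraph (Fin 1) (Fin 3)) G f

/-- A graph is 2-connected if it has at least 3 vertices and deleting any single
vertex leaves a connected graph. -/
def TwoConnected {V : Type*} [Fintype V] (G : SimpleGraph V) : Prop :=
  3 ≤ Fintype.card V ∧ ∀ v : V, (G.induce {w | w ≠ v}).Connected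


namespace BR
open Finset
open scoped Classical in
/-- degree of `k` in the edge set `H` -/
noncomputable def dg {K : Type*} (H : Finset (Sym2 K)) (k : K) : ℕ :=
  (H.filter (fun e => k ∈ e)).card

/-- the edge `e` crosses the vertex set `X` -/
def Cr {K : Type*} (X : Set K) (e : Sym2 K) : Prop := ∃ a ∈ e, ∃ b ∈ e, a ∈ X ∧ b ∉ X

open scoped Classical in
/-- the odd vertices of `H` are `A` and `B` (none when `A = B`) -/
def Par {K : Type*} (H : Finset (Sym2 K)) (A B : K) : Prop :=
  ∀ k, (dg H k : ZMod 2) = (if k = A then 1 else 0) + (if k = B then 1 else 0)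

variable {K : Type*}

lemma cr_mk {X : Set K} {a b : K} : Cr X s(a, b) ↔ (a ∈ X ∧ b ∉ X) ∨ (b ∈ X ∧ a ∉ X) := by
  unfold Cr; simp only [Sym2.mem_iff]; constructor
  · rintro ⟨x, rfl | rfl, y, rfl | rfl, h1, h2⟩ <;> tauto
  · rintro (⟨h1, h2⟩ | ⟨h1, h2⟩)
    · exact ⟨a, .inl rfl, b, .inr rfl, h1, h2⟩
    · exact ⟨b, .inr rfl, a, .inl rfl, h1, h2⟩

lemma Par.symm {H : Finset (Sym2 K)} {A B : K} (h : Par H A B) : Par H B A := fun k => by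
  rw [h k, add_comm]

lemma dg_symmDiff [DecidableEq K] (H D : Finset (Sym2 K)) (k : K) :
    (dg (symmDiff H D) k : ZMod 2) = dg H k + dg D k := by
  classical
  unfold dg
  have h1 : ((symmDiff H D).filter (fun e => k ∈ e)).card + 2 * ((H ∩ D).filter (fun e => k ∈ e)).card
      = (H.filter (fun e => k ∈ e)).card + (D.filter (fun e => k ∈ e)).card := by
    rw [← card_union_add_card_inter (H.filter _) (D.filter _), ← filter_union, ← filter_inter_distrib]
    have : H ∪ D = symmDiff H D ∪ (H ∩ D) := by
      ext e; simp only [mem_union, mem_symmDiff, mem_inter]; tauto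
    rw [this, filter_union, card_union_of_disjoint]
    · ring
    · rw [Finset.disjoint_left]; intro e; simp only [mem_filter, mem_symmDiff, mem_inter]; tauto
  have h2 := congrArg (Nat.cast : ℕ → ZMod 2) h1
  push_cast at h2
  have : (2 : ZMod 2) = 0 := rfl
  rw [this, zero_mul, add_zero] at h2
  convert h2

lemma Par.trans [DecidableEq K] {H D : Finset (Sym2 K)} {A B C : K} (h : Par H A B) (h' : Par D B C) :
    Par (symmDiff H D) A C := fun k => by
  have e1 : ∀ a b c : ZMod 2, (a + b) + (b + c) = a + c := by decide
  rw [dg_symmDiff, h k, h' k, e1]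

lemma Par.single {a b : K} (h : a ≠ b) : Par {s(a, b)} a b := fun k => by
  classical
  unfold dg
  by_cases ha : k = a
  · subst ha; simp [h, Finset.filter_singleton]
  · by_cases hb : k = b
    · subst hb; simp [ha, Finset.filter_singleton]
    · simp [ha, hb, Finset.filter_singleton]

lemma Par.empty (a : K) : Par ∅ a a := fun k => by
  have e1 : ∀ x : ZMod 2, x + x = 0 := by decide
  rw [e1]; simp [dg]

open scoped Classical in
lemma par_cut [Fintype K] {H : Finset (Sym2 K)} {A B : K} (h : Par H A B)
    (hd : ∀ e ∈ H, ¬ e.IsDiag) (X : Set K) :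
    ((H.filter (Cr X)).card : ZMod 2) = (if A ∈ X then 1 else 0) + (if B ∈ X then 1 else 0) := by
  have key : ∑ k ∈ univ.filter (· ∈ X), (dg H k : ZMod 2) = ((H.filter (Cr X)).card : ZMod 2) := by
    unfold dg
    simp only [card_filter, Nat.cast_sum]
    rw [sum_comm]
    apply sum_congr rfl
    intro e he
    induction e with | _ a b =>
    have hab : a ≠ b := by simpa using hd _ he
    rw [cr_mk]
    have : ∀ k, (if k ∈ s(a,b) then (1:ℕ) else 0) = (if k = a then 1 else 0) + (if k = b then 1 else 0) := by
      intro k; simp only [Sym2.mem_iff]; split_ifs <;> simp_all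
    simp only [this, Nat.cast_add, sum_add_distrib, Nat.cast_ite, Nat.cast_one, Nat.cast_zero,
      sum_ite_eq', mem_filter, mem_univ, true_and]
    have : (1 : ZMod 2) + 1 = 0 := rfl
    split_ifs <;> simp_all
  rw [← key]
  simp only [h _, sum_add_distrib, sum_ite_eq', mem_filter, mem_univ, true_and]

/-- a closed trail dominating `W` -/
def Clos (E W : Finset (Sym2 K)) : Prop :=
  ∃ (U : Set K) (S : Finset (Sym2 K)), U.Nonempty ∧ S ⊆ E ∧ (∀ e ∈ S, ∀ k ∈ e, k ∈ U) ∧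
    (∀ k, (dg S k : ZMod 2) = 0) ∧
    (∀ X : Set K, (∃ a ∈ U, a ∈ X) → (∃ b ∈ U, b ∉ X) → ∃ e ∈ S, Cr X e) ∧
    (∀ e ∈ W, ∃ k ∈ e, k ∈ U)

structure Good (E W H : Finset (Sym2 K)) (U : Set K) (A B : K) : Prop where
  WE : W ⊆ E
  HE : H ⊆ E
  nd : ∀ e ∈ E, ¬ e.IsDiag
  AB : A ≠ B
  AU : A ∈ U
  BU : B ∈ U
  ends : ∀ e ∈ H, ∀ k ∈ e, k ∈ U
  par : Par H A B
  c2 : ∀ (X : Set K) (g : Sym2 K), (∃ a ∈ U, a ∈ X) → (∃ b ∈ U, b ∉ X) → ∃ e ∈ H, e ≠ g ∧ Cr X e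
  dom : ∀ e ∈ W, ∃ k ∈ e, k ∈ U

lemma Good.symm {E W H : Finset (Sym2 K)} {U : Set K} {A B : K} (h : Good E W H U A B) :
    Good E W H U B A := ⟨h.WE, h.HE, h.nd, h.AB.symm, h.BU, h.AU, h.ends, h.par.symm, h.c2, h.dom⟩

/-- two-edge cut -/
def CutP (H : Finset (Sym2 K)) (f g : Sym2 K) : Prop :=
  f ≠ g ∧ f ∈ H ∧ g ∈ H ∧ ∃ X : Set K, ∀ e ∈ H, Cr X e ↔ (e = f ∨ e = g)

lemma CutP.symm {H : Finset (Sym2 K)} {f g : Sym2 K} (h : CutP H f g) : CutP H g f := by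
  obtain ⟨h1, h2, h3, X, hX⟩ := h
  exact ⟨h1.symm, h3, h2, X, fun e he => by rw [hX e he, or_comm]⟩

lemma cr_compl {X : Set K} {e : Sym2 K} : Cr Xᶜ e ↔ Cr X e := by
  induction e with | _ a b => simp only [cr_mk, Set.mem_compl_iff]; tauto

lemma core_aux {h a b c : Prop} (d12 : a → ¬ b) (d1L : a → ¬ c) (d2L : b → ¬ c) (LH : c → ¬ h) :
    ((h ∧ ¬ a ∧ ¬ b) ∨ (¬ h ∧ (a ∨ b ∨ c))) ↔
    ((((h ∧ ¬ a ∨ a ∧ ¬ h) ∧ ¬ c ∨ c ∧ ¬ (h ∧ ¬ a ∨ a ∧ ¬ h)) ∧ ¬ b) ∨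
      (b ∧ ¬ ((h ∧ ¬ a ∨ a ∧ ¬ h) ∧ ¬ c ∨ c ∧ ¬ (h ∧ ¬ a ∨ a ∧ ¬ h)))) := by
  by_cases h <;> by_cases a <;> by_cases b <;> by_cases c <;> simp_all

open scoped Classical in
lemma core {E W H : Finset (Sym2 K)} {U : Set K} {A B : K} (hG : Good E W H U A B)
    {s t : K} {D1 D2 L : Finset (Sym2 K)} {Z1 Z2 : Set K} {f1 f2 : Sym2 K} {H' : Finset (Sym2 K)}
    {U' : Set K}
    (D1E : D1 ⊆ E) (D2E : D2 ⊆ E) (LE : L ⊆ E)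
    (p1 : Par D1 A s) (pL : Par L s t) (p2 : Par D2 t B)
    (hH' : ∀ e, e ∈ H' ↔ (e ∈ H ∧ e ∉ D1 ∧ e ∉ D2) ∨ (e ∉ H ∧ (e ∈ D1 ∨ e ∈ D2 ∨ e ∈ L)))
    (hU' : ∀ k, k ∈ U' ↔ (k ∈ U ∧ k ∉ Z1 ∧ k ∉ Z2) ∨ k = s ∨ k = t)
    (Z12 : ∀ k ∈ Z1, k ∉ Z2)
    (hZ1 : ∀ e ∈ H, ∀ k ∈ e, k ∈ Z1 → e ∈ D1) (hZ2 : ∀ e ∈ H, ∀ k ∈ e, k ∈ Z2 → e ∈ D2)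
    (new : ∀ e, e ∉ H → (e ∈ D1 ∨ e ∈ D2 ∨ e ∈ L) → ∀ k ∈ e, k ∈ U' ∧ k ∉ Z1 ∧ k ∉ Z2)
    (d12 : ∀ e ∈ D1, e ∉ D2) (d1L : ∀ e ∈ D1, e ∉ L) (d2L : ∀ e ∈ D2, e ∉ L) (LH : ∀ e ∈ L, e ∉ H)
    (st : s = t ∨ s(s, t) ∈ L)
    (hs : ∃ u ∈ U, u ∉ Z1 ∧ u ∉ Z2 ∧ (u = s ∨ s(u, s) ∈ H'))
    (sZ1 : s ∉ Z1) (sZ2 : s ∉ Z2) (tZ1 : t ∉ Z1) (tZ2 : t ∉ Z2)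
    (cut1 : ∀ Y : Set K, (∀ e ∈ H', ¬ Cr Y e) → (∀ k ∈ Z1, (k ∈ Y ↔ s ∈ Y)) →
      ∀ e ∈ H, e ∈ D1 → Cr Y e → e = f1)
    (cut2 : ∀ Y : Set K, (∀ e ∈ H', ¬ Cr Y e) → (∀ k ∈ Z2, (k ∈ Y ↔ t ∈ Y)) →
      ∀ e ∈ H, e ∈ D2 → Cr Y e → e = f2)
    (hnc : f1 ∈ D1 → f2 ∈ D2 → ¬ CutP H f1 f2)
    (dom : ∀ e ∈ W, ∃ k ∈ e, k ∈ U') : Clos E W := by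
  refine ⟨U', H', ⟨s, by rw [hU']; tauto⟩, ?_, ?_, ?_, ?_, dom⟩
  · intro e he
    rcases (hH' e).1 he with h | ⟨_, h | h | h⟩
    exacts [hG.HE h.1, D1E h, D2E h, LE h]
  · intro e he k hk
    rcases (hH' e).1 he with h | ⟨h1, h⟩
    · rw [hU']; left
      exact ⟨hG.ends e h.1 k hk, fun hz => h.2.1 (hZ1 e h.1 k hk hz), fun hz => h.2.2 (hZ2 e h.1 k hk hz)⟩
    · exact (new e h1 h k hk).1
  · intro k
    have := (((hG.par.symm.trans p1).trans pL).trans p2) k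
    have e1 : ∀ x : ZMod 2, x + x = 0 := by decide
    rw [e1] at this
    rw [← this]; congr 2
    ext e
    rw [hH', mem_symmDiff, mem_symmDiff, mem_symmDiff]
    exact core_aux (d12 e) (d1L e) (d2L e) (LH e)
  · intro X hX1 hX2
    by_contra hno
    push Not at hno
    have hst : s ∈ X ↔ t ∈ X := by
      rcases st with rfl | h
      · rfl
      · have h1 : s(s,t) ∈ H' := (hH' _).2 (.inr ⟨LH _ h, .inr (.inr h)⟩)
        have := hno _ h1
        rw [cr_mk] at this; tauto
    set Y : Set K := {k | if k ∈ Z1 then s ∈ X else if k ∈ Z2 then t ∈ X else k ∈ X} with hY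
    have Yn : ∀ k, k ∉ Z1 → k ∉ Z2 → (k ∈ Y ↔ k ∈ X) := by
      intro k h1 h2; simp [hY, h1, h2]
    have Y1 : ∀ k ∈ Z1, (k ∈ Y ↔ s ∈ Y) := by
      intro k h1; rw [Yn s sZ1 sZ2]; simp [hY, h1]
    have Y2 : ∀ k ∈ Z2, (k ∈ Y ↔ t ∈ Y) := by
      intro k h2; rw [Yn t tZ1 tZ2]
      have : k ∉ Z1 := fun h => Z12 k h h2
      simp [hY, h2, this]
    have hCr : ∀ e, (∀ k ∈ e, k ∉ Z1 ∧ k ∉ Z2) → (Cr Y e ↔ Cr X e) := by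
      intro e he
      induction e with | _ a b =>
      have ha := he a (by simp); have hb := he b (by simp)
      rw [cr_mk, cr_mk, Yn a ha.1 ha.2, Yn b hb.1 hb.2]
    have hno' : ∀ e ∈ H', ¬ Cr Y e := by
      intro e he
      rw [hCr]
      · exact hno e he
      · intro k hk
        rcases (hH' e).1 he with h | ⟨h1, h⟩
        · exact ⟨fun hz => h.2.1 (hZ1 e h.1 k hk hz), fun hz => h.2.2 (hZ2 e h.1 k hk hz)⟩
        · exact (new e h1 h k hk).2
    -- Y splits U
    have hrep : ∀ a ∈ U', ∃ a' ∈ U, (a' ∈ Y ↔ a ∈ X) := by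
      intro a ha
      obtain ⟨u, uU, uZ1, uZ2, hu⟩ := hs
      have hus : u ∈ X ↔ s ∈ X := by
        rcases hu with rfl | h
        · rfl
        · have := hno _ h; rw [cr_mk] at this; tauto
      rcases (hU' a).1 ha with h | rfl | rfl
      · exact ⟨a, h.1, Yn a h.2.1 h.2.2⟩
      · exact ⟨u, uU, by rw [Yn u uZ1 uZ2, hus]⟩
      · exact ⟨u, uU, by rw [Yn u uZ1 uZ2, hus, hst]⟩
    obtain ⟨a, aU, aX⟩ := hX1
    obtain ⟨b, bU, bX⟩ := hX2
    obtain ⟨a', aU', ha'⟩ := hrep a aU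
    obtain ⟨b', bU', hb'⟩ := hrep b bU
    have hc : ∀ e ∈ H, Cr Y e → (e ∈ D1 ∧ e = f1) ∨ (e ∈ D2 ∧ e = f2) := by
      intro e he hce
      by_cases h1 : e ∈ D1
      · exact .inl ⟨h1, cut1 Y hno' Y1 e he h1 hce⟩
      · by_cases h2 : e ∈ D2
        · exact .inr ⟨h2, cut2 Y hno' Y2 e he h2 hce⟩
        · exact absurd hce (hno' e ((hH' e).2 (.inl ⟨he, h1, h2⟩)))
    obtain ⟨e1, he1, hne1, hce1⟩ := hG.c2 Y f2 ⟨a', aU', ha'.2 aX⟩ ⟨b', bU', fun h => bX (hb'.1 h)⟩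
    obtain ⟨e2, he2, hne2, hce2⟩ := hG.c2 Y f1 ⟨a', aU', ha'.2 aX⟩ ⟨b', bU', fun h => bX (hb'.1 h)⟩
    have q1 : e1 ∈ D1 ∧ e1 = f1 := by rcases hc e1 he1 hce1 with h | h; exact h; exact absurd h.2 hne1
    have q2 : e2 ∈ D2 ∧ e2 = f2 := by rcases hc e2 he2 hce2 with h | h; exact absurd h.2 hne2; exact h
    obtain ⟨q1, rfl⟩ := q1
    obtain ⟨q2, rfl⟩ := q2
    refine hnc q1 q2 ⟨fun h => d12 _ q1 (h ▸ q2), he1, he2, Y, fun e he => ⟨fun h => ?_, ?_⟩⟩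
    · rcases hc e he h with h | h
      exacts [.inl h.2, .inr h.2]
    · rintro (rfl | rfl) <;> assumption
end BR


namespace BR
open Finset
variable {K : Type*}

/-- Data of a partial move: the odd vertex `A` is moved to `s` along `D`, dropping `Z`. -/
structure Tip (E W H : Finset (Sym2 K)) (U : Set K) (A B s : K) (D : Finset (Sym2 K)) (Z : Set K)
    (f : Sym2 K) : Prop where
  DE : D ⊆ E
  p : Par D A s
  zs : ∀ a ∈ Z, ∀ b ∈ Z, a = b
  zH : ∀ e ∈ H, ∀ k ∈ e, k ∈ Z → e ∈ D
  zW : ∀ e ∈ W, ∀ k ∈ e, k ∈ Z → ∀ k' ∈ e, k' ∈ U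
  sZ : s ∉ Z
  fD : D.Nonempty → f ∈ D ∧ f ∈ H
  con : ∀ e ∈ D, A ∈ e ∨ ∃ z ∈ e, f = s(A, z)
  new : ∀ e ∈ D, e ∉ H → ∀ k ∈ e, k ∉ Z ∧ (k ∈ U ∨ k = s)
  hs : ∃ u ∈ U, u ∉ Z ∧ (u = s ∨ (s(u, s) ∈ D ∧ s(u, s) ∉ H))
  cut : ∃ X : Set K, A ∉ X ∧ B ∉ X ∧ (∀ e ∈ H, Cr X e → e = f ∨ CutP H f e) ∧
    ∀ Y : Set K, (∀ k ∈ Z, (k ∈ Y ↔ s ∈ Y)) → ∀ e ∈ H, e ∈ D → Cr Y e →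
      e = f ∨ ∃ e' ∈ H, e' ∉ D ∧ Cr Y e' ∧ ∀ k ∈ e', k ∈ X

lemma Tip.comb_aux {E W H : Finset (Sym2 K)} {U : Set K} {A B s t : K} {D1 D2 : Finset (Sym2 K)}
    {Z1 Z2 : Set K} {f1 f2 : Sym2 K} (T1 : Tip E W H U A B s D1 Z1 f1)
    (T2 : Tip E W H U B A t D2 Z2 f2) (d12 : ∀ e ∈ D1, e ∉ D2)
    (hnc : D1.Nonempty → D2.Nonempty → ¬ CutP H f1 f2) {H' : Finset (Sym2 K)}
    (hH' : ∀ e ∈ H, e ∉ D1 → e ∉ D2 → e ∈ H') (Y : Set K) (hY : ∀ e ∈ H', ¬ Cr Y e)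
    (hYZ : ∀ k ∈ Z1, (k ∈ Y ↔ s ∈ Y)) (e : Sym2 K) (he : e ∈ H) (heD : e ∈ D1) (hc : Cr Y e) :
    e = f1 := by
  obtain ⟨X, hA, hB, hX, hcut⟩ := T1.cut
  rcases hcut Y hYZ e he heD hc with h | ⟨e', he', heD', hc', hin⟩
  · exact h
  exfalso
  by_cases h2 : e' ∈ D2
  · have n1 : D1.Nonempty := ⟨e, heD⟩
    have n2 : D2.Nonempty := ⟨e', h2⟩
    have hn := hnc n1 n2
    have g1 := T1.fD n1
    have g2 := T2.fD n2
    rcases T2.con e' h2 with h | ⟨z, hz, rfl⟩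
    · exact hB (hin _ h)
    · have : Cr X s(B, z) := by rw [cr_mk]; exact .inr ⟨hin _ hz, hB⟩
      rcases hX _ g2.2 this with h | h
      · exact d12 _ g1.1 (h ▸ g2.1)
      · exact hn h
  · exact hY e' (hH' e' he' heD' h2) hc'

open scoped Classical in
lemma Tip.comb {E W H : Finset (Sym2 K)} {U : Set K} {A B s t : K} {D1 D2 : Finset (Sym2 K)}
    {Z1 Z2 : Set K} {f1 f2 : Sym2 K} (hG : Good E W H U A B) (T1 : Tip E W H U A B s D1 Z1 f1)
    (T2 : Tip E W H U B A t D2 Z2 f2)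
    (hL : s = t ∨ (s(s, t) ∈ E ∧ s(s, t) ∉ H ∧ s(s, t) ∉ D1 ∧ s(s, t) ∉ D2))
    (hnc : D1.Nonempty → D2.Nonempty → ¬ CutP H f1 f2)
    (d12 : ∀ e ∈ D1, e ∉ D2)
    (sZ2 : s ∉ Z2) (tZ1 : t ∉ Z1)
    (n1 : ∀ e ∈ D1, e ∉ H → ∀ k ∈ e, k ∉ Z2) (n2 : ∀ e ∈ D2, e ∉ H → ∀ k ∈ e, k ∉ Z1)
    (Z12 : ∀ k ∈ Z1, k ∉ Z2)
    (hW : ∀ a ∈ Z1, ∀ b ∈ Z2, s(a, b) ∉ W) : Clos E W := by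
  obtain ⟨L, LE, pL, LH, LD1, LD2, st, hLe⟩ : ∃ L : Finset (Sym2 K), L ⊆ E ∧ Par L s t ∧
      (∀ e ∈ L, e ∉ H) ∧ (∀ e ∈ D1, e ∉ L) ∧ (∀ e ∈ D2, e ∉ L) ∧ (s = t ∨ s(s, t) ∈ L) ∧
      (∀ e ∈ L, ∀ k ∈ e, k = s ∨ k = t) := by
    by_cases h : s = t
    · subst h; exact ⟨∅, by simp, Par.empty s, by simp, by simp, by simp, .inl rfl, by simp⟩
    · rcases hL with h' | ⟨h1, h2, h3, h4⟩
      · exact absurd h' h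
      · refine ⟨{s(s, t)}, by simpa using h1, Par.single h, by simpa using h2, ?_, ?_, by simp, by simp⟩
        · rintro e he he'; rw [mem_singleton] at he'; exact h3 (he' ▸ he)
        · rintro e he he'; rw [mem_singleton] at he'; exact h4 (he' ▸ he)
  obtain ⟨H', hH'⟩ : ∃ H' : Finset (Sym2 K), ∀ e, e ∈ H' ↔
      (e ∈ H ∧ e ∉ D1 ∧ e ∉ D2) ∨ (e ∉ H ∧ (e ∈ D1 ∨ e ∈ D2 ∨ e ∈ L)) := by
    refine ⟨(H \ (D1 ∪ D2)) ∪ ((D1 ∪ D2 ∪ L) \ H), fun e => ?_⟩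
    rw [mem_union, mem_sdiff, mem_sdiff, mem_union, mem_union, mem_union]
    by_cases h1 : e ∈ H <;> simp [h1, or_assoc]
  obtain ⟨U', hU'⟩ : ∃ U' : Set K, ∀ k, k ∈ U' ↔ (k ∈ U ∧ k ∉ Z1 ∧ k ∉ Z2) ∨ k = s ∨ k = t :=
    ⟨{k | (k ∈ U ∧ k ∉ Z1 ∧ k ∉ Z2) ∨ k = s ∨ k = t}, fun k => Iff.rfl⟩
  refine core hG (f1 := f1) (f2 := f2) T1.DE T2.DE LE T1.p pL T2.p.symm hH' hU' Z12 T1.zH T2.zH ?_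
    d12 LD1 LD2 LH st ?_ T1.sZ sZ2 tZ1 T2.sZ ?_ ?_ ?_ ?_
  · rintro e he (h | h | h) k hk
    · have h1 := T1.new e h he k hk
      have h2 := n1 e h he k hk
      refine ⟨(hU' k).2 ?_, h1.1, h2⟩
      exact h1.2.elim (fun q => .inl ⟨q, h1.1, h2⟩) (fun q => .inr (.inl q))
    · have h1 := T2.new e h he k hk
      have h2 := n2 e h he k hk
      refine ⟨(hU' k).2 ?_, h2, h1.1⟩
      exact h1.2.elim (fun q => .inl ⟨q, h2, h1.1⟩) (fun q => .inr (.inr q))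
    · rcases hLe e h k hk with rfl | rfl
      · exact ⟨(hU' _).2 (.inr (.inl rfl)), T1.sZ, sZ2⟩
      · exact ⟨(hU' _).2 (.inr (.inr rfl)), tZ1, T2.sZ⟩
  · obtain ⟨u, hu, hz, h⟩ := T1.hs
    rcases h with rfl | ⟨h1, h2⟩
    · exact ⟨u, hu, hz, sZ2, .inl rfl⟩
    · exact ⟨u, hu, hz, n1 _ h1 h2 u (by simp), .inr ((hH' _).2 (.inr ⟨h2, .inl h1⟩))⟩
  · intro Y hY hYZ e he heD hc
    exact T1.comb_aux T2 d12 hnc (fun e h1 h2 h3 => (hH' e).2 (.inl ⟨h1, h2, h3⟩)) Y hY hYZ e he heD hc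
  · intro Y hY hYZ e he heD hc
    exact T2.comb_aux T1 (fun e h1 h2 => d12 e h2 h1) (fun h1 h2 h => hnc h2 h1 h.symm)
      (fun e h1 h2 h3 => (hH' e).2 (.inl ⟨h1, h3, h2⟩)) Y hY hYZ e he heD hc
  · intro h1 h2; exact hnc ⟨_, h1⟩ ⟨_, h2⟩
  · intro e he
    obtain ⟨k, hk, hkU⟩ := hG.dom e he
    by_cases h : k ∈ Z1 ∨ k ∈ Z2
    · have hnd := hG.nd e (hG.WE he)
      induction e with | _ a b =>
      have hab : a ≠ b := by simpa using hnd
      have hall : ∀ k' ∈ s(a, b), k' ∈ U := by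
        rcases h with h | h
        · exact T1.zW _ he k hk h
        · exact T2.zW _ he k hk h
      have ha := hall a (by simp); have hb := hall b (by simp)
      have e1 := T1.zs a; have e2 := T2.zs a
      have w1 := hW a; have w2 := hW b
      by_contra hcon
      push Not at hcon
      have ca := hcon a (by simp); have cb := hcon b (by simp)
      rw [hU'] at ca cb
      push Not at ca cb
      have ca := ca.1 ha
      have cb := cb.1 hb
      by_cases a1 : a ∈ Z1
      · by_cases b1 : b ∈ Z1
        · exact hab (e1 a1 b b1)
        · exact w1 a1 b (cb b1) he
      · have a2 := ca a1
        by_cases b1 : b ∈ Z1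
        · exact w2 b1 a a2 (by rw [Sym2.eq_swap]; exact he)
        · exact hab (e2 a2 b (cb b1))
    · push Not at h
      exact ⟨k, hk, (hU' k).2 (.inl ⟨hkU, h⟩)⟩

/-- minimal counterexample data -/
structure Mn (E W H : Finset (Sym2 K)) (U : Set K) (A B : K) : Prop extends Good E W H U A B where
  nc : ¬ Clos E W
  tri : ∀ a b c, s(a, b) ∈ E → s(b, c) ∈ E → s(a, c) ∈ E → False
  min1 : ∀ W', W' ⊂ W → Clos E W'
  min2 : ∀ H' U' A' B', Good E W H' U' A' B' → H.card ≤ H'.card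

section
variable {E W H : Finset (Sym2 K)} {U : Set K} {A B : K}

lemma Mn.symm (h : Mn E W H U A B) : Mn E W H U B A :=
  ⟨h.toGood.symm, h.nc, h.tri, h.min1, h.min2⟩

lemma Good.ne (h : Good E W H U A B) {a b : K} (hab : s(a, b) ∈ E) : a ≠ b := by
  simpa using h.nd _ hab

lemma cr_empty {e : Sym2 K} : ¬ Cr (∅ : Set K) e := by
  rintro ⟨a, _, b, _, h, _⟩; exact h

lemma tip0 (h : Good E W H U A B) (f : Sym2 K) : Tip E W H U A B A ∅ ∅ f where
  DE := by simp
  p := Par.empty A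
  zs := by simp
  zH := by simp
  zW := by simp
  sZ := by simp
  fD := by simp
  con := by simp
  new := by simp
  hs := ⟨A, h.AU, by simp, .inl rfl⟩
  cut := ⟨∅, by simp, by simp, fun e _ hc => absurd hc cr_empty, by simp⟩

lemma tipu (h : Good E W H U A B) {u : K} (hu : s(A, u) ∈ H) :
    Tip E W H U A B u {s(A, u)} ∅ s(A, u) where
  DE := by simpa using h.HE hu
  p := Par.single (h.ne (h.HE hu))
  zs := by simp
  zH := by simp
  zW := by simp
  sZ := by simp
  fD := by simpa using hu
  con := by simp
  new := by simp [hu]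
  hs := ⟨u, h.ends _ hu u (by simp), by simp, .inl rfl⟩
  cut := ⟨∅, by simp, by simp, fun e _ hc => absurd hc cr_empty, by
    intro Y _ e _ he _; exact .inl (by simpa using he)⟩

lemma Mn.AB_not (h : Mn E W H U A B) : s(A, B) ∉ E := by
  intro hE
  apply h.nc
  by_cases hH : s(A, B) ∈ H
  · have hH' : s(B, A) ∈ H := by rw [Sym2.eq_swap]; exact hH
    exact Tip.comb h.toGood (tip0 h.toGood s(A, B)) (tipu h.toGood.symm hH') (.inl rfl) (by simp)
      (by simp) (by simp) (by simp) (by simp) (by simp) (by simp) (by simp)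
  · exact Tip.comb h.toGood (tip0 h.toGood s(A, B)) (tip0 h.toGood.symm s(A, B))
      (.inr ⟨hE, hH, by simp, by simp⟩) (by simp)
      (by simp) (by simp) (by simp) (by simp) (by simp) (by simp) (by simp)

/-- cuts of size two do not separate `A` and `B` -/
lemma Good.cutAB [Fintype K] (h : Good E W H U A B) {X : Set K} {f g : Sym2 K} (hfg : f ≠ g)
    (hf : f ∈ H) (hg : g ∈ H) (hX : ∀ e ∈ H, Cr X e ↔ (e = f ∨ e = g)) : A ∈ X ↔ B ∈ X := by
  classical
  have := par_cut h.par (fun e he => h.nd e (h.HE he)) X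
  have h2 : H.filter (Cr X) = {f, g} := by
    ext e; simp only [mem_filter, mem_insert, mem_singleton]
    constructor
    · rintro ⟨h1, h2⟩; exact (hX e h1).1 h2
    · rintro (rfl | rfl)
      · exact ⟨hf, (hX _ hf).2 (.inl rfl)⟩
      · exact ⟨hg, (hX _ hg).2 (.inr rfl)⟩
  have h3 : (H.filter (Cr X)).card = 2 := by rw [h2, card_pair hfg]
  have h4 : ((2 : ℕ) : ZMod 2) = 0 := rfl
  have h5 : ((H.filter (Cr X)).card : ZMod 2) = 0 := by rw [h3, h4]
  rw [h5] at this
  by_cases ha : A ∈ X <;> by_cases hb : B ∈ X <;> simp_all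

lemma Good.cutP_set [Fintype K] (h : Good E W H U A B) {f g : Sym2 K} (hc : CutP H f g) :
    ∃ X : Set K, A ∉ X ∧ B ∉ X ∧ ∀ e ∈ H, Cr X e ↔ (e = f ∨ e = g) := by
  obtain ⟨h1, h2, h3, X, hX⟩ := hc
  have := h.cutAB h1 h2 h3 hX
  by_cases hA : A ∈ X
  · exact ⟨Xᶜ, by simpa using hA, by simpa using this.1 hA, fun e he => by rw [cr_compl, hX e he]⟩
  · exact ⟨X, hA, fun hB => hA (this.2 hB), hX⟩

lemma Good.cut2 (h : Good E W H U A B) {X : Set K} {f g : Sym2 K}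
    (h1 : ∃ a ∈ U, a ∈ X) (h2 : ∃ a ∈ U, a ∉ X) (hX : ∀ e ∈ H, Cr X e → (e = f ∨ e = g)) :
    f ≠ g ∧ f ∈ H ∧ g ∈ H ∧ Cr X f ∧ Cr X g := by
  obtain ⟨e1, he1, hn1, hc1⟩ := h.c2 X g h1 h2
  obtain ⟨e2, he2, hn2, hc2⟩ := h.c2 X f h1 h2
  have q1 : e1 = f := by rcases hX e1 he1 hc1 with h | h; exact h; exact absurd h hn1
  have q2 : e2 = g := by rcases hX e2 he2 hc2 with h | h; exact absurd h hn2; exact h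
  subst q1; subst q2
  exact ⟨hn1, he1, he2, hc1, hc2⟩

lemma Good.cutP_of (h : Good E W H U A B) {X : Set K} {f g : Sym2 K}
    (h1 : ∃ a ∈ U, a ∈ X) (h2 : ∃ a ∈ U, a ∉ X) (hX : ∀ e ∈ H, Cr X e → (e = f ∨ e = g)) :
    CutP H f g := by
  obtain ⟨a, b, c, d, e⟩ := h.cut2 h1 h2 hX
  exact ⟨a, b, c, X, fun e' he' => ⟨hX e' he', by rintro (rfl | rfl) <;> assumption⟩⟩

/-- claim (M) -/
lemma Mn.M [Fintype K] (h : Mn E W H U A B) {u : K} (hu : s(A, u) ∈ H) :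
    ∃ (X : Set K) (g : Sym2 K), A ∉ X ∧ B ∉ X ∧ u ∈ X ∧ g ≠ s(A, u) ∧ g ∈ H ∧
      ∀ e ∈ H, Cr X e ↔ (e = s(A, u) ∨ e = g) := by
  classical
  have huB : u ≠ B := by rintro rfl; exact h.AB_not (h.HE hu)
  have huA := h.ne (h.HE hu)
  by_contra hcon
  have hgood : Good E W (H.erase s(A, u)) U u B := by
    refine ⟨h.WE, (erase_subset _ _).trans h.HE, h.nd, huB, h.ends _ hu u (by simp), h.BU, ?_, ?_, ?_, h.dom⟩
    · intro e he; exact h.ends e (mem_of_mem_erase he)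
    · have : H.erase s(A, u) = symmDiff {s(A, u)} H := by
        ext e; simp only [mem_erase, mem_symmDiff, mem_singleton]
        constructor
        · tauto
        · rintro (⟨rfl, h2⟩ | h2)
          · exact absurd hu h2
          · tauto
      rw [this]
      exact (Par.single huA).symm.trans h.par
    · intro X g h1 h2
      by_contra hno
      push Not at hno
      have hX : ∀ e ∈ H, Cr X e → (e = s(A, u) ∨ e = g) := by
        intro e he hc
        by_contra hh; push Not at hh
        exact hno e (mem_erase.2 ⟨hh.1, he⟩) hh.2 hc
      have hcp := h.cut2 h1 h2 hX
      obtain ⟨Y, hA, hB, hY⟩ := h.cutP_set (h.cutP_of h1 h2 hX)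
      have : Cr Y s(A, u) := (hY _ hu).2 (.inl rfl)
      rw [cr_mk] at this
      exact hcon ⟨Y, g, hA, hB, by tauto, hcp.1.symm, hcp.2.2.1, hY⟩
  have := h.min2 _ _ _ _ hgood
  rw [card_erase_of_mem hu] at this
  have : 0 < H.card := card_pos.2 ⟨_, hu⟩
  omega

lemma cr_symmDiff {X Y : Set K} {e : Sym2 K} : Cr (symmDiff X Y) e ↔ (Cr X e ↔ ¬ Cr Y e) := by
  induction e with | _ a b =>
  simp only [cr_mk, Set.mem_symmDiff]
  by_cases a ∈ X <;> by_cases a ∈ Y <;> by_cases b ∈ X <;> by_cases b ∈ Y <;> simp_all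

lemma CutP.trans {f g k : Sym2 K} (h1 : CutP H f g) (h2 : CutP H g k) (hne : f ≠ k) : CutP H f k := by
  obtain ⟨a1, a2, a3, X, hX⟩ := h1
  obtain ⟨b1, b2, b3, Y, hY⟩ := h2
  refine ⟨hne, a2, b3, symmDiff X Y, fun e he => ?_⟩
  rw [cr_symmDiff, hX e he, hY e he]
  by_cases e = f <;> by_cases e = g <;> by_cases e = k <;> simp_all

lemma cr_inter_aux {X Y : Set K} {e : Sym2 K} (yA : A ∉ Y) (yB : B ∉ Y) :
    (A ∈ e ∨ B ∈ e) → ¬ Cr Y e → ¬ Cr (X ∩ Y) e := by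
  induction e with | _ a b =>
  simp only [cr_mk, Set.mem_inter_iff, Sym2.mem_iff]
  rintro ((rfl | rfl) | (rfl | rfl)) h1 h2 <;> tauto

lemma cr_inter {X Y : Set K} {e : Sym2 K} : Cr (X ∩ Y) e → Cr X e ∨ Cr Y e := by
  induction e with | _ a b =>
  simp only [cr_mk, Set.mem_inter_iff]; tauto

lemma cr_union {X Y : Set K} {e : Sym2 K} : Cr (X ∪ Y) e → Cr X e ∨ Cr Y e := by
  induction e with | _ a b =>
  simp only [cr_mk, Set.mem_union]; tauto

lemma cr_inter_in {X Y : Set K} {f : Sym2 K} (xA : A ∉ X) (xB : B ∉ X) (yA : A ∉ Y) (yB : B ∉ Y)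
    (hf : A ∈ f ∨ B ∈ f) (h1 : Cr X f) (h2 : Cr Y f) : ∃ p ∈ f, p ∈ X ∩ Y := by
  induction f with | _ a b =>
  simp only [cr_mk, Set.mem_inter_iff, Sym2.mem_iff] at *
  have : (a ∈ X ∧ a ∈ Y) ∨ (b ∈ X ∧ b ∈ Y) := by
    rcases hf with (rfl | rfl) | (rfl | rfl) <;> tauto
  rcases this with h | h
  · exact ⟨a, .inl rfl, h⟩
  · exact ⟨b, .inr rfl, h⟩

/-- an edge at `A` or `B` has at most one partner at `A` or `B` -/
lemma Good.part_unique [Fintype K] (h : Good E W H U A B) {f g g' : Sym2 K} (hf : A ∈ f ∨ B ∈ f)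
    (hg : A ∈ g ∨ B ∈ g) (hg' : A ∈ g' ∨ B ∈ g') (h1 : CutP H f g) (h2 : CutP H f g') : g = g' := by
  by_contra hne
  obtain ⟨X, xA, xB, hX⟩ := h.cutP_set h1
  obtain ⟨Y, yA, yB, hY⟩ := h.cutP_set h2
  have hfX : Cr X f := (hX f h1.2.1).2 (.inl rfl)
  have hfY : Cr Y f := (hY f h1.2.1).2 (.inl rfl)
  have hgY : ¬ Cr Y g := by rw [hY g h1.2.2.1]; rintro (h | h); exact h1.1 h.symm; exact hne h
  have hgX : ¬ Cr X g' := by rw [hX g' h2.2.2.1]; rintro (h | h); exact h2.1 h.symm; exact hne h.symm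
  have a1 := fun e => cr_inter_aux (X := X) (e := e) yA yB
  have a2 := fun e => cr_inter_aux (X := Y) (e := e) xA xB
  simp only [Set.inter_comm Y X] at a2
  have a3 := fun e => cr_inter (X := X) (Y := Y) (e := e)
  have hin : ∃ p ∈ f, p ∈ X ∩ Y := by
    exact cr_inter_in xA xB yA yB hf hfX hfY
  obtain ⟨p, hpf, hp⟩ := hin
  obtain ⟨e, he, hne', hce⟩ := h.c2 (X ∩ Y) f ⟨p, h.ends f h1.2.1 p hpf, hp⟩ ⟨A, h.AU, fun h => xA h.1⟩
  rcases a3 e hce with hc | hc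
  · rcases (hX e he).1 hc with rfl | rfl
    · exact hne' rfl
    · exact a1 _ hg hgY hce
  · rcases (hY e he).1 hc with rfl | rfl
    · exact hne' rfl
    · exact a2 _ hg' hgX hce
end
end BR


namespace BR
open Finset
variable {K : Type*} {E W H : Finset (Sym2 K)} {U : Set K} {A B : K}

def LT1 (W H : Finset (Sym2 K)) (U : Set K) (A u v : K) : Prop :=
  s(u, v) ∈ H ∧ (∀ e ∈ W, u ∈ e → ∀ k ∈ e, k ∈ U) ∧ (∀ e ∈ H, u ∈ e → e = s(A, u) ∨ e = s(u, v))

def LT2 (W : Finset (Sym2 K)) (U : Set K) (u v : K) : Prop := s(u, v) ∈ W ∧ v ∉ U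

def LT3 (H : Finset (Sym2 K)) (A B u v : K) : Prop :=
  s(u, v) ∈ H ∧ ∃ (X : Set K) (g : Sym2 K), A ∉ X ∧ B ∉ X ∧ u ∈ X ∧ v ∈ X ∧ g ≠ s(A, u) ∧ g ∈ H ∧
    (∀ e ∈ H, Cr X e ↔ (e = s(A, u) ∨ e = g)) ∧
    ∀ Y : Set K, Cr Y s(u, v) → ∃ e' ∈ H, e' ≠ s(u, v) ∧ Cr Y e' ∧ ∀ k ∈ e', k ∈ X

/-- `u, v` is a leg at `A` -/
structure Leg (E W H : Finset (Sym2 K)) (U : Set K) (A B u v : K) : Prop where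
  f : s(A, u) ∈ H
  e : s(u, v) ∈ E
  vA : v ≠ A
  uA : u ≠ A
  uv : u ≠ v
  ty : LT1 W H U A u v ∨ LT2 W U u v ∨ LT3 H A B u v

lemma Leg.inH {u v : K} (h : Leg E W H U A B u v) (hv : v ∈ U) : s(u, v) ∈ H := by
  rcases h.ty with h | h | h
  exacts [h.1, absurd hv h.2, h.1]

open scoped Classical in
lemma tipv (hG : Good E W H U A B) {u v : K} (h : Leg E W H U A B u v) :
    ∃ Z : Set K, (∀ k ∈ Z, k = u) ∧ (∀ k ∈ Z, ∀ e ∈ H, u ∈ e → e = s(A, u) ∨ e = s(u, v)) ∧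
      Tip E W H U A B v {s(A, u), s(u, v)} Z s(A, u) := by
  have huU := hG.ends _ h.f u (by simp)
  have hne : s(A, u) ≠ s(u, v) := by
    intro hh; rw [Sym2.eq_swap, Sym2.congr_right] at hh; exact h.vA hh.symm
  have hp : Par {s(A, u), s(u, v)} A v := by
    have := (Par.single h.uA.symm).trans (Par.single h.uv)
    convert this using 1
    ext e; simp only [mem_insert, mem_singleton, mem_symmDiff]
    constructor
    · rintro (rfl | rfl)
      · exact .inl ⟨rfl, hne⟩
      · exact .inr ⟨rfl, hne.symm⟩
    · rintro (h | h)
      exacts [.inl h.1, .inr h.1]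
  have hDE : {s(A, u), s(u, v)} ⊆ E := by
    intro e he; simp only [mem_insert, mem_singleton] at he
    rcases he with rfl | rfl
    exacts [hG.HE h.f, h.e]
  have hcon : ∀ e ∈ ({s(A, u), s(u, v)} : Finset (Sym2 K)), A ∈ e ∨ ∃ z ∈ e, s(A, u) = s(A, z) := by
    intro e he; simp only [mem_insert, mem_singleton] at he
    rcases he with rfl | rfl
    · left; simp
    · right; exact ⟨u, by simp, rfl⟩
  rcases h.ty with t | t | t
  · refine ⟨{u}, by simp, fun k _ => t.2.2, hDE, hp, by simp, ?_, ?_, ?_, ?_, hcon, ?_, ?_, ?_⟩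
    · rintro e he k hk rfl
      have := t.2.2 e he hk
      simpa using this
    · rintro e he k hk rfl
      exact t.2.1 e he hk
    · simpa using h.uv.symm
    · intro _; exact ⟨by simp, h.f⟩
    · intro e he heH
      simp only [mem_insert, mem_singleton] at he
      rcases he with rfl | rfl
      exacts [absurd h.f heH, absurd t.1 heH]
    · exact ⟨v, hG.ends _ t.1 v (by simp), by simpa using h.uv.symm, .inl rfl⟩
    · refine ⟨∅, by simp, by simp, fun e _ hc => absurd hc cr_empty, ?_⟩
      intro Y hY e _ he hc
      simp only [mem_insert, mem_singleton] at he
      rcases he with rfl | rfl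
      · exact .inl rfl
      · have := hY u rfl
        rw [cr_mk] at hc; tauto
  · have hnH : s(u, v) ∉ H := fun hh => t.2 (hG.ends _ hh v (by simp))
    refine ⟨∅, by simp, by simp, hDE, hp, by simp, by simp, by simp, by simp, ?_, hcon, ?_, ?_, ?_⟩
    · intro _; exact ⟨by simp, h.f⟩
    · intro e he heH
      simp only [mem_insert, mem_singleton] at he
      rcases he with rfl | rfl
      · exact absurd h.f heH
      · intro k hk
        simp only [Sym2.mem_iff] at hk
        rcases hk with rfl | rfl
        · exact ⟨by simp, .inl huU⟩
        · exact ⟨by simp, .inr rfl⟩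
    · exact ⟨u, huU, by simp, .inr ⟨by simp, hnH⟩⟩
    · refine ⟨∅, by simp, by simp, fun e _ hc => absurd hc cr_empty, ?_⟩
      intro Y hY e heH he hc
      simp only [mem_insert, mem_singleton] at he
      rcases he with rfl | rfl
      · exact .inl rfl
      · exact absurd heH hnH
  · obtain ⟨t1, X, g, xA, xB, xu, xv, gf, gH, hX, hY⟩ := t
    refine ⟨∅, by simp, by simp, hDE, hp, by simp, by simp, by simp, by simp, ?_, hcon, ?_, ?_, ?_⟩
    · intro _; exact ⟨by simp, h.f⟩
    · intro e he heH
      simp only [mem_insert, mem_singleton] at he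
      rcases he with rfl | rfl
      exacts [absurd h.f heH, absurd t1 heH]
    · exact ⟨v, hG.ends _ t1 v (by simp), by simp, .inl rfl⟩
    · refine ⟨X, xA, xB, ?_, ?_⟩
      · intro e he hc
        rcases (hX e he).1 hc with hh | rfl
        · exact .inl hh
        · exact .inr ⟨gf.symm, h.f, gH, X, hX⟩
      · intro Y _ e _ he hc
        simp only [mem_insert, mem_singleton] at he
        rcases he with rfl | rfl
        · exact .inl rfl
        · right
          obtain ⟨e', q1, q2, q3, q4⟩ := hY Y hc
          refine ⟨e', q1, ?_, q3, q4⟩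
          simp only [mem_insert, mem_singleton, not_or]
          refine ⟨?_, q2⟩
          rintro rfl
          exact xA (q4 A (by simp))

lemma Leg.uB (hM : Mn E W H U A B) {u v : K} (h : Leg E W H U A B u v) : u ≠ B := by
  rintro rfl; exact hM.AB_not (hM.HE h.f)

lemma Leg.vB (hM : Mn E W H U A B) {u v : K} (h : Leg E W H U A B u v) : v ≠ B := by
  rintro rfl
  obtain ⟨Z, hZ, _, hT⟩ := tipv hM.toGood h
  apply hM.nc
  have hu := h.uv
  refine Tip.comb hM.toGood hT (tip0 hM.toGood.symm s(A, u)) (.inl rfl) (by simp) (by simp)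
    (by simp) ?_ (by simp) (by simp) (by simp) (by simp)
  intro hv; exact hu (hZ _ hv).symm

lemma Good.deg_even (h : Good E W H U A B) {u : K} (hA : u ≠ A) (hB : u ≠ B) : Even (dg H u) := by
  have := h.par u
  rw [if_neg hA, if_neg hB, add_zero] at this
  exact (ZMod.natCast_eq_zero_iff_even).1 this

/-- Every `H`-edge at `A` has a leg. -/
lemma Mn.exists_leg [Fintype K] (h : Mn E W H U A B) {u : K} (hu : s(A, u) ∈ H) :
    ∃ v, Leg E W H U A B u v := by
  classical
  have huA := (h.ne (h.HE hu)).symm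
  have huB : u ≠ B := by rintro rfl; exact h.AB_not (h.HE hu)
  by_cases ht : ∀ e ∈ W, u ∈ e → ∀ k ∈ e, k ∈ U
  swap
  · push Not at ht
    obtain ⟨e, heW, hue, c, hc, hcU⟩ := ht
    have huc : u ≠ c := by
      rintro rfl; exact hcU (h.ends _ hu _ (by simp))
    have he : e = s(u, c) := ((Sym2.mem_and_mem_iff huc).1 ⟨hue, hc⟩)
    subst he
    exact ⟨c, hu, h.WE heW, by rintro rfl; exact hcU h.AU, huA, huc, .inr (.inl ⟨heW, hcU⟩)⟩
  have hev := h.deg_even huA huB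
  have hfm : s(A, u) ∈ H.filter (fun e => u ∈ e) := by simp [hu]
  have hpos : 0 < dg H u := by unfold dg; exact card_pos.2 ⟨_, by convert hfm⟩
  by_cases h2 : dg H u = 2
  · unfold dg at h2
    have h3 : ((H.filter (fun e => u ∈ e)).erase s(A, u)).card = 1 := by
      rw [card_erase_of_mem hfm]
      have : (H.filter (fun e => u ∈ e)).card = 2 := by convert h2
      omega
    obtain ⟨e, he⟩ := card_eq_one.1 h3
    have hem : e ∈ (H.filter (fun e => u ∈ e)).erase s(A, u) := by rw [he]; simp
    rw [mem_erase, mem_filter] at hem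
    obtain ⟨h4, h5, h6⟩ := hem
    obtain ⟨v, rfl⟩ := Sym2.mem_iff_exists.1 h6
    refine ⟨v, hu, h.HE h5, ?_, huA, h.ne (h.HE h5), .inl ⟨h5, ht, ?_⟩⟩
    · rintro rfl; exact h4 Sym2.eq_swap
    · intro e' he' hue'
      by_cases h7 : e' = s(A, u)
      · exact .inl h7
      · right
        have : e' ∈ (H.filter (fun e => u ∈ e)).erase s(A, u) := by simp [h7, he', hue']
        rw [he] at this; simpa using this
  · obtain ⟨X, g, xA, xB, xu, gf, gH, hX⟩ := h.M hu
    -- at least two other edges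
    have h4 : 4 ≤ dg H u := by
      obtain ⟨r, hr⟩ := hev; omega
    have h5 : 2 ≤ (((H.filter (fun e => u ∈ e)).erase s(A, u)).erase g).card := by
      have e1 : (H.filter (fun e => u ∈ e)).card = dg H u := by unfold dg; congr
      have e2 := card_erase_of_mem hfm
      have e3 := pred_card_le_card_erase (s := (H.filter (fun e => u ∈ e)).erase s(A, u)) (a := g)
      omega
    obtain ⟨e1, he1, e2, he2, hne⟩ := one_lt_card.1 h5
    simp only [mem_erase, mem_filter] at he1 he2
    obtain ⟨a1, a2, a3, a4⟩ := he1
    obtain ⟨b1, b2, b3, b4⟩ := he2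
    obtain ⟨v, rfl⟩ := Sym2.mem_iff_exists.1 a4
    obtain ⟨w, rfl⟩ := Sym2.mem_iff_exists.1 b4
    have inX : ∀ v, s(u, v) ≠ g → s(u, v) ≠ s(A, u) → s(u, v) ∈ H → v ∈ X := by
      intro v h1 h2 h3
      by_contra hv
      have : Cr X s(u, v) := by rw [cr_mk]; exact .inl ⟨xu, hv⟩
      rcases (hX _ h3).1 this with q | q
      exacts [h2 q, h1 q]
    have mk : ∀ v, s(u, v) ≠ g → s(u, v) ≠ s(A, u) → s(u, v) ∈ H →
        (∀ Y : Set K, Cr Y s(u, v) → ∃ e' ∈ H, e' ≠ s(u, v) ∧ Cr Y e' ∧ ∀ k ∈ e', k ∈ X) →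
        Leg E W H U A B u v := by
      intro v h1 h2 h3 h4
      refine ⟨hu, h.HE h3, ?_, huA, h.ne (h.HE h3), .inr (.inr ⟨h3, X, g, xA, xB, xu, inX v h1 h2 h3, gf, gH, hX, h4⟩)⟩
      rintro rfl; exact h2 Sym2.eq_swap
    by_contra hno
    push Not at hno
    have bad : ∀ v, s(u, v) ≠ g → s(u, v) ≠ s(A, u) → s(u, v) ∈ H → ∃ V : Set K, V ⊆ X ∧ u ∉ V ∧ v ∈ V ∧
        ∀ e ∈ H, Cr V e ↔ (e = s(u, v) ∨ e = g) := by
      intro v h1 h2 h3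
      have hv := inX v h1 h2 h3
      have := mt (mk v h1 h2 h3) (hno v)
      push Not at this
      obtain ⟨Y0, hY0, hY1⟩ := this
      obtain ⟨Y, hYu, hYv, hY⟩ : ∃ Y : Set K, u ∉ Y ∧ v ∈ Y ∧ 
          ∀ e' ∈ H, e' ≠ s(u, v) → Cr Y e' → ∃ k ∈ e', k ∉ X := by
        rw [cr_mk] at hY0
        rcases hY0 with ⟨q1, q2⟩ | ⟨q1, q2⟩
        · exact ⟨Y0ᶜ, by simpa using q1, by simpa using q2, fun e' r1 r2 r3 => hY1 e' r1 r2 (cr_compl.1 r3)⟩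
        · exact ⟨Y0, q2, q1, hY1⟩
      refine ⟨Y ∩ X, Set.inter_subset_right, fun q => hYu q.1, ⟨hYv, hv⟩, ?_⟩
      have key : ∀ e ∈ H, Cr (Y ∩ X) e → (e = s(u, v) ∨ e = g) := by
        intro e he hc
        by_cases hcX : Cr X e
        · rcases (hX e he).1 hcX with rfl | rfl
          · rw [cr_mk] at hc
            exfalso
            rcases hc with q | q
            exacts [xA q.1.2, hYu q.1.1]
          · exact .inr rfl
        · left
          by_contra hne
          have hcY : Cr Y e := by
            rcases cr_inter hc with q | q
            exacts [q, absurd q hcX]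
          obtain ⟨k, hk, hkX⟩ := hY e he hne hcY
          obtain ⟨p, hp, q, hq, hpX, _⟩ := hc
          exact hcX ⟨p, hp, k, hk, hpX.2, hkX⟩
      have := h.cut2 (X := Y ∩ X) ⟨v, h.ends _ h3 v (by simp), hYv, hv⟩ ⟨A, h.AU, fun q => xA q.2⟩ key
      intro e he
      refine ⟨key e he, ?_⟩
      rintro (rfl | rfl)
      exacts [this.2.2.2.1, this.2.2.2.2]
    obtain ⟨V1, v1X, u1, m1, hV1⟩ := bad v a1 a2 a3
    obtain ⟨V2, v2X, u2, m2, hV2⟩ := bad w b1 b2 b3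
    have g1 : Cr V1 g := (hV1 g gH).2 (.inr rfl)
    have g2 : Cr V2 g := (hV2 g gH).2 (.inr rfl)
    have gX : Cr X g := (hX g gH).2 (.inr rfl)
    have hn1 : v ∉ V2 := by
      intro q
      have : Cr V2 s(u, v) := by rw [cr_mk]; exact .inr ⟨q, u2⟩
      rcases (hV2 _ a3).1 this with r | r
      exacts [hne r, a1 r]
    have hn2 : w ∉ V1 := by
      intro q
      have : Cr V1 s(u, w) := by rw [cr_mk]; exact .inr ⟨q, u1⟩
      rcases (hV1 _ b3).1 this with r | r
      exacts [hne r.symm, b1 r]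
    have key : ∀ e ∈ H, Cr (V1 ∩ V2) e → e = g := by
      intro e he hc
      have : Cr V1 e ∨ Cr V2 e := cr_inter hc
      rw [hV1 e he, hV2 e he] at this
      rcases this with (rfl | r) | (rfl | r)
      · rw [cr_mk] at hc; exfalso
        rcases hc with q | q
        exacts [u1 q.1.1, hn1 q.1.2]
      · exact r
      · rw [cr_mk] at hc; exfalso
        rcases hc with q | q
        exacts [u1 q.1.1, hn2 q.1.1]
      · exact r
    -- an end of g lies in the intersection
    obtain ⟨p, hp, q, hq, hpX, hqX⟩ := gX
    have pq : p ≠ q := fun r => hqX (r ▸ hpX)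
    have hgpq : g = s(p, q) := (Sym2.mem_and_mem_iff pq).1 ⟨hp, hq⟩
    have p1 : p ∈ V1 := by
      rw [hgpq, cr_mk] at g1
      rcases g1 with r | r
      exacts [r.1, absurd (v1X r.1) hqX]
    have p2 : p ∈ V2 := by
      rw [hgpq, cr_mk] at g2
      rcases g2 with r | r
      exacts [r.1, absurd (v2X r.1) hqX]
    obtain ⟨e, he, hne', hc⟩ := h.c2 (V1 ∩ V2) g ⟨p, h.ends g gH p hp, p1, p2⟩
      ⟨A, h.AU, fun r => xA (v1X r.1)⟩
    exact hne' (key e he hc)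
end BR


namespace BR
open Finset
variable {K : Type*} {E W H : Finset (Sym2 K)} {U : Set K} {A B : K}

/-- (X0) first part -/
lemma Mn.X0' (hM : Mn E W H U A B) {u z y : K} (hu : s(A, u) ∈ H) (hz : Leg E W H U B A z y)
    (h : u = z ∨ u = y) : CutP H s(A, u) s(B, z) := by
  classical
  by_contra hnc
  apply hM.nc
  have huA := (hM.ne (hM.HE hu)).symm
  have huB : u ≠ B := by rintro rfl; exact hM.AB_not (hM.HE hu)
  have hAB := hM.AB
  have zA := hz.uB hM.symm
  have zB := hz.uA
  have yA := hz.vB hM.symm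
  have yB := hz.vA
  have zy := hz.uv
  rcases h with rfl | rfl
  · refine Tip.comb hM.toGood (tipu hM.toGood hu) (tipu hM.toGood.symm hz.f) (.inl rfl)
      (fun _ _ => hnc) ?_ (by simp) (by simp) (by simp) (by simp) (by simp) (by simp)
    intro e; simp only [mem_singleton]; rintro rfl; rw [Sym2.eq_iff]; grind
  · obtain ⟨Z, hZ, _, hT⟩ := tipv hM.toGood.symm hz
    refine Tip.comb hM.toGood (tipu hM.toGood hu) hT (.inl rfl)
      (fun _ _ => hnc) ?_ ?_ (by simp) ?_ (by simp) (by simp) (by simp)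
    · intro e; simp only [mem_singleton, mem_insert]; rintro rfl; simp only [Sym2.eq_iff]; grind
    · intro hh; exact zy (hZ _ hh).symm
    · intro e; simp only [mem_singleton]; rintro rfl hh; exact absurd hu hh

/-- (X0) -/
lemma Mn.X0 (hM : Mn E W H U A B) {u v z y : K} (hu : Leg E W H U A B u v) (hz : Leg E W H U B A z y)
    {p : K} (h1 : p = u ∨ p = v) (h2 : p = z ∨ p = y) : CutP H s(A, u) s(B, z) := by
  classical
  by_cases q1 : u = z ∨ u = y
  · exact hM.X0' hu.f hz q1
  by_cases q2 : z = u ∨ z = v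
  · exact (hM.symm.X0' hz.f hu q2).symm
  have q3 : v = y := by grind
  subst q3
  by_contra hnc
  apply hM.nc
  have hAB := hM.AB
  have uA := hu.uA; have uB := hu.uB hM; have vA := hu.vA; have vB := hu.vB hM; have uv := hu.uv
  have zA := hz.uB hM.symm; have zB := hz.uA; have zy := hz.uv
  obtain ⟨Z1, hZ1, _, hT1⟩ := tipv hM.toGood hu
  obtain ⟨Z2, hZ2, _, hT2⟩ := tipv hM.toGood.symm hz
  push Not at q1 q2
  refine Tip.comb hM.toGood hT1 hT2 (.inl rfl) (fun _ _ => hnc) ?_ ?_ ?_ ?_ ?_ ?_ ?_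
  · intro e; simp only [mem_singleton, mem_insert]; rintro (rfl | rfl) <;> simp only [Sym2.eq_iff] <;> grind
  · intro hh; exact zy (hZ2 _ hh).symm
  · intro hh; exact uv (hZ1 _ hh).symm
  · intro e; simp only [mem_singleton, mem_insert]
    rintro (rfl | rfl) hh
    · exact absurd hu.f hh
    · intro k hk hk'
      have := hZ2 k hk'
      simp only [Sym2.mem_iff] at hk; grind
  · intro e; simp only [mem_singleton, mem_insert]
    rintro (rfl | rfl) hh
    · exact absurd hz.f hh
    · intro k hk hk'
      have := hZ1 k hk'
      simp only [Sym2.mem_iff] at hk; grind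
  · intro k h1 h2; have := hZ1 k h1; have := hZ2 k h2; grind
  · intro a ha b hb hab
    have e1 := hZ1 a ha; have e2 := hZ2 b hb
    subst e1; subst e2
    exact hM.tri a b v (hM.WE hab) hz.e hu.e

/-- (X1), for `u`, `t` -/
lemma Mn.X1' (hM : Mn E W H U A B) {u z y t : K} (hu : s(A, u) ∈ H) (hz : Leg E W H U B A z y)
    (hnc : ¬ CutP H s(A, u) s(B, z)) (ht : t = z ∨ t = y)
    (hE : s(u, t) ∈ E) (hH : s(u, t) ∉ H) : False := by
  classical
  apply hM.nc
  have d1 : ¬ (u = z ∨ u = y) := fun h => hnc (hM.X0' hu hz h)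
  have huA := (hM.ne (hM.HE hu)).symm
  have huB : u ≠ B := by rintro rfl; exact hM.AB_not (hM.HE hu)
  have hAB := hM.AB
  have zA := hz.uB hM.symm
  have zB := hz.uA
  have yA := hz.vB hM.symm
  have yB := hz.vA
  have zy := hz.uv
  rcases ht with rfl | rfl
  · refine Tip.comb hM.toGood (tipu hM.toGood hu) (tipu hM.toGood.symm hz.f) (.inr ⟨hE, hH, ?_, ?_⟩)
      (fun _ _ => hnc) ?_ (by simp) (by simp) (by simp) (by simp) (by simp) (by simp)
    · simp only [mem_singleton, Sym2.eq_iff]; grind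
    · simp only [mem_singleton, Sym2.eq_iff]; grind
    · intro e; simp only [mem_singleton]; rintro rfl; rw [Sym2.eq_iff]; grind
  · obtain ⟨Z, hZ, _, hT⟩ := tipv hM.toGood.symm hz
    refine Tip.comb hM.toGood (tipu hM.toGood hu) hT (.inr ⟨hE, hH, ?_, ?_⟩)
      (fun _ _ => hnc) ?_ ?_ (by simp) ?_ (by simp) (by simp) (by simp)
    · simp only [mem_singleton, Sym2.eq_iff]; grind
    · simp only [mem_singleton, mem_insert, Sym2.eq_iff]; grind
    · intro e; simp only [mem_singleton, mem_insert]; rintro rfl; simp only [Sym2.eq_iff]; grind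
    · intro hh; have := hZ _ hh; grind
    · intro e; simp only [mem_singleton]; rintro rfl hh; exact absurd hu hh

/-- (X1) -/
lemma Mn.X1 (hM : Mn E W H U A B) {u v z y s t : K} (hu : Leg E W H U A B u v)
    (hz : Leg E W H U B A z y)
    (hnc : ¬ CutP H s(A, u) s(B, z)) (hs : s = u ∨ s = v) (ht : t = z ∨ t = y)
    (hE : s(s, t) ∈ E) (hH : s(s, t) ∉ H) : False := by
  classical
  rcases hs with rfl | rfl
  · exact hM.X1' hu.f hz hnc ht hE hH
  rcases ht with rfl | rfl
  · exact hM.symm.X1' hz.f hu (fun h => hnc h.symm) (.inr rfl) (by rwa [Sym2.eq_swap]) (by rwa [Sym2.eq_swap])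
  have hX := hM.X1' hu.f hz hnc (.inl rfl)
  apply hM.nc
  have d1 : ∀ p, (p = u ∨ p = s) → (p = z ∨ p = t) → False := fun p h1 h2 => hnc (hM.X0 hu hz h1 h2)
  have d2 := d1 u; have d3 := d1 s
  have hAB := hM.AB
  have uA := hu.uA; have uB := hu.uB hM; have vA := hu.vA; have vB := hu.vB hM; have uv := hu.uv
  have zA := hz.uB hM.symm; have zB := hz.uA; have zy := hz.uv
  have yA := hz.vB hM.symm; have yB := hz.vA
  obtain ⟨Z1, hZ1, hZ1', hT1⟩ := tipv hM.toGood hu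
  obtain ⟨Z2, hZ2, _, hT2⟩ := tipv hM.toGood.symm hz
  refine Tip.comb hM.toGood hT1 hT2 (.inr ⟨hE, hH, ?_, ?_⟩) (fun _ _ => hnc) ?_ ?_ ?_ ?_ ?_ ?_ ?_
  · simp only [mem_singleton, mem_insert, Sym2.eq_iff]; grind
  · simp only [mem_singleton, mem_insert, Sym2.eq_iff]; grind
  · intro e; simp only [mem_singleton, mem_insert]; rintro (rfl | rfl) <;> simp only [Sym2.eq_iff] <;> grind
  · intro hh; have := hZ2 _ hh; grind
  · intro hh; have := hZ1 _ hh; grind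
  · intro e; simp only [mem_singleton, mem_insert]
    rintro (rfl | rfl) hh
    · exact absurd hu.f hh
    · intro k hk hk'
      have := hZ2 k hk'
      simp only [Sym2.mem_iff] at hk; grind
  · intro e; simp only [mem_singleton, mem_insert]
    rintro (rfl | rfl) hh
    · exact absurd hz.f hh
    · intro k hk hk'
      have := hZ1 k hk'
      simp only [Sym2.mem_iff] at hk; grind
  · intro k h1 h2; have := hZ1 k h1; have := hZ2 k h2; grind
  · intro a ha b hb hab
    have e1 := hZ1 a ha; have e2 := hZ2 b hb
    subst e1; subst e2
    by_cases hh : s(a, b) ∈ H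
    · have := hZ1' a ha _ hh (by simp)
      simp only [Sym2.eq_iff] at this; grind
    · exact hX (hM.WE hab) hh

/-- (II') -/
lemma Mn.II (hM : Mn E W H U A B) {z y t : K} (hz : Leg E W H U B A z y) (ht : t = z ∨ t = y)
    (hE : s(A, t) ∈ E) : s(A, t) ∈ H ∧ CutP H s(A, t) s(B, z) := by
  classical
  suffices h : s(A, t) ∈ H from ⟨h, hM.X0' h hz ht⟩
  by_contra hH
  apply hM.nc
  have hAB := hM.AB
  have zA := hz.uB hM.symm; have zB := hz.uA; have zy := hz.uv
  have yA := hz.vB hM.symm; have yB := hz.vA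
  rcases ht with rfl | rfl
  · refine Tip.comb hM.toGood (tip0 hM.toGood s(A, B)) (tipu hM.toGood.symm hz.f) (.inr ⟨hE, hH, ?_, ?_⟩)
      (by simp) ?_ (by simp) (by simp) (by simp) (by simp) (by simp) (by simp)
    · simp
    · simp only [mem_singleton, Sym2.eq_iff]; grind
    · simp
  · obtain ⟨Z, hZ, _, hT⟩ := tipv hM.toGood.symm hz
    refine Tip.comb hM.toGood (tip0 hM.toGood s(A, B)) hT (.inr ⟨hE, hH, ?_, ?_⟩)
      (by simp) ?_ ?_ (by simp) (by simp) (by simp) (by simp) (by simp)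
    · simp
    · simp only [mem_singleton, mem_insert, Sym2.eq_iff]; grind
    · simp
    · intro hh; have := hZ _ hh; grind

/-- vertices of a leg which lie in `U` are on the inner side of a cut whose only edge at `A` is `A u` -/
lemma Leg.side {u v p : K} (hG : Good E W H U A B) (h : Leg E W H U A B u v) (hp : p = u ∨ p = v)
    (hpU : p ∈ U) {X : Set K} (huv : s(u, v) ∈ H → ¬ Cr X s(u, v)) : p ∈ X ↔ u ∈ X := by
  rcases hp with rfl | rfl
  · rfl
  · have := huv (h.inH hpU)
    rw [cr_mk] at this; tauto

/-- (I') -/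
lemma Mn.I [Fintype K] (hM : Mn E W H U A B) {u v z y a b s t : K} (hu : Leg E W H U A B u v)
    (hz : Leg E W H U B A z y) (ha : Leg E W H U A B a b) (hau : a ≠ u)
    (hnc : ¬ CutP H s(A, a) s(B, z)) (h1 : s = u ∨ s = v) (h2 : s = z ∨ s = y) (ht : t = a ∨ t = b)
    (hE : s(s, t) ∈ E) : False := by
  have hc := hM.X0 hu hz h1 h2
  obtain ⟨X, xA, xB, hX⟩ := hM.cutP_set hc
  have uA := hu.uA; have uB := hu.uB hM; have vA := hu.vA; have vB := hu.vB hM; have uv := hu.uv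
  have zA := hz.uB hM.symm; have zB := hz.uA
  have aA := ha.uA; have aB := ha.uB hM; have bA := ha.vA; have bB := ha.vB hM
  have hAB := hM.AB
  have hH : s(s, t) ∉ H := by
    intro hH
    have sU := hM.ends _ hH s (by simp)
    have tU := hM.ends _ hH t (by simp)
    have ncr : ∀ p q, p ≠ A → p ≠ B → q ≠ A → q ≠ B → s(p, q) ∈ H → ¬ Cr X s(p, q) := by
      intro p q r1 r2 r3 r4 h hcr
      have := (hX _ h).1 hcr
      simp only [Sym2.eq_iff] at this; grind
    have uX : u ∈ X := by
      have := (hX _ hu.f).2 (.inl rfl)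
      rw [cr_mk] at this; tauto
    have sX : s ∈ X := (hu.side hM.toGood h1 sU (ncr _ _ uA uB vA vB)).2 uX
    have tX : t ∈ X := by
      have := ncr s t (by grind) (by grind) (by grind) (by grind) hH
      rw [cr_mk] at this; tauto
    have aX := (ha.side hM.toGood ht tU (ncr _ _ aA aB bA bB)).1 tX
    have : Cr X s(A, a) := by rw [cr_mk]; exact .inr ⟨aX, xA⟩
    have := (hX _ ha.f).1 this
    simp only [Sym2.eq_iff] at this; grind
  exact hM.X1 ha hz hnc ht h2 (by rwa [Sym2.eq_swap]) (by rwa [Sym2.eq_swap])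
end BR


namespace BR
open Finset
variable {K : Type*} {E W H : Finset (Sym2 K)} {U : Set K} {A B : K}

lemma cr_not {X : Set K} {a b : K} : ¬ Cr X s(a, b) ↔ (a ∈ X ↔ b ∈ X) := by
  rw [cr_mk]; tauto

lemma LT1.cutP {u v : K} (hG : Good E W H U A B) (hu : s(A, u) ∈ H) (h : LT1 W H U A u v) :
    CutP H s(A, u) s(u, v) := by
  apply hG.cutP_of (X := {u}) ⟨u, hG.ends _ hu u (by simp), rfl⟩ ⟨A, hG.AU, ?_⟩
  · rintro e he ⟨a, ha, b, hb, h1, h2⟩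
    have h1 : a = u := h1
    subst h1
    exact h.2.2 e he ha
  · exact hG.ne (hG.HE hu)

/-- (α), case T1-T1 -/
lemma Mn.alpha11 (hM : Mn E W H U A B) {u1 u2 y : K} (h1 : Leg E W H U A B u1 y)
    (h2 : Leg E W H U A B u2 y) (hne : u1 ≠ u2) (t1 : LT1 W H U A u1 y) (t2 : LT1 W H U A u2 y) :
    CutP H s(A, u1) s(A, u2) := by
  classical
  by_contra hnc
  have uA := h1.uA; have uB := h1.uB hM; have yA := h1.vA; have yB := h1.vB hM; have uy := h1.uv
  have uA2 := h2.uA; have uB2 := h2.uB hM; have uy2 := h2.uv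
  have c1 := t1.cutP hM.toGood h1.f
  have c2 := t2.cutP hM.toGood h2.f
  have yU : y ∈ U := hM.ends _ t1.1 y (by simp)
  set H2 := (H.erase s(A, u2)).erase s(u2, y) with hH2
  have memH2 : ∀ e, e ∈ H2 ↔ e ∈ H ∧ e ≠ s(A, u2) ∧ e ≠ s(u2, y) := by
    intro e; simp only [hH2, mem_erase]; tauto
  have hgood : Good E W H2 (U \ {u2}) y B := by
    refine ⟨hM.WE, ?_, hM.nd, yB, ⟨yU, by simpa using uy2.symm⟩, ⟨hM.BU, by simpa using uB2.symm⟩, ?_, ?_, ?_, ?_⟩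
    · intro e he; exact hM.HE ((memH2 e).1 he).1
    · intro e he k hk
      obtain ⟨q1, q2, q3⟩ := (memH2 e).1 he
      refine ⟨hM.ends e q1 k hk, ?_⟩
      rintro rfl
      rcases t2.2.2 e q1 hk with h | h
      exacts [q2 h, q3 h]
    · have := ((Par.single h2.uv.symm).trans (Par.single uA2)).trans hM.par
      convert this using 1
      ext e
      have q1 : e = s(u2, y) → e ∈ H := by rintro rfl; exact t2.1
      have q2 : e = s(A, u2) → e ∈ H := by rintro rfl; exact h2.f
      have q3 : e = s(u2, y) → e ≠ s(A, u2) := by rintro rfl; exact c2.1.symm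
      rw [memH2, mem_symmDiff, mem_symmDiff, mem_singleton, mem_singleton, Sym2.eq_swap (a := y), Sym2.eq_swap (a := u2) (b := A)]
      by_cases r1 : e = s(u2, y) <;> by_cases r2 : e = s(A, u2) <;> by_cases r3 : e ∈ H <;> simp_all
    · rintro X g ⟨a, aU, aX⟩ ⟨b, bU, bX⟩
      by_contra hno
      push Not at hno
      obtain ⟨Y, hY, hYu⟩ : ∃ Y : Set K, (∀ k, k ≠ u2 → (k ∈ Y ↔ k ∈ X)) ∧ (u2 ∈ Y ↔ y ∈ X) := by
        refine ⟨{k | if k = u2 then y ∈ X else k ∈ X}, ?_, ?_⟩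
        · intro k hk; simp [hk]
        · simp
      have hyY := hY y uy2.symm
      have key : ∀ e ∈ H, Cr Y e → e = s(A, u2) ∨ e = g := by
        intro e he hc
        by_cases q1 : e = s(A, u2)
        · exact .inl q1
        · right
          have q2 : e ≠ s(u2, y) := by
            rintro rfl; rw [cr_mk] at hc; rw [hyY, hYu] at hc; tauto
          have q3 : e ∈ H2 := (memH2 e).2 ⟨he, q1, q2⟩
          by_contra hg
          apply hno e q3 hg
          obtain ⟨p, hp, q, hq, r1, r2⟩ := hc
          have nu : ∀ k ∈ e, k ≠ u2 := by
            rintro k hk rfl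
            rcases t2.2.2 e he hk with h | h
            exacts [q1 h, q2 h]
          exact ⟨p, hp, q, hq, (hY p (nu p hp)).1 r1, fun r => r2 ((hY q (nu q hq)).2 r)⟩
      have hs1 : ∃ a ∈ U, a ∈ Y := ⟨a, aU.1, (hY a (by simpa using aU.2)).2 aX⟩
      have hs2 : ∃ a ∈ U, a ∉ Y := ⟨b, bU.1, fun r => bX ((hY b (by simpa using bU.2)).1 r)⟩
      obtain ⟨k1, k2, k3, k4, k5⟩ := hM.cut2 hs1 hs2 key
      have hcp := hM.cutP_of hs1 hs2 key
      have hsep : ¬ (A ∈ Y ↔ y ∈ Y) := by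
        rw [cr_mk] at k4; rw [hyY]; rw [hYu] at k4; tauto
      by_cases hu1 : A ∈ Y ↔ u1 ∈ Y
      · have : Cr Y s(u1, y) := by rw [cr_mk]; tauto
        rcases key _ t1.1 this with h | h
        · simp only [Sym2.eq_iff] at h; grind
        · subst h
          refine hnc ((hcp.trans c1.symm ?_).symm)
          simp only [ne_eq, Sym2.eq_iff]; grind
      · have : Cr Y s(A, u1) := by rw [cr_mk]; tauto
        rcases key _ h1.f this with h | h
        · simp only [Sym2.eq_iff] at h; grind
        · subst h; exact hnc hcp.symm
    · intro e he
      obtain ⟨k, hk, hkU⟩ := hM.dom e he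
      by_cases hku : k = u2
      · subst hku
        obtain ⟨c, rfl⟩ := Sym2.mem_iff_exists.1 hk
        exact ⟨c, by simp, t2.2.1 _ he hk c (by simp), by simpa using (hM.ne (hM.WE he)).symm⟩
      · exact ⟨k, hk, hkU, by simpa using hku⟩
  have := hM.min2 _ _ _ _ hgood
  have lt : H2.card < H.card := by
    apply card_lt_card
    refine ⟨fun e he => ((memH2 e).1 he).1, fun hh => ?_⟩
    exact ((memH2 _).1 (hh h2.f)).2.1 rfl
  omega

/-- (α), case T2-T2 -/
lemma Mn.alpha22 (hM : Mn E W H U A B) {u1 u2 y : K} (h1 : Leg E W H U A B u1 y)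
    (h2 : Leg E W H U A B u2 y) (hne : u1 ≠ u2) (t1 : LT2 W U u1 y) (t2 : LT2 W U u2 y) : False := by
  classical
  have uA := h1.uA; have yA := h1.vA; have uy := h1.uv
  have uA2 := h2.uA; have uy2 := h2.uv
  have hss : W.erase s(u1, y) ⊂ W := erase_ssubset t1.1
  obtain ⟨U', S, hne', hSE, hends, hpar, hcon, hdom⟩ := hM.min1 _ hss
  have hnd : ¬ ∃ k ∈ s(u1, y), k ∈ U' := by
    intro hh
    apply hM.nc
    refine ⟨U', S, hne', hSE, hends, hpar, hcon, fun e he => ?_⟩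
    by_cases q : e = s(u1, y)
    · subst q; exact hh
    · exact hdom e (mem_erase.2 ⟨q, he⟩)
  push Not at hnd
  have nu : u1 ∉ U' := hnd _ (by simp)
  have ny : y ∉ U' := hnd _ (by simp)
  have mu2 : u2 ∈ U' := by
    obtain ⟨k, hk, hkU⟩ := hdom s(u2, y) (mem_erase.2 ⟨by simp only [ne_eq, Sym2.eq_iff]; grind, t2.1⟩)
    simp only [Sym2.mem_iff] at hk
    rcases hk with rfl | rfl
    exacts [hkU, absurd hkU ny]
  apply hM.nc
  have nS1 : s(A, u1) ∉ S := fun h => nu (hends _ h u1 (by simp))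
  have nS2 : s(u1, y) ∉ S := fun h => nu (hends _ h u1 (by simp))
  have nS3 : s(y, u2) ∉ S := fun h => ny (hends _ h y (by simp))
  let C : Finset (Sym2 K) := symmDiff (symmDiff (symmDiff {s(A, u1)} {s(u1, y)}) {s(y, u2)}) {s(u2, A)}
  have hC : ∀ e, e ∈ C ↔ (e = s(A, u1) ∨ e = s(u1, y) ∨ e = s(y, u2) ∨ e = s(u2, A)) := by
    intro e
    have d1 : s(A, u1) ≠ s(u1, y) := by simp only [ne_eq, Sym2.eq_iff]; grind
    have d2 : s(A, u1) ≠ s(y, u2) := by simp only [ne_eq, Sym2.eq_iff]; grind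
    have d3 : s(A, u1) ≠ s(u2, A) := by simp only [ne_eq, Sym2.eq_iff]; grind
    have d4 : s(u1, y) ≠ s(y, u2) := by simp only [ne_eq, Sym2.eq_iff]; grind
    have d5 : s(u1, y) ≠ s(u2, A) := by simp only [ne_eq, Sym2.eq_iff]; grind
    have d6 : s(y, u2) ≠ s(u2, A) := by simp only [ne_eq, Sym2.eq_iff]; grind
    simp only [C, mem_symmDiff, mem_singleton]
    by_cases q1 : e = s(A, u1)
    · subst q1; simp [d1, d2, d3]
    by_cases q2 : e = s(u1, y)
    · subst q2; simp [d1.symm, d4, d5]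
    by_cases q3 : e = s(y, u2)
    · subst q3; simp [d2.symm, d4.symm, d6]
    simp [q1, q2, q3]
  have hCp : ∀ k, (dg C k : ZMod 2) = 0 := by
    intro k
    have := (((Par.single uA.symm).trans (Par.single uy)).trans (Par.single uy2.symm)).trans (Par.single uA2) k
    have e1 : ∀ x : ZMod 2, x + x = 0 := by decide
    rw [e1] at this
    exact this
  have hCE : ∀ e ∈ C, e ∈ E := by
    intro e he
    rcases (hC e).1 he with rfl | rfl | rfl | rfl
    · exact hM.HE h1.f
    · exact h1.e
    · rw [Sym2.eq_swap]; exact h2.e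
    · rw [Sym2.eq_swap]; exact hM.HE h2.f
  refine ⟨U' ∪ {u1, y, A}, symmDiff S C, ⟨u2, .inl mu2⟩, ?_, ?_, ?_, ?_, ?_⟩
  · intro e he
    rcases mem_symmDiff.1 he with h | h
    exacts [hSE h.1, hCE e h.1]
  · intro e he k hk
    rcases mem_symmDiff.1 he with h | h
    · exact .inl (hends e h.1 k hk)
    · have hh := (hC e).1 h.1
      have : k = u1 ∨ k = y ∨ k = A ∨ k = u2 := by
        clear_value C
        rcases hh with rfl | rfl | rfl | rfl <;> simp only [Sym2.mem_iff] at hk <;>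
          rcases hk with rfl | rfl <;> simp
      rcases this with rfl | rfl | rfl | rfl
      · right; simp
      · right; simp
      · right; simp
      · exact .inl mu2
  · intro k; rw [dg_symmDiff, hpar, hCp, add_zero]
  · rintro X ⟨a, ha, haX⟩ ⟨b, hb, hbX⟩
    by_contra hno
    push Not at hno
    have in1 : ∀ e ∈ C, e ∉ S → ¬ Cr X e := fun e h1 h2 => hno e (mem_symmDiff.2 (.inr ⟨h1, h2⟩))
    have c1 := in1 _ ((hC _).2 (.inl rfl)) nS1
    have c2 := in1 _ ((hC _).2 (.inr (.inl rfl))) nS2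
    have c3 := in1 _ ((hC _).2 (.inr (.inr (.inl rfl)))) nS3
    have i1 : A ∈ X ↔ u1 ∈ X := cr_not.1 c1
    have i2 : u1 ∈ X ↔ y ∈ X := cr_not.1 c2
    have i3 : y ∈ X ↔ u2 ∈ X := cr_not.1 c3
    have hrep : ∀ a ∈ U' ∪ {u1, y, A}, ∃ a' ∈ U', (a' ∈ X ↔ a ∈ X) := by
      rintro a (h | h)
      · exact ⟨a, h, Iff.rfl⟩
      · refine ⟨u2, mu2, ?_⟩
        simp only [Set.mem_insert_iff, Set.mem_singleton_iff] at h
        rcases h with rfl | rfl | rfl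
        · rw [i2, i3]
        · rw [i3]
        · rw [i1, i2, i3]
    obtain ⟨a', aU', ha'⟩ := hrep a ha
    obtain ⟨b', bU', hb'⟩ := hrep b hb
    obtain ⟨e, he, hc⟩ := hcon X ⟨a', aU', ha'.2 haX⟩ ⟨b', bU', fun r => hbX (hb'.1 r)⟩
    by_cases hec : e ∈ C
    · rcases (hC e).1 hec with rfl | rfl | rfl | rfl
      · exact nS1 he
      · exact nS2 he
      · exact nS3 he
      · have : u2 ∈ X ↔ A ∈ X := by rw [i1, i2, i3]
        exact cr_not.2 this hc
    · exact hno e (mem_symmDiff.2 (.inl ⟨he, hec⟩)) hc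
  · intro e he
    by_cases q : e = s(u1, y)
    · subst q; exact ⟨u1, by simp, .inr (by simp)⟩
    · obtain ⟨k, hk, hkU⟩ := hdom e (mem_erase.2 ⟨q, he⟩)
      exact ⟨k, hk, .inl hkU⟩

/-- (α), case T1-T3 -/
lemma Mn.alpha13 (hM : Mn E W H U A B) {u1 u2 y : K} (h1 : Leg E W H U A B u1 y)
    (h2 : Leg E W H U A B u2 y) (hne : u1 ≠ u2) (t1 : LT3 H A B u1 y) (t2 : LT1 W H U A u2 y) :
    CutP H s(A, u1) s(A, u2) := by
  have c2 := t2.cutP hM.toGood h2.f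
  have uA := h1.uA; have yA := h1.vA; have uA2 := h2.uA
  have d : s(A, u1) ≠ s(A, u2) := by simp only [ne_eq, Sym2.eq_iff]; grind
  obtain ⟨q, X, g, xA, xB, xu, xy, gf, gH, hX, _⟩ := t1
  have cg : ∀ e ∈ H, e ≠ s(A, u1) → Cr X e → CutP H s(A, u1) e := by
    intro e he h3 hc
    rcases (hX e he).1 hc with h | rfl
    · exact absurd h h3
    · exact ⟨gf.symm, h1.f, gH, X, hX⟩
  by_cases hu2 : u2 ∈ X
  · exact cg _ h2.f d.symm (by rw [cr_mk]; exact .inr ⟨hu2, xA⟩)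
  · refine (cg _ t2.1 ?_ (by rw [cr_mk]; exact .inr ⟨xy, hu2⟩)).trans c2.symm d
    simp only [ne_eq, Sym2.eq_iff]; grind

/-- (α), case T3-T3 -/
lemma Mn.alpha33 (hM : Mn E W H U A B) {u1 u2 y : K} (h1 : Leg E W H U A B u1 y)
    (h2 : Leg E W H U A B u2 y) (hne : u1 ≠ u2) (t1 : LT3 H A B u1 y) (t2 : LT3 H A B u2 y) :
    CutP H s(A, u1) s(A, u2) := by
  have uA := h1.uA; have yA := h1.vA; have uA2 := h2.uA; have uy := h1.uv; have uy2 := h2.uv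
  have d : s(A, u1) ≠ s(A, u2) := by simp only [ne_eq, Sym2.eq_iff]; grind
  obtain ⟨q, X, g, xA, xB, xu, xy, gf, gH, hX, _⟩ := t1
  obtain ⟨q', X', g', xA', xB', xu', xy', gf', gH', hX', _⟩ := t2
  have c1 : CutP H s(A, u1) g := ⟨gf.symm, h1.f, gH, X, hX⟩
  have c2 : CutP H s(A, u2) g' := ⟨gf'.symm, h2.f, gH', X', hX'⟩
  by_cases hu2 : u2 ∈ X
  · have : Cr X s(A, u2) := by rw [cr_mk]; exact .inr ⟨hu2, xA⟩
    rcases (hX _ h2.f).1 this with h | h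
    · exact absurd h.symm d
    · rw [h]; exact c1
  by_cases hu1 : u1 ∈ X'
  · have : Cr X' s(A, u1) := by rw [cr_mk]; exact .inr ⟨hu1, xA'⟩
    rcases (hX' _ h1.f).1 this with h | h
    · exact absurd h d
    · rw [h]; exact c2.symm
  have e1 : g = s(u2, y) := by
    have : Cr X s(u2, y) := by rw [cr_mk]; exact .inr ⟨xy, hu2⟩
    rcases (hX _ q').1 this with h | h
    · simp only [Sym2.eq_iff] at h; grind
    · exact h.symm
  have e2 : g' = s(u1, y) := by
    have : Cr X' s(u1, y) := by rw [cr_mk]; exact .inr ⟨xy', hu1⟩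
    rcases (hX' _ q).1 this with h | h
    · simp only [Sym2.eq_iff] at h; grind
    · exact h.symm
  subst e1; subst e2
  have c3 : CutP H s(u2, y) s(u1, y) := by
    apply hM.cutP_of (X := X ∩ X') ⟨y, hM.ends _ q y (by simp), xy, xy'⟩ ⟨A, hM.AU, fun h => xA h.1⟩
    intro e he hc
    rcases cr_inter hc with h | h
    · rcases (hX e he).1 h with rfl | h
      · rw [cr_mk] at hc; exfalso
        rcases hc with r | r
        exacts [xA r.1.1, hu1 r.1.2]
      · exact .inl h
    · rcases (hX' e he).1 h with rfl | h
      · rw [cr_mk] at hc; exfalso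
        rcases hc with r | r
        exacts [xA r.1.1, hu2 r.1.1]
      · exact .inr h
  have d1 : s(A, u1) ≠ s(u1, y) := by simp only [ne_eq, Sym2.eq_iff]; grind
  exact (c1.trans c3 d1).trans c2.symm d

lemma Mn.alpha (hM : Mn E W H U A B) {u1 u2 y : K} (h1 : Leg E W H U A B u1 y)
    (h2 : Leg E W H U A B u2 y) (hne : u1 ≠ u2) (hnc : ¬ CutP H s(A, u1) s(A, u2)) : False := by
  have mixed : ∀ {u u' : K}, LT2 W U u y → s(u', y) ∈ H → False := by
    intro u u' h h'; exact h.2 (hM.ends _ h' y (by simp))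
  rcases h1.ty with t1 | t1 | t1 <;> rcases h2.ty with t2 | t2 | t2
  · exact hnc (hM.alpha11 h1 h2 hne t1 t2)
  · exact mixed t2 t1.1
  · exact hnc (hM.alpha13 h2 h1 hne.symm t2 t1).symm
  · exact mixed t1 t2.1
  · exact hM.alpha22 h1 h2 hne t1 t2
  · exact mixed t1 t2.1
  · exact hnc (hM.alpha13 h1 h2 hne t1 t2)
  · exact mixed t2 t1.1
  · exact hnc (hM.alpha33 h1 h2 hne t1 t2)

/-- three pairwise unpaired edges at `A` -/
lemma Mn.three [Fintype K] (h : Mn E W H U A B) :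
    ∃ u : Fin 3 → K, Function.Injective u ∧ (∀ i, s(A, u i) ∈ H) ∧ ∀ i j, ¬ CutP H s(A, u i) s(A, u j) := by
  classical
  let P : Finset K → Prop := fun Y => A ∉ Y ∧ B ∉ Y ∧ ∀ e ∈ H, Cr (Y : Set K) e → A ∈ e
  obtain ⟨Y, hYm, hmax⟩ : ∃ Y ∈ (univ.filter P), ∀ Y' ∈ univ.filter P, Y'.card ≤ Y.card :=
    exists_max_image _ _ ⟨∅, by simp [P, cr_empty]⟩
  simp only [mem_filter, mem_univ, true_and] at hYm hmax
  obtain ⟨yA, yB, hY⟩ := hYm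
  set T : Finset K := univ.filter (fun w => s(A, w) ∈ H ∧ w ∉ Y) with hT
  set X : Set K := insert A (Y : Set K) with hX
  have hcr : ∀ e ∈ H, Cr X e ↔ ∃ w ∈ T, e = s(A, w) := by
    intro e he
    constructor
    · rintro ⟨a, ha, b, hb, haX, hbX⟩
      have hab : a ≠ b := fun r => hbX (r ▸ haX)
      have hee : e = s(a, b) := (Sym2.mem_and_mem_iff hab).1 ⟨ha, hb⟩
      subst hee
      simp only [hX, Set.mem_insert_iff, mem_coe, not_or] at haX hbX
      rcases haX with rfl | haY
      · exact ⟨b, by simp [hT, he, hbX.2], rfl⟩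
      · have : Cr (Y : Set K) s(a, b) := by rw [cr_mk]; exact .inl ⟨haY, hbX.2⟩
        have := hY _ he this
        simp only [Sym2.mem_iff] at this
        rcases this with rfl | rfl
        · exact absurd haY yA
        · exact absurd rfl hbX.1
    · rintro ⟨w, hw, rfl⟩
      simp only [hT, mem_filter, mem_univ, true_and] at hw
      rw [cr_mk]; left
      have := h.ne (h.HE hw.1)
      simp [hX, this.symm, hw.2]
  have hfil : H.filter (Cr X) = T.image (fun w => s(A, w)) := by
    ext e; simp only [mem_filter, mem_image]
    constructor
    · rintro ⟨h1, h2⟩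
      obtain ⟨w, hw, rfl⟩ := (hcr e h1).1 h2
      exact ⟨w, hw, rfl⟩
    · rintro ⟨w, hw, rfl⟩
      have : s(A, w) ∈ H := by simp only [hT, mem_filter] at hw; exact hw.2.1
      exact ⟨this, (hcr _ this).2 ⟨w, hw, rfl⟩⟩
  have hcard : (H.filter (Cr X)).card = T.card := by
    rw [hfil, card_image_of_injective]
    intro a b hab; exact Sym2.congr_right.1 hab
  have hodd : Odd T.card := by
    have := par_cut h.par (fun e he => h.nd e (h.HE he)) X
    have hAX : A ∈ X := by simp [hX]
    have hBX : B ∉ X := by simp [hX, h.AB.symm, yB]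
    rw [if_pos hAX, if_neg hBX, add_zero] at this
    have h2 : ((H.filter (Cr X)).card : ZMod 2) = 1 := by convert this
    rw [hcard] at h2
    exact (ZMod.natCast_eq_one_iff_odd).1 h2
  have h1 : T.card ≠ 1 := by
    intro h1
    obtain ⟨w, hw⟩ := card_eq_one.1 h1
    obtain ⟨e, he, hne, hc⟩ := h.c2 X s(A, w) ⟨A, h.AU, by simp [hX]⟩ ⟨B, h.BU, by simp [hX, h.AB.symm, yB]⟩
    obtain ⟨w', hw', rfl⟩ := (hcr e he).1 hc
    rw [hw, mem_singleton] at hw'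
    exact hne (by rw [hw'])
  have h3 : 3 ≤ T.card := by obtain ⟨r, hr⟩ := hodd; omega
  obtain ⟨T', hT', hT3⟩ := exists_subset_card_eq h3
  let φ := (T'.equivFinOfCardEq hT3).symm
  have hmem : ∀ i, (φ i : K) ∈ T := fun i => hT' (φ i).2
  simp only [hT, mem_filter, mem_univ, true_and] at hmem
  refine ⟨fun i => φ i, fun i j hij => φ.injective (Subtype.ext hij), fun i => (hmem i).1, ?_⟩
  intro i j hc
  obtain ⟨Z, zA, zB, hZ⟩ := h.cutP_set hc
  let Y' : Finset K := Y ∪ univ.filter (· ∈ Z)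
  have hco : (Y' : Set K) = (Y : Set K) ∪ Z := by ext; simp [Y']
  have hP : P Y' := by
    refine ⟨by simp [Y', yA, zA], by simp [Y', yB, zB], ?_⟩
    intro e he hce
    rw [hco] at hce
    rcases cr_union hce with r | r
    · exact hY e he r
    · rcases (hZ e he).1 r with rfl | rfl <;> simp
  have hle := hmax Y' hP
  have hin : (φ i : K) ∈ Z := by
    have := (hZ _ (hmem i).1).2 (.inl rfl)
    rw [cr_mk] at this; tauto
  have : Y.card < Y'.card := by
    apply card_lt_card
    refine ⟨subset_union_left, fun hh => (hmem i).2 (hh ?_)⟩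
    simp [Y', hin]
  omega
end BR


namespace BR
open Finset
variable {K : Type*} {E W H : Finset (Sym2 K)} {U : Set K} {A B : K}

/-- the spider inequality -/
def SpiderIneq (E : Finset (Sym2 K)) : Prop :=
  ∀ (A : K) (u v : Fin 3 → K), Function.Injective u → Function.Injective v → (∀ i, u i ≠ A) →
    (∀ i, v i ≠ A) → (∀ i j, u i ≠ v j) → (∀ i, s(A, u i) ∈ E) → (∀ i, s(u i, v i) ∈ E) →
    E.card + 10 ≤ ∑ i, (dg E (u i) + dg E (v i)) + 2 * dg E A

lemma Mn.match [Fintype K] (h : Mn E W H U A B) : ∃ u z : Fin 3 → K, Function.Injective u ∧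
    Function.Injective z ∧ (∀ i, s(A, u i) ∈ H) ∧ (∀ i, s(B, z i) ∈ H) ∧
    (∀ i j, ¬ CutP H s(A, u i) s(A, u j)) ∧ (∀ i j, ¬ CutP H s(B, z i) s(B, z j)) ∧
    ∀ i k, CutP H s(A, u i) s(B, k) → k = z i := by
  classical
  obtain ⟨u, ui, uH, uc⟩ := h.three
  obtain ⟨z0, zi, zH, zc⟩ := h.symm.three
  have hAB := h.AB
  have uniqB : ∀ a k k', CutP H s(A, a) s(B, k) → CutP H s(A, a) s(B, k') → k = k' := by
    intro a k k' h1 h2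
    exact Sym2.congr_right.1 (h.part_unique (by simp) (by simp) (by simp) h1 h2)
  have uniqA : ∀ k a b, CutP H s(B, k) s(A, a) → CutP H s(B, k) s(A, b) → a = b := by
    intro a k k' h1 h2
    exact Sym2.congr_right.1 (h.part_unique (by simp) (by simp) (by simp) h1 h2)
  have unp : ∀ a k k', CutP H s(A, a) s(B, k) → ¬ CutP H s(B, k) s(B, k') := by
    intro a k k' h1 h2
    have := h.part_unique (by simp) (by simp) (by simp) h1.symm h2
    rw [Sym2.eq_iff] at this
    have n := h.AB_not
    have := h.HE h1.2.1
    grind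
  let S : Finset (Fin 3) := univ.filter (fun i => ∃ k, CutP H s(A, u i) s(B, k))
  let g : Fin 3 → K := fun i => if hk : ∃ k, CutP H s(A, u i) s(B, k) then hk.choose else A
  have hg : ∀ i k, CutP H s(A, u i) s(B, k) → g i = k := by
    intro i k hk
    have hk' : ∃ k, CutP H s(A, u i) s(B, k) := ⟨k, hk⟩
    simp only [g, dif_pos hk']
    exact uniqB _ _ _ hk'.choose_spec hk
  have hgS : ∀ i ∈ S, CutP H s(A, u i) s(B, g i) := by
    intro i hi
    simp only [S, mem_filter, mem_univ, true_and] at hi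
    obtain ⟨k, hk⟩ := hi
    rw [hg i k hk]; exact hk
  have ginj : Set.InjOn g S := by
    intro i hi j hj hij
    have h1 := hgS i hi; have h2 := hgS j hj
    rw [hij] at h1
    exact ui (uniqA _ _ _ h1.symm h2.symm)
  obtain ⟨T, hT1, hT2, hT3⟩ := exists_subsuperset_card_eq
    (s := S.image g) (t := S.image g ∪ univ.image z0) (n := 3) subset_union_left
    (card_image_le.trans ((card_le_univ S).trans (by simp)))
    (le_trans (by rw [card_image_of_injective _ zi]; simp) (card_le_card subset_union_right))
  obtain ⟨φ, hφ⟩ := Finset.exists_equiv_extend_of_card_eq (α := Fin 3) (t := T) (by simp [hT3]) hT1 ginj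
  have mem : ∀ i, (∃ j ∈ S, g j = φ i) ∨ ∃ j, z0 j = φ i := by
    intro i
    have := hT2 (φ i).2
    simpa using this
  refine ⟨u, fun i => φ i, ui, fun i j hij => φ.injective (Subtype.ext hij), uH, ?_, uc, ?_, ?_⟩
  · intro i
    beta_reduce
    rcases mem i with ⟨j, hj, e⟩ | ⟨j, e⟩
    · rw [← e]; exact (hgS j hj).2.2.1
    · rw [← e]; exact zH j
  · intro i j hc
    beta_reduce at hc
    rcases mem i with ⟨i', hi', e⟩ | ⟨i', e⟩
    · rw [← e] at hc
      exact unp _ _ _ (hgS i' hi') hc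
    · rcases mem j with ⟨j', hj', e'⟩ | ⟨j', e'⟩
      · rw [← e'] at hc
        exact unp _ _ _ (hgS j' hj') hc.symm
      · rw [← e, ← e'] at hc; exact zc _ _ hc
  · intro i k hk
    have : i ∈ S := by simp only [S, mem_filter, mem_univ, true_and]; exact ⟨k, hk⟩
    beta_reduce
    rw [hφ i this, hg i k hk]

lemma sum_ins_le {α : Type*} [DecidableEq α] (x : α → ℕ) (a : α) (s : Finset α) :
    ∑ e ∈ insert a s, x e ≤ x a + ∑ e ∈ s, x e := by
  by_cases h : a ∈ s
  · rw [insert_eq_of_mem h]; omega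
  · rw [sum_insert h]

open scoped Classical in
noncomputable def wl (u v : Fin 3 → K) (k : K) : ℕ :=
  ∑ i, ((if k = u i then 1 else 0) + (if k = v i then 1 else 0))

lemma wl_le {u v : Fin 3 → K} (hu : Function.Injective u) (hv : Function.Injective v)
    (huv : ∀ i j, u i ≠ v j) (k : K) : wl u v k ≤ 1 := by
  classical
  unfold wl
  by_cases h : ∃ i, k = u i ∨ k = v i
  · obtain ⟨i, hi⟩ := h
    rw [sum_eq_single i]
    · have := huv i i
      rcases hi with rfl | rfl <;> simp [this, this.symm]
    · intro j _ hj
      have h1 := huv i j; have h2 := huv j i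
      have h3 : u i ≠ u j := fun h => hj (hu h).symm
      have h4 : v i ≠ v j := fun h => hj (hv h).symm
      rcases hi with rfl | rfl <;> simp [h1, h2.symm, h3, h4]
    · simp
  · push Not at h
    simp [h]

lemma wl_pos {u v : Fin 3 → K} {k : K} (h : 0 < wl u v k) : ∃ i, k = u i ∨ k = v i := by
  classical
  by_contra hno
  push Not at hno
  simp [wl, hno] at h

lemma sum_wl [Fintype K] (u v : Fin 3 → K) (d : K → ℕ) :
    ∑ k, wl u v k * d k = ∑ i, (d (u i) + d (v i)) := by
  classical
  unfold wl
  simp only [sum_mul, add_mul, ite_mul, one_mul, zero_mul]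
  rw [sum_comm]
  simp [sum_add_distrib]

lemma sum_dg [Fintype K] (hnd : ∀ e ∈ E, ¬ e.IsDiag) (w : K → ℕ) (om : Sym2 K → ℕ)
    (hom : ∀ a b, om s(a, b) = w a + w b) : ∑ k, w k * dg E k = ∑ e ∈ E, om e := by
  classical
  unfold dg
  simp only [card_filter, mul_sum]
  rw [sum_comm]
  refine sum_congr rfl fun e he => ?_
  have := hnd e he
  induction e with | _ a b =>
  have hab : a ≠ b := by simpa using this
  rw [hom]
  have : ∀ k, (w k * if k ∈ s(a,b) then (1:ℕ) else 0) = (if k = a then w k else 0) + (if k = b then w k else 0) := by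
    intro k; simp only [Sym2.mem_iff]; split_ifs <;> simp_all
  simp only [this, sum_add_distrib, sum_ite_eq', mem_univ, if_true]

set_option maxHeartbeats 2000000 in
/-- the counting argument -/
lemma Mn.final [Fintype K] (hM : Mn E W H U A B) (J : SpiderIneq E) : False := by
  classical
  obtain ⟨u, z, ui, zi, uH, zH, uc, zc, hmatch⟩ := hM.match
  choose v hv using fun i => hM.exists_leg (uH i)
  choose y hy using fun i => hM.symm.exists_leg (zH i)
  have hAB := hM.AB
  have ABE := hM.AB_not
  -- distinctness
  have disj : ∀ {A B : K} {u v : Fin 3 → K} (_ : Mn E W H U A B) (_ : ∀ i, Leg E W H U A B (u i) (v i)),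
      ∀ i j, u i ≠ v j := by
    intro A B u v hM hv i j hij
    have h1 := hM.HE (hv i).f
    have h2 := hM.HE (hv j).f
    have h3 := (hv j).e
    rw [← hij] at h3
    exact hM.tri A (u j) (u i) h2 h3 h1
  have uv := disj hM hv
  have zy := disj hM.symm hy
  have inj : ∀ {A B : K} {u v : Fin 3 → K} (_ : Mn E W H U A B) (_ : ∀ i, Leg E W H U A B (u i) (v i))
      (_ : Function.Injective u) (_ : ∀ i j, ¬ CutP H s(A, u i) s(A, u j)), Function.Injective v := by
    intro A B u v hM hv ui uc i j hij
    by_contra hne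
    have h1 := hv i
    rw [hij] at h1
    exact hM.alpha h1 (hv j) (fun h => hne (ui h)) (uc i j)
  have vi := inj hM hv ui uc
  have yi := inj hM.symm hy zi zc
  have JA := J A u v ui vi (fun i => (hv i).uA) (fun i => (hv i).vA) uv (fun i => hM.HE (uH i)) (fun i => (hv i).e)
  have JB := J B z y zi yi (fun i => (hy i).uA) (fun i => (hy i).vA) zy (fun i => hM.HE (zH i)) (fun i => (hy i).e)
  -- matching
  have cutij : ∀ i j, CutP H s(A, u i) s(B, z j) → i = j := fun i j h => (zi (hmatch i _ h)).symm
  have both : ∀ i j p, (p = u i ∨ p = v i) → (p = z j ∨ p = y j) → i = j := fun i j p h1 h2 =>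
    cutij i j (hM.X0 (hv i) (hy j) h1 h2)
  -- weights
  obtain ⟨w, hw⟩ : ∃ w : K → ℕ, ∀ k, w k = ((if k = A then 2 else 0) + (if k = B then 2 else 0)) +
      (wl u v k + wl z y k) := ⟨_, fun k => rfl⟩
  have nA1 : wl u v A = 0 := by
    by_contra h; obtain ⟨i, hi⟩ := wl_pos (Nat.pos_of_ne_zero h)
    rcases hi with h | h
    exacts [(hv i).uA h.symm, (hv i).vA h.symm]
  have nA2 : wl z y A = 0 := by
    by_contra h; obtain ⟨i, hi⟩ := wl_pos (Nat.pos_of_ne_zero h)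
    rcases hi with h | h
    exacts [(hy i).uB hM.symm h.symm, (hy i).vB hM.symm h.symm]
  have nB1 : wl u v B = 0 := by
    by_contra h; obtain ⟨i, hi⟩ := wl_pos (Nat.pos_of_ne_zero h)
    rcases hi with h | h
    exacts [(hv i).uB hM h.symm, (hv i).vB hM h.symm]
  have nB2 : wl z y B = 0 := by
    by_contra h; obtain ⟨i, hi⟩ := wl_pos (Nat.pos_of_ne_zero h)
    rcases hi with h | h
    exacts [(hy i).uA h.symm, (hy i).vA h.symm]
  have wA : w A = 2 := by rw [hw]; simp [nA1, nA2, hAB]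
  have wB : w B = 2 := by rw [hw]; simp [nB1, nB2, hAB.symm]
  have wo : ∀ k, k ≠ A → k ≠ B → w k = wl u v k + wl z y k := by
    intro k h1 h2; rw [hw]; simp [h1, h2]
  have le1 := wl_le ui vi uv
  have le2 := wl_le zi yi zy
  have wle : ∀ k, w k ≤ 2 := by
    intro k
    by_cases h1 : k = A
    · rw [h1, wA]
    by_cases h2 : k = B
    · rw [h2, wB]
    rw [wo k h1 h2]; have := le1 k; have := le2 k; omega
  have w2 : ∀ k, k ≠ A → k ≠ B → w k = 2 → ∃ i, (k = u i ∨ k = v i) ∧ (k = z i ∨ k = y i) := by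
    intro k h1 h2 h3
    rw [wo k h1 h2] at h3
    have := le1 k; have := le2 k
    obtain ⟨i, hi⟩ := wl_pos (u := u) (v := v) (k := k) (by omega)
    obtain ⟨j, hj⟩ := wl_pos (u := z) (v := y) (k := k) (by omega)
    have := both i j k hi hj
    subst this
    exact ⟨i, hi, hj⟩
  have w1 : ∀ k, k ≠ A → k ≠ B → 0 < w k → ∃ i, (k = u i ∨ k = v i) ∨ (k = z i ∨ k = y i) := by
    intro k h1 h2 h3
    rw [wo k h1 h2] at h3
    by_cases h : 0 < wl u v k
    · obtain ⟨i, hi⟩ := wl_pos h; exact ⟨i, .inl hi⟩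
    · obtain ⟨i, hi⟩ := wl_pos (u := z) (v := y) (k := k) (by omega); exact ⟨i, .inr hi⟩
  -- the matched edges h i
  have hex : ∀ i, ∃ a, s(A, a) ∈ H ∧ ∀ t, CutP H s(A, t) s(B, z i) → t = a := by
    intro i
    by_cases h : ∃ t, CutP H s(A, t) s(B, z i)
    · obtain ⟨t, ht⟩ := h
      refine ⟨t, ht.2.1, fun t' ht' => ?_⟩
      exact Sym2.congr_right.1 (hM.part_unique (by simp) (by simp) (by simp) ht'.symm ht.symm)
    · exact ⟨u i, uH i, fun t ht => absurd ⟨t, ht⟩ h⟩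
  choose a haH ha using hex
  let Sp : Fin 3 → Finset (Sym2 K) := fun i =>
    {s(A, u i), s(B, z i), s(u i, v i), s(z i, y i), s(A, a i)}
  have hSp : ∀ i e, e ∈ Sp i ↔ (e = s(A, u i) ∨ e = s(B, z i) ∨ e = s(u i, v i) ∨ e = s(z i, y i) ∨ e = s(A, a i)) := by
    intro i e; simp [Sp]
  let om : Sym2 K → ℕ := Sym2.lift ⟨fun a b => w a + w b, fun a b => add_comm _ _⟩
  have hom : ∀ a b, om s(a, b) = w a + w b := fun a b => rfl
  have claimA : ∀ t, s(A, t) ∈ E → 0 < w t → ∃ i, s(A, t) ∈ Sp i := by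
    intro t hE h0
    have tA : t ≠ A := (hM.ne hE).symm
    have tB : t ≠ B := by rintro rfl; exact ABE hE
    obtain ⟨i, hi⟩ := w1 t tA tB h0
    refine ⟨i, (hSp _ _).2 ?_⟩
    rcases hi with (rfl | rfl) | hi
    · exact .inl rfl
    · exact absurd hE (fun h => hM.tri A (u i) (v i) (hM.HE (uH i)) (hv i).e h)
    · have := (hM.II (hy i) hi hE).2
      rw [ha i t this]; simp
  have claimB : ∀ t, s(B, t) ∈ E → 0 < w t → ∃ i, s(B, t) ∈ Sp i := by
    intro t hE h0
    have tB : t ≠ B := (hM.ne hE).symm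
    have tA : t ≠ A := by rintro rfl; rw [Sym2.eq_swap] at hE; exact ABE hE
    obtain ⟨i, hi⟩ := w1 t tA tB h0
    refine ⟨i, (hSp _ _).2 ?_⟩
    rcases hi with hi | (rfl | rfl)
    · have := (hM.symm.II (hv i) hi hE).2
      rw [hmatch i t this.symm]; simp
    · exact .inr (.inl rfl)
    · exact absurd hE (fun h => hM.tri B (z i) (y i) (hM.HE (zH i)) (hy i).e h)
  have claim2 : ∀ s t, s(s, t) ∈ E → s ≠ A → s ≠ B → t ≠ A → t ≠ B → w s = 2 → 0 < w t → ∃ i, s(s, t) ∈ Sp i := by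
    intro s t hE sA sB tA tB ws wt
    obtain ⟨i, h1, h2⟩ := w2 s sA sB ws
    obtain ⟨j, hj⟩ := w1 t tA tB wt
    have hst := hM.ne hE
    have hij : i = j := by
      by_contra hij
      rcases hj with hj | hj
      · exact hM.I (hv i) (hy i) (hv j) (fun h => hij (ui h).symm) (fun h => hij (cutij _ _ h).symm) h1 h2 hj hE
      · exact hM.symm.I (hy i) (hv i) (hy j) (fun h => hij (zi h).symm) (fun h => hij (cutij _ _ h.symm)) h2 h1 hj hE
    subst hij
    refine ⟨i, (hSp _ _).2 ?_⟩
    rcases hj with hj | hj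
    · right; right; left
      rw [Sym2.eq_iff]; grind
    · right; right; right; left
      rw [Sym2.eq_iff]; grind
  have claim : ∀ e ∈ E, 2 < om e → ∃ i, e ∈ Sp i := by
    intro e he hlt
    induction e with | _ p q =>
    rw [hom] at hlt
    have hp := wle p; have hq := wle q
    have he' : s(q, p) ∈ E := by rw [Sym2.eq_swap]; exact he
    by_cases pA : p = A
    · subst pA; exact claimA q he (by omega)
    by_cases pB : p = B
    · subst pB; exact claimB q he (by omega)
    by_cases qA : q = A
    · subst qA; rw [Sym2.eq_swap]; exact claimA p he' (by omega)
    by_cases qB : q = B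
    · subst qB; rw [Sym2.eq_swap]; exact claimB p he' (by omega)
    by_cases h2 : w p = 2
    · exact claim2 p q he pA pB qA qB h2 (by omega)
    · rw [Sym2.eq_swap]
      exact claim2 q p he' qA qB pA pB (by omega) (by omega)
  let x : Sym2 K → ℕ := fun e => om e - 2
  have xle : ∀ e, x e ≤ 2 := by
    intro e
    induction e with | _ p q =>
    have := wle p; have := wle q
    simp only [x, hom]; omega
  have hxi : ∀ i, ∑ e ∈ Sp i, x e ≤ 6 := by
    intro i
    have l1 := sum_ins_le x s(A, u i) {s(B, z i), s(u i, v i), s(z i, y i), s(A, a i)}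
    have l2 := sum_ins_le x s(B, z i) {s(u i, v i), s(z i, y i), s(A, a i)}
    have l3 := sum_ins_le x s(u i, v i) {s(z i, y i), s(A, a i)}
    have l4 := sum_ins_le x s(z i, y i) {s(A, a i)}
    rw [sum_singleton] at l4
    have b1 := xle s(A, u i); have b2 := xle s(B, z i); have b3 := xle s(u i, v i)
    have b4 := xle s(z i, y i); have b5 := xle s(A, a i)
    have uA := (hv i).uA; have uB := (hv i).uB hM
    have vA := (hv i).vA; have vB := (hv i).vB hM
    have zA := (hy i).uB hM.symm; have zB := (hy i).uA
    have yA := (hy i).vB hM.symm; have yB := (hy i).vA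
    have uvn := (hv i).uv; have zyn := (hy i).uv
    have memL : ∀ k, k ≠ A → k ≠ B → (k = u i ∨ k = v i) → w k = 2 → (k = z i ∨ k = y i) := by
      intro k k1 k2 k3 k4
      obtain ⟨j, j1, j2⟩ := w2 k k1 k2 k4
      rwa [both i j k k3 j2]
    have memR : ∀ k, k ≠ A → k ≠ B → (k = z i ∨ k = y i) → w k = 2 → (k = u i ∨ k = v i) := by
      intro k k1 k2 k3 k4
      obtain ⟨j, j1, j2⟩ := w2 k k1 k2 k4
      rwa [← both j i k j1 k3]
    have mu := memL (u i) uA uB (.inl rfl)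
    have mv := memL (v i) vA vB (.inr rfl)
    have mz := memR (z i) zA zB (.inl rfl)
    have my := memR (y i) yA yB (.inr rfl)
    have wu := wle (u i); have wv := wle (v i); have wz := wle (z i); have wy := wle (y i)
    have x1 : x s(A, u i) = w (u i) := by simp only [x, hom, wA]; omega
    have x2 : x s(B, z i) = w (z i) := by simp only [x, hom, wB]; omega
    have x3 : x s(u i, v i) = w (u i) + w (v i) - 2 := rfl
    have x4 : x s(z i, y i) = w (z i) + w (y i) - 2 := rfl
    by_cases hc : CutP H s(A, u i) s(B, z i)
    · have hau : a i = u i := (ha i _ hc).symm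
      have hSeq : Sp i = {s(B, z i), s(u i, v i), s(z i, y i), s(A, a i)} := by
        exact insert_eq_of_mem (by simp [hau])
      rw [hSeq]
      by_cases hee : s(u i, v i) = s(z i, y i)
      · rw [hee, insert_eq_of_mem (a := s(z i, y i)) (by simp), ← hee] at l2
        rw [hee, insert_eq_of_mem (a := s(z i, y i)) (by simp)]
        rw [hee] at l2
        omega
      · rw [Sym2.eq_iff] at hee
        have k1 : ¬ (w (u i) = 2 ∧ w (v i) = 2) := by
          rintro ⟨r1, r2⟩; have := mu r1; have := mv r2; grind
        have k2 : ¬ (w (z i) = 2 ∧ w (y i) = 2) := by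
          rintro ⟨r1, r2⟩; have := mz r1; have := my r2; grind
        omega
    · have k1 : w (u i) ≠ 2 := fun r => hc (hM.X0 (hv i) (hy i) (.inl rfl) (mu r))
      have k2 : w (v i) ≠ 2 := fun r => hc (hM.X0 (hv i) (hy i) (.inr rfl) (mv r))
      have k3 : w (z i) ≠ 2 := fun r => hc (hM.X0 (hv i) (hy i) (mz r) (.inl rfl))
      have k4 : w (y i) ≠ 2 := fun r => hc (hM.X0 (hv i) (hy i) (my r) (.inr rfl))
      show ∑ e ∈ insert s(A, u i) {s(B, z i), s(u i, v i), s(z i, y i), s(A, a i)}, x e ≤ 6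
      omega
  have tot : ∑ e ∈ E, om e ≤ 2 * E.card + 18 := by
    have s1 : ∑ e ∈ E, om e ≤ ∑ e ∈ E, (2 + ∑ i, if e ∈ Sp i then x e else 0) := by
      refine sum_le_sum fun e he => ?_
      by_cases h : 2 < om e
      · obtain ⟨i, hi⟩ := claim e he h
        have := single_le_sum (f := fun i => if e ∈ Sp i then x e else 0) (fun _ _ => Nat.zero_le _) (mem_univ i)
        simp only [hi, if_true] at this
        have hxe : x e = om e - 2 := rfl
        omega
      · omega
    have s2 : ∑ e ∈ E, (2 + ∑ i, if e ∈ Sp i then x e else 0) = 2 * E.card + ∑ i, ∑ e ∈ E, if e ∈ Sp i then x e else 0 := by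
      rw [sum_add_distrib, sum_comm]; simp [mul_comm]
    have s3 : ∀ i, (∑ e ∈ E, if e ∈ Sp i then x e else 0) ≤ 6 := by
      intro i
      rw [← sum_filter]
      refine le_trans (sum_le_sum_of_subset ?_) (hxi i)
      intro e he; exact (mem_filter.1 he).2
    have s4 := sum_le_sum (s := univ) (fun i (_ : i ∈ univ) => s3 i)
    rw [sum_const, card_univ, Fintype.card_fin, smul_eq_mul] at s4
    omega
  have sumw : ∑ k, w k * dg E k = 2 * dg E A + 2 * dg E B + (∑ i, (dg E (u i) + dg E (v i)) + ∑ i, (dg E (z i) + dg E (y i))) := by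
    simp only [hw, add_mul, sum_add_distrib, sum_wl, ite_mul, zero_mul, sum_ite_eq', mem_univ, if_true]
  rw [sum_dg hM.nd w om hom] at sumw
  omega
end BR


namespace BR
variable {V : Type*}

/-- `l` lists the vertices of a path from `a` to `b` -/
def LP (G : SimpleGraph V) (l : List V) (a b : V) : Prop :=
  l.IsChain G.Adj ∧ l.head? = some a ∧ l.getLast? = some b

/-- hamiltonicity in terms of lists -/
def HC (G : SimpleGraph V) : Prop :=
  ∃ l a b, LP G l a b ∧ G.Adj b a ∧ l.Nodup ∧ ∀ v, v ∈ l

variable {G H : SimpleGraph V} {l P Q M R : List V} {a b c d x y : V}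

lemma LP.rev (h : LP G l a b) : LP G l.reverse b a := by
  refine ⟨?_, by simpa using h.2.2, by simpa using h.2.1⟩
  rw [List.isChain_reverse]
  exact h.1.imp (fun _ _ h => h.symm)

lemma LP.ne (h : LP G l a b) : l ≠ [] := by
  rintro rfl; simpa using h.2.1

lemma LP.app (h : LP G P a b) (h' : LP G Q c d) (e : G.Adj b c) : LP G (P ++ Q) a d := by
  have n1 := h.ne; have n2 := h'.ne
  refine ⟨?_, ?_, ?_⟩
  · rw [List.isChain_append]
    refine ⟨h.1, h'.1, ?_⟩
    intro x hx y hy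
    rw [h.2.2] at hx; rw [h'.2.1] at hy
    simp at hx hy; subst hx hy; exact e
  · rw [List.head?_append, h.2.1]; rfl
  · rw [List.getLast?_append, h'.2.2]; rfl

lemma LP.single (x : V) : LP G [x] x x := by simp [LP]

lemma LP.split (h : LP G (P ++ Q) a b) (hP : P ≠ []) (hQ : Q ≠ []) :
    ∃ p q, LP G P a p ∧ LP G Q q b ∧ G.Adj p q := by
  obtain ⟨h1, h2, h3⟩ := h
  rw [List.isChain_append] at h1
  refine ⟨P.getLast hP, Q.head hQ, ⟨h1.1, ?_, ?_⟩, ⟨h1.2.1, ?_, ?_⟩, ?_⟩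
  · rw [List.head?_append_of_ne_nil _ hP] at h2; exact h2
  · exact List.getLast?_eq_some_getLast hP
  · exact List.head?_eq_some_head hQ
  · rwa [List.getLast?_append_of_ne_nil _ hQ] at h3
  · exact h1.2.2 _ (by simp [List.getLast?_eq_some_getLast hP]) _ (by simp [List.head?_eq_some_head hQ])

lemma LP.last (h : LP G (P ++ [x]) a b) : b = x := by
  have := h.2.2; simp at this; exact this.symm
lemma LP.first (h : LP G (x :: P) a b) : a = x := by
  have := h.2.1; simp at this; exact this.symm
lemma LP.memR (h : LP G P a b) : b ∈ P := List.mem_of_getLast? h.2.2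
lemma LP.memL (h : LP G P a b) : a ∈ P := List.mem_of_head? h.2.1

/-- a hamiltonian path -/
structure HP (G : SimpleGraph V) (l : List V) (a b : V) : Prop where
  lp : LP G l a b
  nd : l.Nodup
  all : ∀ v, v ∈ l

lemma HP.rev (h : HP G l a b) : HP G l.reverse b a :=
  ⟨h.lp.rev, List.nodup_reverse.2 h.nd, fun v => by simpa using h.all v⟩

lemma HP.close (h : HP G l a b) (hn : ¬ HC G) {l' : List V} (hp : l'.Perm l) (h' : LP G l' c d)
    (e : G.Adj d c) : False :=
  hn ⟨l', c, d, h', e, hp.nodup_iff.2 h.nd, fun v => hp.mem_iff.2 (h.all v)⟩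

lemma HP.ne2 (h : HP G (P ++ Q) a b) (hP : P ≠ []) (hQ : Q ≠ []) : ∃ p q, LP G P a p ∧ LP G Q q b ∧ G.Adj p q
    ∧ (G.Adj a q → G.Adj p b → HC G) ∧ a ∉ Q ∧ b ∉ P := by
  obtain ⟨p, q, h1, h2, h3⟩ := h.lp.split hP hQ
  have hd := (List.nodup_append.1 h.nd).2.2
  refine ⟨p, q, h1, h2, h3, ?_, fun hx => hd _ h1.memL _ hx rfl, fun hx => hd _ hx _ h2.memR rfl⟩
  intro e1 e2
  by_contra hn
  exact h.close hn (l' := P.reverse ++ Q) ((List.reverse_perm P).append_right Q) (h1.rev.app h2 e1) e2.symm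

/-- the cycle for two dominated vertices -/
lemma HP.K4a (h : HP G (P ++ (M ++ Q)) a b) (hn : ¬ HC G) {q r : V} (hP : LP G P a x) (hM : LP G M q r)
    (hQ : LP G Q y b) (hqb : G.Adj q b) (har : G.Adj r a) (hxy : G.Adj x y) : False := by
  refine h.close hn (l' := P.reverse ++ (M.reverse ++ Q.reverse)) ?_
    (hP.rev.app (hM.rev.app hQ.rev hqb) har.symm) hxy.symm
  exact (List.reverse_perm P).append ((List.reverse_perm M).append (List.reverse_perm Q))

/-- data at an inner split `P ++ x :: R` -/
lemma HP.nbr (h : HP G (P ++ x :: R) a b) (hn : ¬ HC G) (xa : G.Adj x a) (xb : G.Adj x b) :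
    ∃ p q, LP G P a p ∧ LP G R q b ∧ G.Adj p x ∧ G.Adj x q ∧ ¬ G.Adj p b ∧ ¬ G.Adj q a ∧ p ≠ b ∧ q ≠ a := by
  have hP : P ≠ [] := by
    rintro rfl; have := h.lp.first; exact xa.ne this.symm
  have hR : R ≠ [] := by
    rintro rfl; have := h.lp.last; exact xb.ne this.symm
  obtain ⟨p, x', h1, h2, h3, h4, h5, h6⟩ := h.ne2 hP (by simp)
  obtain rfl := h2.first
  have h' : HP G ((P ++ [x']) ++ R) a b := by simpa using h
  obtain ⟨x'', q, k1, k2, k3, k4, k5, k6⟩ := h'.ne2 (by simp) hR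
  obtain rfl := k1.last
  exact ⟨p, q, h1, k2, h3, k3, fun e => hn (h4 xa.symm e), fun e => hn (k4 e.symm xb),
    fun e => h6 (e ▸ h1.memR), fun e => k5 (e ▸ k2.memL)⟩

lemma two_mem {x y : V} {l : List V} (hx : x ∈ l) (hy : y ∈ l) (hxy : x ≠ y) :
    (∃ P M Q, l = P ++ x :: (M ++ y :: Q)) ∨ (∃ P M Q, l = P ++ y :: (M ++ x :: Q)) := by
  obtain ⟨P, R, rfl⟩ := List.append_of_mem hx
  rcases List.mem_append.1 hy with h | h
  · obtain ⟨S, T, rfl⟩ := List.append_of_mem h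
    exact .inr ⟨S, T, R, by simp⟩
  · rcases List.mem_cons.1 h with h | h
    · exact absurd h.symm hxy
    · obtain ⟨S, T, rfl⟩ := List.append_of_mem h
      exact .inl ⟨P, S, T, rfl⟩

/-- two vertices adjacent to both ends and each other; succ of x adj b or pred of y adj a fail -/
lemma HP.two (h : HP G (P ++ x :: (M ++ y :: Q)) a b) (hn : ¬ HC G) (xa : G.Adj x a) (xb : G.Adj x b)
    (ya : G.Adj y a) (yb : G.Adj y b) (xy : G.Adj x y) :
    ∃ q r, LP G (P ++ [x]) a x ∧ LP G M q r ∧ LP G (y :: Q) y b ∧ G.Adj x q ∧ G.Adj r y ∧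
      ¬ G.Adj q a ∧ ¬ G.Adj r b ∧ q ≠ a ∧ q ≠ b ∧ r ≠ a ∧ r ≠ b ∧ ¬ (G.Adj q b ∧ G.Adj r a) := by
  have h1 : HP G ((P ++ [x]) ++ (M ++ (y :: Q))) a b := by simpa using h
  have h2 : HP G (((P ++ [x]) ++ M) ++ (y :: Q)) a b := by simpa using h
  have hM : M ≠ [] := by
    rintro rfl
    obtain ⟨x', y', k1, k2, k3, k4, k5, k6⟩ := h1.ne2 (by simp) (by simp)
    obtain rfl := k1.last
    obtain rfl := k2.first
    exact hn (k4 ya.symm xb)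
  obtain ⟨x', q, k1, k2, k3, k4, k5, k6⟩ := h1.ne2 (by simp) (by simp)
  obtain rfl := k1.last
  obtain ⟨r, y', m1, m2, m3, m4, m5, m6⟩ := h2.ne2 (by simp) (by simp)
  obtain rfl := m2.first
  obtain ⟨q', y'', n1, n2, n3⟩ := k2.split hM (by simp)
  obtain ⟨s1, s2, t1, t2, t3⟩ := m1.split (by simp) hM
  have e1 : LP G M q r := ⟨n1.1, by
    have := k2.2.1; rwa [List.head?_append_of_ne_nil _ hM] at this, t2.2.2⟩
  refine ⟨q, r, k1, e1, m2, k3, m3, fun e => hn (k4 e.symm xb), fun e => hn (m4 ya.symm e), ?_, ?_, ?_, ?_, ?_⟩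
  · rintro rfl; exact k5 (by simp [e1.memL])
  · rintro rfl; exact m6 (by simp [e1.memL])
  · rintro rfl; exact k5 (by simp [e1.memR])
  · rintro rfl; exact m6 (by simp [e1.memR])
  · rintro ⟨u1, u2⟩
    exact h1.K4a hn k1 e1 m2 u1 u2 xy

lemma HP.K4 (h : HP G l a b) (hn : ¬ HC G) (xa : G.Adj x a) (xb : G.Adj x b)
    (ya : G.Adj y a) (yb : G.Adj y b) (xy : G.Adj x y)
    (dx : ∀ z, G.Adj x z → z = a ∨ z = b ∨ G.Adj z a ∨ G.Adj z b)
    (dy : ∀ z, G.Adj y z → z = a ∨ z = b ∨ G.Adj z a ∨ G.Adj z b) : False := by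
  rcases two_mem (h.all x) (h.all y) xy.ne with ⟨P, M, Q, rfl⟩ | ⟨P, M, Q, rfl⟩
  · obtain ⟨q, r, -, -, -, h1, h2, h3, h4, h5, h6, h7, h8, h9⟩ := h.two hn xa xb ya yb xy
    have := dx q h1; have := dy r h2.symm
    grind
  · obtain ⟨q, r, -, -, -, h1, h2, h3, h4, h5, h6, h7, h8, h9⟩ := h.two hn ya yb xa xb xy.symm
    have := dy q h1; have := dx r h2.symm
    grind

/-- hypotheses for the distance three step -/
structure D3 (G : SimpleGraph V) (a b x s t : V) (Sp : V → Prop) : Prop where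
  xa : G.Adj x a
  xb : G.Adj x b
  sa : G.Adj s a
  sb : G.Adj s b
  ta : G.Adj t a
  tb : G.Adj t b
  xs : G.Adj x s
  xt : G.Adj x t
  st : G.Adj s t
  dx : ∀ z, G.Adj x z → z = a ∨ z = b ∨ G.Adj z a ∨ G.Adj z b
  ds : ∀ z, G.Adj s z → z = a ∨ z = b ∨ G.Adj z a ∨ G.Adj z b ∨ Sp z
  dt : ∀ z, G.Adj t z → z = a ∨ z = b ∨ G.Adj z a ∨ G.Adj z b ∨ Sp z
  sp : ∀ z z', Sp z → Sp z' → z ≠ z' → G.Adj z z'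

lemma D3.swap {s t : V} {Sp : V → Prop} (h : D3 G a b x s t Sp) : D3 G a b x t s Sp :=
  ⟨h.xa, h.xb, h.ta, h.tb, h.sa, h.sb, h.xt, h.xs, h.st.symm, h.dx, h.dt, h.ds, h.sp⟩

lemma D3.rev {s t : V} {Sp : V → Prop} (h : D3 G a b x s t Sp) : D3 G b a x s t Sp :=
  ⟨h.xb, h.xa, h.sb, h.sa, h.tb, h.ta, h.xs, h.xt, h.st, fun z hz => by have := h.dx z hz; tauto,
    fun z hz => by have := h.ds z hz; tauto, fun z hz => by have := h.dt z hz; tauto, h.sp⟩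

lemma LP.uniqL (h : LP G l a b) (h' : LP H l c d) : a = c := by
  have := h.2.1; rw [h'.2.1] at this; simpa using this.symm
lemma LP.uniqR (h : LP G l a b) (h' : LP H l c d) : b = d := by
  have := h.2.2; rw [h'.2.2] at this; simpa using this.symm

lemma D3.mid {s t : V} {Sp : V → Prop} (d : D3 G a b x s t Sp) {M1 M2 : List V}
    (h : HP G (P ++ s :: (M1 ++ x :: (M2 ++ t :: Q))) a b) (hn : ¬ HC G) : False := by
  obtain ⟨q1, r1, A1, A2, A3, A4, A5, A6, A7, A8, A9, A10, A11, A12⟩ := h.two hn d.sa d.sb d.xa d.xb d.xs.symm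
  have h' : HP G ((P ++ s :: M1) ++ x :: (M2 ++ t :: Q)) a b := by simpa using h
  obtain ⟨q2, r2, B1, B2, B3, B4, B5, B6, B7, B8, B9, B10, B11, B12⟩ := h'.two hn d.xa d.xb d.ta d.tb d.xt
  have e1 : G.Adj r1 a := by have := d.dx _ A5.symm; tauto
  have e2 : G.Adj q2 b := by have := d.dx _ B4; tauto
  have e3 : Sp q1 := by have := d.ds _ A4; tauto
  have e4 : Sp r2 := by have := d.dt _ B5.symm; tauto
  have ne : q1 ≠ r2 := by
    rintro rfl
    have := h.nd
    have m1 := A2.memL; have m2 := B2.memR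
    simp only [List.nodup_append, List.nodup_cons, List.mem_append, List.mem_cons] at this
    grind
  have e5 := d.sp _ _ e3 e4 ne
  refine h.close hn (l' := (P ++ [s]).reverse ++ (M1.reverse ++ (M2.reverse ++ ((t :: Q).reverse ++ [x])))) ?_
    (A1.rev.app (A2.rev.app (B2.rev.app (B3.rev.app (LP.single x) d.xt.symm) e2) e5) e1.symm) d.xs
  have := (List.reverse_perm (P ++ [s])).append ((List.reverse_perm M1).append (((List.reverse_perm M2).append
    ((List.reverse_perm (t :: Q)).append_right [x]))))
  refine this.trans ?_
  simp only [List.append_assoc, List.singleton_append]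
  refine List.Perm.append_left _ (List.Perm.cons _ (List.Perm.append_left _ ?_))
  rw [← List.append_assoc]
  exact List.perm_append_comm (l₂ := [x])

lemma D3.fst {s t : V} {Sp : V → Prop} (d : D3 G a b x s t Sp) {M1 M2 : List V}
    (h : HP G (P ++ x :: (M1 ++ s :: (M2 ++ t :: Q))) a b) (hn : ¬ HC G) : False := by
  obtain ⟨q1, r1, A1, A2, A3, A4, A5, A6, A7, A8, A9, A10, A11, A12⟩ := h.two hn d.xa d.xb d.sa d.sb d.xs
  have h' : HP G ((P ++ x :: M1) ++ s :: (M2 ++ t :: Q)) a b := by simpa using h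
  obtain ⟨q2, r2, B1, B2, B3, B4, B5, B6, B7, B8, B9, B10, B11, B12⟩ := h'.two hn d.sa d.sb d.ta d.tb d.st
  have h'' : HP G (P ++ x :: ((M1 ++ s :: M2) ++ t :: Q)) a b := by simpa using h
  obtain ⟨q3, r3, C1, C2, C3, C4, C5, C6, C7, C8, C9, C10, C11, C12⟩ := h''.two hn d.xa d.xb d.ta d.tb d.xt
  have e1 : G.Adj q1 b := by have := d.dx _ A4; tauto
  have e2 : G.Adj q3 b := by have := d.dx _ C4; tauto
  have er : r3 = r2 := by
    have := C2.2.2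
    rw [List.getLast?_append_of_ne_nil _ (by simp)] at this
    have n2 := B2.ne
    rw [show s :: M2 = [s] ++ M2 from rfl, List.getLast?_append_of_ne_nil _ n2, B2.2.2] at this
    simpa using this.symm
  subst er
  have e3 : Sp r1 := by have := d.ds _ A5.symm; tauto
  have e4 : Sp r3 := by have := d.dt _ B5.symm; tauto
  have ne : r1 ≠ r3 := by
    rintro rfl
    have := h.nd
    have m1 := A2.memR; have m2 := B2.memR
    simp only [List.nodup_append, List.nodup_cons, List.mem_append, List.mem_cons] at this
    grind
  have e5 := d.sp _ _ e3 e4 ne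
  refine h.close hn (l' := M1 ++ (M2.reverse ++ ([s] ++ ((P ++ [x]).reverse ++ (t :: Q))))) ?_
    (A2.app (B2.rev.app ((LP.single s).app (A1.rev.app B3 d.ta.symm) d.xs.symm) B4.symm) e5) e1.symm
  have p1 : (M1 ++ (M2.reverse ++ ([s] ++ ((P ++ [x]).reverse ++ (t :: Q))))).Perm
      (M1 ++ (M2 ++ ([s] ++ ((P ++ [x]) ++ (t :: Q))))) :=
    ((List.reverse_perm M2).append (((List.reverse_perm (P ++ [x])).append_right _).append_left _)).append_left _
  refine p1.trans ?_
  classical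
  rw [List.perm_iff_count]
  intro z
  simp only [List.count_append, List.count_cons, List.count_nil]
  omega

lemma D3.false {s t : V} {Sp : V → Prop} (d : D3 G a b x s t Sp)
    (h : HP G l a b) (hn : ¬ HC G) : False := by
  -- all in one half
  have key : ∀ {a b : V} {P R : List V}, D3 G a b x s t Sp → HP G (P ++ x :: R) a b → s ∈ R → t ∈ R → False := by
    intro a b P R d h hs ht
    rcases two_mem hs ht d.st.ne with ⟨P', M, Q, rfl⟩ | ⟨P', M, Q, rfl⟩
    · exact d.fst h hn
    · exact d.swap.fst h hn
  obtain ⟨P, R, rfl⟩ := List.append_of_mem (h.all x)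
  have hs : s ∈ P ∨ s ∈ R := by
    have := h.all s; have := d.xs.ne; simp at *; tauto
  have ht : t ∈ P ∨ t ∈ R := by
    have := h.all t; have := d.xt.ne; simp at *; tauto
  rcases hs with hs | hs <;> rcases ht with ht | ht
  · have h' := h.rev
    simp only [List.reverse_append, List.reverse_cons, List.append_assoc, List.singleton_append] at h'
    exact key d.rev h' (by simpa using hs) (by simpa using ht)
  · obtain ⟨P1, P2, rfl⟩ := List.append_of_mem hs
    obtain ⟨R1, R2, rfl⟩ := List.append_of_mem ht
    exact d.mid (by simpa using h) hn
  · obtain ⟨P1, P2, rfl⟩ := List.append_of_mem ht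
    obtain ⟨R1, R2, rfl⟩ := List.append_of_mem hs
    exact d.swap.mid (by simpa using h) hn
  · exact key d h hs ht

/-- `G` plus the edge `ab` -/
lemma HP.of_add [Fintype V] (hV : 3 ≤ Fintype.card V) (hG : ¬ HC G) (hH : HC H) (ab : a ≠ b)
    (hGH : ∀ u v, H.Adj u v → G.Adj u v ∨ (u = a ∧ v = b) ∨ (u = b ∧ v = a)) : ∃ l, HP G l a b := by
  classical
  -- main: a hamiltonian path of H between a and b is one of G
  have main : ∀ l, HP H l a b → HP G l a b := by
    intro l h
    refine ⟨⟨?_, h.lp.2⟩, h.nd, h.all⟩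
    rw [List.isChain_iff_forall_rel_of_append_cons_cons]
    intro x y P Q hl
    have h1 := h.lp.1
    rw [List.isChain_iff_forall_rel_of_append_cons_cons] at h1
    have hlen : 3 ≤ l.length := by
      refine hV.trans ?_
      have : (Finset.univ : Finset V) ⊆ l.toFinset := fun v _ => by simpa using h.all v
      exact (Finset.card_le_card this).trans (List.toFinset_card_le l)
    have hh := h.lp.2.1; have hla := h.lp.2.2
    have hnd := h.nd
    rcases hGH _ _ (h1 hl) with h | ⟨rfl, rfl⟩ | ⟨rfl, rfl⟩
    · exact h
    · exfalso
      subst hl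
      cases P with
      | cons p P => simp at hh; subst hh; simp at hnd
      | nil =>
        rcases List.eq_nil_or_concat Q with rfl | ⟨Q', q, rfl⟩
        · simp at hlen
        · have e : [] ++ x :: y :: Q'.concat q = (x :: y :: Q') ++ [q] := by simp
          rw [e, List.getLast?_append] at hla
          simp at hla; subst hla; simp at hnd
    · exfalso
      subst hl
      cases P with
      | cons p P => simp at hh; subst hh; simp at hnd
      | nil => simp at hh; exact ab hh.symm
  have main' : ∀ l x y, HP H l x y → ((x = a ∧ y = b) ∨ (x = b ∧ y = a)) → ∃ l, HP G l a b := by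
    rintro l x y h (⟨rfl, rfl⟩ | ⟨rfl, rfl⟩)
    · exact ⟨l, main l h⟩
    · exact ⟨l.reverse, main _ h.rev⟩
  obtain ⟨l, x, y, hl, yx, nd, all⟩ := hH
  by_cases h1 : G.Adj y x
  · have : ¬ l.IsChain G.Adj := fun hc => hG ⟨l, x, y, ⟨hc, hl.2⟩, h1, nd, all⟩
    rw [List.isChain_iff_forall_rel_of_append_cons_cons] at this
    push Not at this
    obtain ⟨p, q, P, Q, e, hpq⟩ := this
    have hl' := hl.1
    rw [List.isChain_iff_forall_rel_of_append_cons_cons] at hl'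
    have hpq' := hGH _ _ (hl' e)
    have e' : l = (P ++ [p]) ++ (q :: Q) := by simpa using e
    subst e'
    obtain ⟨p', q', k1, k2, k3⟩ := hl.split (by simp) (by simp)
    obtain rfl := k1.last
    obtain rfl := k2.first
    refine main' (q' :: Q ++ (P ++ [p'])) q' p' ⟨k2.app k1 yx, ?_, ?_⟩ (by tauto)
    · exact (List.perm_append_comm.nodup_iff).1 nd
    · intro v; exact List.perm_append_comm.mem_iff.1 (all v)
  · exact main' l x y ⟨hl, nd, all⟩ (by have := hGH _ _ yx; tauto)

end BR


namespace BR
variable {V : Type*}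

/-- no induced claw -/
def NoClaw (G : SimpleGraph V) : Prop := ∀ x a b c, G.Adj x a → G.Adj x b → G.Adj x c →
  a ≠ b → a ≠ c → b ≠ c → G.Adj a b ∨ G.Adj a c ∨ G.Adj b c

/-- local completion at `x` -/
def lc (G : SimpleGraph V) (x : V) : SimpleGraph V where
  Adj u v := G.Adj u v ∨ (u ≠ v ∧ G.Adj x u ∧ G.Adj x v)
  symm := ⟨fun u v h => by
    rcases h with h | ⟨h1, h2, h3⟩
    · exact .inl h.symm
    · exact .inr ⟨h1.symm, h3, h2⟩⟩
  loopless := ⟨fun u h => by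
    rcases h with h | ⟨h1, h2, h3⟩
    · exact G.loopless.irrefl _ h
    · exact h1 rfl⟩

variable {G : SimpleGraph V} {x u y v : V}

lemma le_lc : G ≤ lc G x := fun _ _ h => Or.inl h

lemma lc_x {z : V} (h : (lc G x).Adj x z) : G.Adj x z := by
  rcases h with h | ⟨_, h, _⟩
  · exact h
  · exact absurd rfl h.ne

lemma three_path {S : V → Prop} {a b : V} (hu : S u) (hy : S y) (hv : S v)
    (huy : G.Adj u y) (hyv : G.Adj y v)
    (ha : a = u ∨ a = v ∨ G.Adj a u ∨ G.Adj a v) (hb : b = u ∨ b = v ∨ G.Adj b u ∨ G.Adj b v)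
    (Sa : S a) (Sb : S b)
    (dom : ∀ z, S z → z = a ∨ z = b ∨ G.Adj z a ∨ G.Adj z b)
    (nab : ¬ G.Adj a b) (ab : a ≠ b) (hcom : ∀ z, S z → ¬ (G.Adj z a ∧ G.Adj z b)) :
    ∃ s t, S s ∧ S t ∧ G.Adj s a ∧ G.Adj t b ∧ G.Adj s t := by
  by_contra hno
  push Not at hno
  have disj : ∀ z, S z → (z = a ∨ G.Adj z a) → (z = b ∨ G.Adj z b) → False := by
    rintro z hz (rfl | h1) (rfl | h2)
    exacts [ab rfl, nab h2, nab h1.symm, hcom z hz ⟨h1, h2⟩]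
  have noe : ∀ s t, S s → S t → (s = a ∨ G.Adj s a) → (t = b ∨ G.Adj t b) → ¬ G.Adj s t := by
    rintro s t hs ht (rfl | h1) (rfl | h2) h
    · exact nab h
    · exact hcom t ht ⟨h.symm, h2⟩
    · exact hcom s hs ⟨h1, h⟩
    · exact hno s t hs ht h1 h2 h
  have dom' : ∀ z, S z → (z = a ∨ G.Adj z a) ∨ (z = b ∨ G.Adj z b) := by
    intro z hz
    rcases dom z hz with h | h | h | h
    exacts [.inl (.inl h), .inr (.inl h), .inl (.inr h), .inr (.inr h)]
  rcases dom' y hy with k | k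
  · have ku := (dom' u hu).resolve_right (fun h => noe y u hy hu k h huy.symm)
    have kv := (dom' v hv).resolve_right (fun h => noe y v hy hv k h hyv)
    rcases hb with rfl | rfl | h | h
    exacts [disj _ hu ku (.inl rfl), disj _ hv kv (.inl rfl), noe _ _ hu Sb ku (.inl rfl) h.symm,
      noe _ _ hv Sb kv (.inl rfl) h.symm]
  · have ku := (dom' u hu).resolve_left (fun h => noe u y hu hy h k huy)
    have kv := (dom' v hv).resolve_left (fun h => noe v y hv hy h k hyv.symm)
    rcases ha with rfl | rfl | h | h
    exacts [disj _ hu (.inl rfl) ku, disj _ hv (.inl rfl) kv, noe _ _ Sa hu (.inl rfl) ku h,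
      noe _ _ Sa hv (.inl rfl) kv h]

lemma lc_nonHC [Fintype V] (hV : 3 ≤ Fintype.card V) (hc : NoClaw G) (xu : G.Adj x u) (xy : G.Adj x y)
    (xv : G.Adj x v) (uv : u ≠ v) (nuv : ¬ G.Adj u v) (uy : G.Adj u y) (yv : G.Adj y v) (hn : ¬ HC G) :
    ¬ HC (lc G x) := by
  classical
  obtain ⟨H, hH, hmax⟩ := Set.Finite.exists_maximal
    (s := {H : SimpleGraph V | G ≤ H ∧ H ≤ lc G x ∧ ¬ HC H}) (Set.toFinite _) ⟨G, le_rfl, le_lc, hn⟩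
  obtain ⟨GH, HL, nH⟩ := hH
  suffices h : lc G x ≤ H by rwa [le_antisymm h HL]
  -- non adjacent pairs give hamiltonian paths
  have hpath : ∀ a b, G.Adj x a → G.Adj x b → a ≠ b → ¬ H.Adj a b → ∃ l, HP H l a b := by
    intro a b xa xb ab nab
    have hlt : H ≤ H ⊔ SimpleGraph.edge a b := le_sup_left
    have : HC (H ⊔ SimpleGraph.edge a b) := by
      by_contra hh
      have := hmax (y := H ⊔ SimpleGraph.edge a b) ⟨GH.trans hlt, ?_, hh⟩ hlt
      · exact nab (this (by simp [SimpleGraph.edge_adj, ab]))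
      · refine sup_le HL ?_
        intro p q hpq
        rw [SimpleGraph.edge_adj] at hpq
        rcases hpq with ⟨⟨rfl, rfl⟩ | ⟨rfl, rfl⟩, h⟩
        · exact .inr ⟨h, xa, xb⟩
        · exact .inr ⟨h, xb, xa⟩
    refine HP.of_add hV nH this ab ?_
    intro p q hpq
    rw [SimpleGraph.sup_adj, SimpleGraph.edge_adj] at hpq
    tauto
  -- neighbours of x
  have hx : ∀ z, H.Adj x z → G.Adj x z := fun z h => lc_x (HL h)
  have dom : ∀ a b, G.Adj x a → G.Adj x b → a ≠ b → ¬ G.Adj a b → ∀ z, G.Adj x z →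
      z = a ∨ z = b ∨ G.Adj z a ∨ G.Adj z b := by
    intro a b xa xb ab nab z xz
    by_cases za : z = a
    · exact .inl za
    by_cases zb : z = b
    · exact .inr (.inl zb)
    have := hc x z a b xz xa xb za zb ab
    tauto
  have up : ∀ {a b z : V}, (z = a ∨ z = b ∨ G.Adj z a ∨ G.Adj z b) → (z = a ∨ z = b ∨ H.Adj z a ∨ H.Adj z b) := by
    rintro a b z (h | h | h | h)
    exacts [.inl h, .inr (.inl h), .inr (.inr (.inl (GH h))), .inr (.inr (.inr (GH h)))]
  have nbr : ∀ y z, G.Adj x y → H.Adj y z → G.Adj x z ∨ z = x ∨ (G.Adj y z ∧ ¬ G.Adj x z) := by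
    intro y z xy yz
    by_cases h : G.Adj x z
    · exact .inl h
    · rcases HL yz with h' | ⟨_, _, h'⟩
      · exact .inr (.inr ⟨h', h⟩)
      · exact .inl h'
  have stepA : ∀ a b y, G.Adj x a → G.Adj x b → a ≠ b → G.Adj x y → G.Adj y a → G.Adj y b → H.Adj a b := by
    intro a b y xa xb ab xy ya yb
    by_contra nab
    have nab' : ¬ G.Adj a b := fun h => nab (GH h)
    obtain ⟨l, hl⟩ := hpath a b xa xb ab nab
    refine hl.K4 (x := x) (y := y) nH (GH xa) (GH xb) (GH ya) (GH yb) (GH xy) ?_ ?_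
    · intro z hz; exact up (dom a b xa xb ab nab' z (hx z hz))
    · intro z hz
      rcases nbr y z xy hz with h | rfl | ⟨h, h'⟩
      · exact up (dom a b xa xb ab nab' z h)
      · exact .inr (.inr (.inl (GH xa)))
      · apply up
        by_cases za : z = a
        · exact .inl za
        by_cases zb : z = b
        · exact .inr (.inl zb)
        have := hc y z a b h ya yb za zb ab
        tauto
  intro a b hab
  rcases hab with h | ⟨ab, xa, xb⟩
  · exact GH h
  by_contra nab
  have nab' : ¬ G.Adj a b := fun h => nab (GH h)
  have hcom : ∀ z, G.Adj x z → ¬ (G.Adj z a ∧ G.Adj z b) := fun z xz h => nab (stepA a b z xa xb ab xz h.1 h.2)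
  have hdom := dom a b xa xb ab nab'
  obtain ⟨s, t, xs, xt, sa, tb, st⟩ := three_path (S := fun z => G.Adj x z) xu xy xv uy yv
    (dom u v xu xv uv nuv a xa) (dom u v xu xv uv nuv b xb) xa xb hdom nab' ab hcom
  have sb : s ≠ b := by rintro rfl; exact nab' sa.symm
  have ta : t ≠ a := by rintro rfl; exact nab' tb
  have nta : ¬ G.Adj t a := fun h => hcom t xt ⟨h, tb⟩
  have nsb : ¬ G.Adj s b := fun h => hcom s xs ⟨sa, h⟩
  have Hsb : H.Adj s b := stepA s b t xs xb sb xt st.symm tb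
  have Hta : H.Adj t a := stepA t a s xt xa ta xs st sa
  obtain ⟨l, hl⟩ := hpath a b xa xb ab nab
  have d : D3 H a b x s t (fun z => ¬ G.Adj x z ∧ z ≠ x ∧ G.Adj s z ∧ G.Adj t z) := by
    refine ⟨GH xa, GH xb, GH sa, Hsb, Hta, GH tb, GH xs, GH xt, GH st, fun z hz => up (hdom z (hx z hz)), ?_, ?_, ?_⟩
    · intro z hz
      rcases nbr s z xs hz with h | rfl | ⟨h, h'⟩
      · have := up (hdom z h); tauto
      · exact .inr (.inr (.inl (GH xa)))
      · by_cases za : z = a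
        · exact .inl za
        by_cases zx : z = x
        · subst zx; exact .inr (.inr (.inl (GH xa)))
        have zt : z ≠ t := by rintro rfl; exact h' xt
        rcases hc s z a t h sa st za zt ta.symm with k | k | k
        · exact .inr (.inr (.inl (GH k)))
        · exact .inr (.inr (.inr (.inr ⟨h', zx, h, k.symm⟩)))
        · exact absurd k.symm nta
    · intro z hz
      rcases nbr t z xt hz with h | rfl | ⟨h, h'⟩
      · have := up (hdom z h); tauto
      · exact .inr (.inr (.inl (GH xa)))
      · by_cases zb : z = b
        · exact .inr (.inl zb)
        by_cases zx : z = x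
        · subst zx; exact .inr (.inr (.inl (GH xa)))
        have zs : z ≠ s := by rintro rfl; exact h' xs
        rcases hc t z b s h tb st.symm zb zs sb.symm with k | k | k
        · exact .inr (.inr (.inr (.inl (GH k))))
        · exact .inr (.inr (.inr (.inr ⟨h', zx, k.symm, h⟩)))
        · exact absurd k.symm nsb
    · rintro z z' ⟨h1, h2, h3, h4⟩ ⟨k1, k2, k3, k4⟩ hne
      rcases hc s x z z' xs.symm h3 k3 h2.symm k2.symm hne with k | k | k
      · exact absurd k h1
      · exact absurd k k1
      · exact GH k
  exact d.false hl nH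

lemma lc_noClaw (hc : NoClaw G) : NoClaw (lc G x) := by
  intro y a b c ya yb yc ab ac bc
  by_contra hno
  push Not at hno
  obtain ⟨n1, n2, n3⟩ := hno
  have key : ∀ a b c, (lc G x).Adj y b → (lc G x).Adj y c → b ≠ c → ¬ (lc G x).Adj a b →
      ¬ (lc G x).Adj a c → ¬ (lc G x).Adj b c → G.Adj x y → G.Adj x a → a ≠ b → a ≠ c → False := by
    intro a b c yb yc bc n1 n2 n3 xy xa ab ac
    have xb : ¬ G.Adj x b := fun h => n1 (.inr ⟨ab, xa, h⟩)
    have xc : ¬ G.Adj x c := fun h => n2 (.inr ⟨ac, xa, h⟩)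
    have yb' : G.Adj y b := yb.resolve_right (fun h => xb h.2.2)
    have yc' : G.Adj y c := yc.resolve_right (fun h => xc h.2.2)
    have bx : x ≠ b := by rintro rfl; exact n1 (.inl xa.symm)
    have cx : x ≠ c := by rintro rfl; exact n2 (.inl xa.symm)
    rcases hc y x b c xy.symm yb' yc' bx cx bc with k | k | k
    exacts [xb k, xc k, n3 (.inl k)]
  have s1 := fun h => n1 (SimpleGraph.Adj.symm h)
  have s2 := fun h => n2 (SimpleGraph.Adj.symm h)
  have s3 := fun h => n3 (SimpleGraph.Adj.symm h)
  rcases ya with h1 | ⟨_, h1, h1'⟩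
  · rcases yb with h2 | ⟨_, h2, h2'⟩
    · rcases yc with h3 | ⟨_, h3, h3'⟩
      · rcases hc y a b c h1 h2 h3 ab ac bc with k | k | k
        exacts [n1 (.inl k), n2 (.inl k), n3 (.inl k)]
      · exact key c a b (.inl h1) (.inl h2) ab s2 s3 n1 h3 h3' ac.symm bc.symm
    · exact key b a c (.inl h1) yc ac s1 n3 n2 h2 h2' ab.symm bc
  · exact key a b c yb yc bc n1 n2 n3 h1 h1' ab ac

/-- cliques of the closure stay connected in the original graph -/
def CC (G G' : SimpleGraph V) : Prop := ∀ u v, G'.Adj u v → ∀ X : Set V, u ∈ X → v ∉ X →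
  ∃ a ∈ X, ∃ b ∉ X, G.Adj a b ∧ ((a = u ∨ G'.Adj u a) ∧ (a = v ∨ G'.Adj v a)) ∧
    ((b = u ∨ G'.Adj u b) ∧ (b = v ∨ G'.Adj v b))

lemma CC.refl : CC G G := fun u v h X hu hv =>
  ⟨u, hu, v, hv, h, ⟨.inl rfl, .inr h.symm⟩, ⟨.inr h, .inl rfl⟩⟩

lemma CC.lc {G' : SimpleGraph V} (h : CC G G') (x : V) : CC G (lc G' x) := by
  have up : ∀ {a u : V}, (a = u ∨ G'.Adj u a) → (a = u ∨ (BR.lc G' x).Adj u a) := by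
    rintro a u (h | h)
    exacts [.inl h, .inr (.inl h)]
  have up2 : ∀ {a u : V}, (a = x ∨ G'.Adj x a) → G'.Adj x u → (a = u ∨ (BR.lc G' x).Adj u a) := by
    rintro a u (rfl | h) hu
    · exact .inr (.inl hu.symm)
    · by_cases e : a = u
      · exact .inl e
      · exact .inr (.inr ⟨fun h => e h.symm, hu, h⟩)
  rintro u v (huv | ⟨_, xu, xv⟩) X hu hv
  · obtain ⟨a, ha, b, hb, hab, ⟨h1, h2⟩, ⟨h3, h4⟩⟩ := h u v huv X hu hv
    exact ⟨a, ha, b, hb, hab, ⟨up h1, up h2⟩, ⟨up h3, up h4⟩⟩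
  · by_cases hx : x ∈ X
    · obtain ⟨a, ha, b, hb, hab, ⟨h1, h2⟩, ⟨h3, h4⟩⟩ := h x v xv X hx hv
      exact ⟨a, ha, b, hb, hab, ⟨up2 h1 xu, up h2⟩, ⟨up2 h3 xu, up h4⟩⟩
    · obtain ⟨a, ha, b, hb, hab, ⟨h1, h2⟩, ⟨h3, h4⟩⟩ := h u x xu.symm X hu hx
      exact ⟨a, ha, b, hb, hab, ⟨up h1, up2 h2 xv⟩, ⟨up h3, up2 h4 xv⟩⟩

/-- neighbourhoods are disjoint unions of cliques -/
def Closed (G : SimpleGraph V) : Prop := ∀ x u y v, G.Adj x u → G.Adj x y → G.Adj x v → u ≠ v →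
  G.Adj u y → G.Adj y v → G.Adj u v

lemma exists_closure [Fintype V] (hV : 3 ≤ Fintype.card V) (hc : NoClaw G) (hn : ¬ HC G) :
    ∃ G', G ≤ G' ∧ NoClaw G' ∧ ¬ HC G' ∧ CC G G' ∧ Closed G' := by
  classical
  obtain ⟨H, hH, hmax⟩ := Set.Finite.exists_maximal
    (s := {H : SimpleGraph V | G ≤ H ∧ NoClaw H ∧ ¬ HC H ∧ CC G H}) (Set.toFinite _) ⟨G, le_rfl, hc, hn, CC.refl⟩
  obtain ⟨h1, h2, h3, h4⟩ := hH
  refine ⟨H, h1, h2, h3, h4, ?_⟩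
  intro x u y v xu xy xv uv uy yv
  by_contra nuv
  have := hmax (y := lc H x) ⟨h1.trans le_lc, lc_noClaw h2, lc_nonHC hV h2 xu xy xv uv nuv uy yv h3, h4.lc x⟩ le_lc
  exact nuv (this (.inr ⟨uv, xu, xv⟩))

end BR


namespace BR
open Finset
variable {V K : Type*}

/-- `G` is the line graph (through `φ`) of a triangle-free graph -/
structure Rep (G : SimpleGraph V) (φ : V → Sym2 K) : Prop where
  nd : ∀ v, ¬ (φ v).IsDiag
  inj : Function.Injective φ
  adj : ∀ u v, G.Adj u v ↔ u ≠ v ∧ ∃ k, k ∈ φ u ∧ k ∈ φ v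
  cl : ∀ u v w k, u ≠ v → k ∈ φ u → k ∈ φ v → (w = u ∨ G.Adj u w) → (w = v ∨ G.Adj v w) → k ∈ φ w

/-- the clique through `u w` -/
def CL (G : SimpleGraph V) (u w : V) : Set V := {z | (z = u ∨ G.Adj u z) ∧ (z = w ∨ G.Adj w z)}

lemma CL_clique {G : SimpleGraph V} (hc : Closed G) {u w z z' : V} (huw : G.Adj u w) (h : z ∈ CL G u w)
    (h' : z' ∈ CL G u w) (hne : z ≠ z') : G.Adj z z' := by
  obtain ⟨h1, h2⟩ := h
  obtain ⟨k1, k2⟩ := h'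
  rcases h1 with rfl | h1
  · exact k1.resolve_left hne.symm
  rcases k1 with rfl | k1
  · exact h1.symm
  rcases h2 with rfl | h2
  · exact k2.resolve_left hne.symm
  rcases k2 with rfl | k2
  · exact h2.symm
  exact hc u z w z' h1 huw k1 hne h2.symm k2

lemma CL_comm {G : SimpleGraph V} (u w : V) : CL G u w = CL G w u := by
  ext z; simp only [CL, Set.mem_ofPred_eq]; tauto

lemma CL_eq {G : SimpleGraph V} (hc : Closed G) {u w v : V} (huw : G.Adj u w) (h : v ∈ CL G u w) (hne : v ≠ u) :
    CL G u v = CL G u w := by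
  have uv : G.Adj u v := h.1.resolve_left hne
  have hw : w ∈ CL G u v := ⟨.inr huw, by
    rcases h.2 with rfl | h
    · exact .inl rfl
    · exact .inr h.symm⟩
  ext z
  constructor
  · intro hz
    refine ⟨hz.1, ?_⟩
    by_cases e : z = w
    · exact .inl e
    · exact .inr (CL_clique hc uv hw hz (fun h => e h.symm))
  · intro hz
    refine ⟨hz.1, ?_⟩
    by_cases e : z = v
    · exact .inl e
    · exact .inr (CL_clique hc huw h hz (fun h => e h.symm))

lemma exists_rep {G : SimpleGraph V} (hc : Closed G) (hn : NoClaw G) (hi : ∀ v, ∃ w, G.Adj v w) :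
    ∃ φ : V → Sym2 (Set V ⊕ V), Rep G φ := by
  classical
  have ex : ∀ v, ∃ e : Sym2 (Set V ⊕ V), ¬ e.IsDiag ∧ (∀ C, Sum.inl C ∈ e ↔ ∃ w, G.Adj v w ∧ C = CL G v w) ∧
      (∀ x, Sum.inr x ∈ e → x = v) := by
    intro v
    by_cases h : ∃ w1 w2, G.Adj v w1 ∧ G.Adj v w2 ∧ w1 ≠ w2 ∧ ¬ G.Adj w1 w2
    · obtain ⟨w1, w2, h1, h2, h12, n12⟩ := h
      refine ⟨s(.inl (CL G v w1), .inl (CL G v w2)), ?_, ?_, ?_⟩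
      · simp only [Sym2.mk_isDiag_iff, Sum.inl.injEq]
        intro e
        have : w2 ∈ CL G v w1 := by rw [e]; exact ⟨.inr h2, .inl rfl⟩
        exact n12 (this.2.resolve_left h12.symm)
      · intro C
        simp only [Sym2.mem_iff, Sum.inl.injEq]
        constructor
        · rintro (rfl | rfl)
          exacts [⟨w1, h1, rfl⟩, ⟨w2, h2, rfl⟩]
        · rintro ⟨w, hw, rfl⟩
          by_cases e1 : w = w1
          · left; rw [e1]
          by_cases e2 : w = w2
          · right; rw [e2]
          rcases hn v w w1 w2 hw h1 h2 e1 e2 h12 with k | k | k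
          · left; exact CL_eq hc h1 ⟨.inr hw, .inr k.symm⟩ hw.ne'
          · right; exact CL_eq hc h2 ⟨.inr hw, .inr k.symm⟩ hw.ne'
          · exact absurd k n12
      · intro x; simp
    · push Not at h
      obtain ⟨w, hw⟩ := hi v
      refine ⟨s(.inl (CL G v w), .inr v), by simp, ?_, by simp⟩
      intro C
      simp only [Sym2.mem_iff, Sum.inl.injEq, reduceCtorEq, or_false]
      constructor
      · rintro rfl; exact ⟨w, hw, rfl⟩
      · rintro ⟨w', hw', rfl⟩
        by_cases e : w' = w
        · rw [e]
        · exact CL_eq hc hw ⟨.inr hw', .inr (h w w' hw hw' (fun h => e h.symm))⟩ hw'.ne'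
  choose φ h1 h2 h3 using ex
  have inC : ∀ u C, Sum.inl C ∈ φ u → u ∈ C := by
    intro u C h
    obtain ⟨w, hw, rfl⟩ := (h2 u C).1 h
    exact ⟨.inl rfl, .inr hw.symm⟩
  -- shared labels
  have sh : ∀ u v k, u ≠ v → k ∈ φ u → k ∈ φ v → G.Adj u v ∧ k = .inl (CL G u v) := by
    intro u v k uv hu hv
    rcases k with C | x
    · have hvC := inC v C hv
      obtain ⟨w, hw, rfl⟩ := (h2 u C).1 hu
      have huC := inC u _ hu
      refine ⟨CL_clique hc hw huC hvC uv, ?_⟩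
      rw [CL_eq hc hw hvC uv.symm]
    · exact absurd ((h3 u x hu).symm.trans (h3 v x hv)) uv
  have sh' : ∀ u v, G.Adj u v → Sum.inl (CL G u v) ∈ φ u ∧ Sum.inl (CL G u v) ∈ φ v := by
    intro u v huv
    exact ⟨(h2 _ _).2 ⟨v, huv, rfl⟩, (h2 _ _).2 ⟨u, huv.symm, CL_comm _ _⟩⟩
  refine ⟨φ, h1, ?_, ?_, ?_⟩
  · intro u v e
    by_contra uv
    have key : ∀ k ∈ φ u, k = .inl (CL G u v) := fun k hk => (sh u v k uv hk (e ▸ hk)).2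
    have hd := h1 u
    revert key hd
    generalize φ u = f
    induction f with | _ a b =>
    intro key hd
    exact hd (by simp [key a (by simp), key b (by simp)])
  · intro u v
    constructor
    · intro huv; exact ⟨huv.ne, _, sh' u v huv⟩
    · rintro ⟨uv, k, k1, k2⟩; exact (sh u v k uv k1 k2).1
  · intro u v w k uv hu hv hw hw'
    obtain ⟨huv, rfl⟩ := sh u v k uv hu hv
    by_cases e : w = u
    · rwa [e]
    have hwC : w ∈ CL G u v := ⟨hw, hw'⟩
    have := CL_eq hc huv hwC e
    rw [← this]
    exact (sh' u w (hw.resolve_left e)).2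

/-- routes -/
inductive Route (D : K → V → K → Prop) : K → List (V × K) → K → Prop
  | nil (k : K) : Route D k [] k
  | cons {k j k' : K} {v : V} {L : List (V × K)} : D k v j → Route D j L k' → Route D k ((v, j) :: L) k'

variable {D : K → V → K → Prop} {k k' j : K} {L L' : List (V × K)}

lemma Route.app {k'' : K} (h : Route D k L k') (h' : Route D k' L' k'') : Route D k (L ++ L') k'' := by
  induction h with
  | nil => exact h'
  | cons d _ ih => exact .cons d (ih h')

lemma Route.split (h : Route D k L k') (hj : j = k ∨ j ∈ L.map Prod.snd) :
    ∃ L1 L2, L = L1 ++ L2 ∧ Route D k L1 j ∧ Route D j L2 k' := by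
  induction h with
  | nil k => 
    have : j = k := by simpa using hj
    subst this; exact ⟨[], [], rfl, .nil _, .nil _⟩
  | @cons k i k' v L d h ih =>
    by_cases e : j = k
    · subst e; exact ⟨[], _, rfl, .nil _, .cons d h⟩
    · obtain ⟨L1, L2, e1, e2, e3⟩ := ih (by simpa [e] using hj)
      exact ⟨(v, i) :: L1, L2, by rw [e1]; rfl, .cons d e2, e3⟩

lemma Route.mono {D' : K → V → K → Prop} (hD : ∀ k v j, D k v j → D' k v j) (h : Route D k L k') : Route D' k L k' := by
  induction h with
  | nil => exact .nil _
  | cons d _ ih => exact .cons (hD _ _ _ d) ih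

lemma Route.last_mem (h : Route D k L k') : k' = k ∨ k' ∈ L.map Prod.snd := by
  induction h with
  | nil => exact .inl rfl
  | cons d _ ih => right; rcases ih with h | h <;> simp_all

variable {φ : V → Sym2 K}

lemma Route.ends (h : Route (fun k v j => φ v = s(k, j)) k L k') {v : V} (hv : v ∈ L.map Prod.fst) (hj : j ∈ φ v) :
    j = k ∨ j ∈ L.map Prod.snd := by
  induction h with
  | nil => simp at hv
  | @cons k i k' w L d h ih =>
    rcases List.mem_cons.1 hv with e | e
    · simp only at e
      subst e; rw [d, Sym2.mem_iff] at hj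
      rcases hj with rfl | rfl <;> simp
    · rcases ih e with e | e <;> simp_all

lemma Route.lp {G : SimpleGraph V} (hR : Rep G φ) (h : Route (fun k v j => k ∈ φ v ∧ j ∈ φ v) k L k')
    (hn : L ≠ []) (nd : (L.map Prod.fst).Nodup) : ∃ a b, LP G (L.map Prod.fst) a b ∧ k ∈ φ a ∧ k' ∈ φ b := by
  induction h with
  | nil => exact absurd rfl hn
  | @cons k i k' v L d h ih =>
    by_cases e : L = []
    · subst e
      cases h
      exact ⟨v, v, LP.single v, d.1, d.2⟩
    · simp only [List.map_cons, List.nodup_cons] at nd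
      obtain ⟨a, b, h1, h2, h3⟩ := ih e nd.2
      refine ⟨v, b, (LP.single v).app h1 ?_, d.1, h3⟩
      rw [hR.adj]
      refine ⟨?_, i, d.2, h2⟩
      rintro rfl
      exact nd.1 h1.memL

open scoped Classical in
lemma Route.par (hi : Function.Injective φ) (hd : ∀ v, ¬ (φ v).IsDiag)
    (h : Route (fun k v j => φ v = s(k, j)) k L k') (nd : (L.map Prod.fst).Nodup) :
    Par ((L.map Prod.fst).map φ).toFinset k k' := by
  induction h with
  | nil => exact Par.empty _
  | @cons k i k' v L d h ih =>
    simp only [List.map_cons, List.nodup_cons] at nd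
    have hne : k ≠ i := by
      have := hd v; rw [d] at this; simpa using this
    have := (Par.single hne).trans (ih nd.2)
    convert this using 1
    rw [← d]
    ext e
    have hv : φ v ∉ ((L.map Prod.fst).map φ).toFinset := by
      rw [List.mem_toFinset, List.mem_map_of_injective hi]; exact nd.1
    rw [mem_symmDiff, mem_singleton]
    simp only [List.map_cons, List.toFinset_cons, mem_insert]
    constructor
    · rintro (rfl | h)
      · exact .inl ⟨rfl, hv⟩
      · exact .inr ⟨h, by rintro rfl; exact hv h⟩
    · rintro (h | h)
      exacts [.inl h.1, .inr h.1]

lemma exists_max_nat (P : ℕ → Prop) (N : ℕ) (h : ∃ n, P n) (hb : ∀ n, P n → n ≤ N) :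
    ∃ n, P n ∧ ∀ m, P m → m ≤ n := by
  classical
  obtain ⟨n, hn⟩ := h
  exact ⟨Nat.findGreatest P N, Nat.findGreatest_spec (hb n hn) hn, fun m hm => Nat.le_findGreatest (hb m hm) hm⟩

lemma Clos.hc [Fintype V] {G : SimpleGraph V} (hR : Rep G φ) (hV : 3 ≤ Fintype.card V) {E : Finset (Sym2 K)}
    (hE : ∀ e, e ∈ E ↔ ∃ v, φ v = e) (h : Clos E E) : HC G := by
  classical
  obtain ⟨U, S, ⟨k0, hk0⟩, SE, SU, Sev, Sco, dom⟩ := h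
  have len : ∀ L : List (V × K), (L.map Prod.fst).Nodup → L.length ≤ Fintype.card V := by
    intro L hL
    have := hL.length_le_card
    simpa using this
  -- maximal trail
  obtain ⟨n, ⟨k, L, k', hL, hnd, hS, hkU, hlen⟩, hmax⟩ := exists_max_nat
    (fun n => ∃ k L k', Route (fun k v j => φ v = s(k, j)) k L k' ∧ (L.map Prod.fst).Nodup ∧
      (∀ v ∈ L.map Prod.fst, φ v ∈ S) ∧ k ∈ U ∧ L.length = n) (Fintype.card V)
    ⟨0, k0, [], k0, .nil _, by simp, by simp, hk0, rfl⟩ (by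
      rintro n ⟨k, L, k', h1, h2, h3, h4, rfl⟩; exact len L h2)
  have ext : ∀ k L k' v j, Route (fun k v j => φ v = s(k, j)) k L k' → (L.map Prod.fst).Nodup →
      (∀ v ∈ L.map Prod.fst, φ v ∈ S) → k ∈ U → L.length = n → φ v ∈ S → v ∉ L.map Prod.fst → φ v = s(k', j) → False := by
    intro k L k' v j h1 h2 h3 h4 h5 h6 h7 h8
    have := hmax (n + 1) ⟨k, L ++ [(v, j)], j, h1.app (.cons h8 (.nil _)), ?_, ?_, h4, by simp [h5]⟩
    · omega
    · rw [List.map_append, List.nodup_append]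
      refine ⟨h2, by simp, ?_⟩
      rintro a ha b hb rfl
      simp only [List.map_cons, List.map_nil, List.mem_singleton] at hb
      subst hb; exact h7 ha
    · intro w hw
      rw [List.map_append, List.mem_append] at hw
      rcases hw with hw | hw
      · exact h3 w hw
      · simp only [List.map_cons, List.map_nil, List.mem_singleton] at hw
        subst hw; exact h6
  have closed : k' = k := by
    by_contra hne
    have hp := hL.par hR.inj hR.nd hnd k'
    rw [if_neg hne, if_pos rfl] at hp
    have hs := Sev k'
    by_cases hex : ∃ e ∈ S, k' ∈ e ∧ e ∉ ((L.map Prod.fst).map φ).toFinset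
    · obtain ⟨e, he, hke, hno⟩ := hex
      obtain ⟨v, rfl⟩ := (hE e).1 (SE he)
      obtain ⟨j, hj⟩ := hke
      refine ext k L k' v j hL hnd hS hkU hlen he ?_ hj
      rwa [List.mem_toFinset, List.mem_map_of_injective hR.inj] at hno
    · push Not at hex
      have : dg S k' = dg ((L.map Prod.fst).map φ).toFinset k' := by
        unfold dg
        congr 1
        ext e
        simp only [mem_filter]
        constructor
        · rintro ⟨h1, h2⟩; exact ⟨hex e h1 h2, h2⟩
        · rintro ⟨h1, h2⟩
          rw [List.mem_toFinset, List.mem_map] at h1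
          obtain ⟨v, hv, rfl⟩ := h1
          exact ⟨hS v hv, h2⟩
      rw [this, hp] at hs
      simp at hs
  subst closed
  have visit : ∀ j ∈ U, j = k' ∨ j ∈ L.map Prod.snd := by
    by_contra hno
    push Not at hno
    obtain ⟨b, hbU, hb⟩ := hno
    obtain ⟨e, heS, a, hae, c, hce, haX, hcX⟩ := Sco {j | j = k' ∨ j ∈ L.map Prod.snd} ⟨k', hkU, .inl rfl⟩
      ⟨b, hbU, by simpa using hb⟩
    obtain ⟨v, rfl⟩ := (hE e).1 (SE heS)
    have hvL : v ∉ L.map Prod.fst := fun hv => hcX (hL.ends hv hce)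
    obtain ⟨L1, L2, rfl, r1, r2⟩ := hL.split haX
    have hac : a ≠ c := by rintro rfl; exact hcX haX
    have hp : (L2 ++ L1).Perm (L1 ++ L2) := List.perm_append_comm
    have hpm := hp.map Prod.fst
    refine ext a (L2 ++ L1) a v c (r2.app r1) (hpm.nodup_iff.2 hnd) (fun w hw => hS w (hpm.mem_iff.1 hw))
      (SU _ heS _ hae) (hp.length_eq.trans hlen) heS (fun h => hvL (hpm.mem_iff.1 h)) ?_
    exact ((Sym2.mem_and_mem_iff hac).1 ⟨hae, hce⟩)
  -- maximal loose route
  obtain ⟨m, ⟨k, M, hM, hMnd, hMv, hMlen⟩, hMmax⟩ := exists_max_nat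
    (fun n => ∃ k L, Route (fun k v j => k ∈ φ v ∧ j ∈ φ v) k L k ∧ (L.map Prod.fst).Nodup ∧
      (∀ j ∈ U, j = k ∨ j ∈ L.map Prod.snd) ∧ L.length = n) (Fintype.card V)
    ⟨n, k', L, hL.mono (fun k v j h => by rw [h]; simp), hnd, visit, hlen⟩ (by
      rintro n ⟨k, L, h1, h2, h3, rfl⟩; exact len L h2)
  have all : ∀ v, v ∈ M.map Prod.fst := by
    intro v
    by_contra hv
    obtain ⟨j, hj, hjU⟩ := dom (φ v) ((hE _).2 ⟨v, rfl⟩)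
    obtain ⟨L1, L2, e, r1, r2⟩ := hM.split (hMv j hjU)
    have hp : (L1 ++ (v, j) :: L2).Perm ((v, j) :: M) := by rw [e]; exact List.perm_middle
    have := hMmax (m + 1) ⟨k, L1 ++ (v, j) :: L2, r1.app (.cons ⟨hj, hj⟩ r2), ?_, ?_, ?_⟩
    · omega
    · rw [(hp.map Prod.fst).nodup_iff, List.map_cons, List.nodup_cons]; exact ⟨hv, hMnd⟩
    · intro i hi
      rcases hMv i hi with h | h
      · exact .inl h
      · right; rw [(hp.map Prod.snd).mem_iff]; simp only [List.map_cons, List.mem_cons]; exact .inr h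
    · rw [hp.length_eq, List.length_cons, hMlen]
  have hlen3 : 3 ≤ (M.map Prod.fst).length := by
    refine hV.trans ?_
    have : (Finset.univ : Finset V) ⊆ (M.map Prod.fst).toFinset := fun v _ => by rw [List.mem_toFinset]; exact all v
    exact (Finset.card_le_card this).trans (List.toFinset_card_le _)
  have hMne : M ≠ [] := by rintro rfl; simp at hlen3
  obtain ⟨a, b, h1, h2, h3⟩ := hM.lp hR hMne hMnd
  refine ⟨_, a, b, h1, ?_, hMnd, all⟩
  rw [hR.adj]
  refine ⟨?_, k, h3, h2⟩
  rintro rfl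
  obtain ⟨-, e1, e2⟩ := h1
  generalize M.map Prod.fst = l at *
  match l, hlen3 with
  | x :: y :: t, _ =>
    simp at e1
    subst e1
    rw [List.getLast?_cons_cons] at e2
    exact (List.nodup_cons.1 hMnd).1 (List.mem_of_getLast? e2)

end BR


namespace BR
open Finset
variable {V K : Type*}

open scoped Classical in
lemma Par.union {H D : Finset (Sym2 K)} {A B C : K} (h : Par H A B) (h' : Par D B C)
    (hd : ∀ e ∈ H, e ∉ D) : Par (H ∪ D) A C := by
  have := h.trans h'
  convert this using 1
  ext e
  simp only [mem_union, mem_symmDiff]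
  have := hd e
  tauto

/-- cut connectedness -/
def CutC (U : Set K) (S : Finset (Sym2 K)) : Prop :=
  ∀ X : Set K, (∃ a ∈ U, a ∈ X) → (∃ b ∈ U, b ∉ X) → ∃ e ∈ S, Cr X e

open scoped Classical in
lemma path_par {Γ : SimpleGraph K} {a b : K} (p : Γ.Walk a b) (hp : p.IsPath) :
    Par p.edges.toFinset a b ∧ CutC {k | k ∈ p.support} p.edges.toFinset := by
  induction p with
  | nil => 
    refine ⟨by simpa using Par.empty _, ?_⟩
    rintro X ⟨a, ha, haX⟩ ⟨b, hb, hbX⟩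
    simp at ha hb
    subst ha hb; exact absurd haX hbX
  | @cons a c b h p ih =>
    rw [SimpleGraph.Walk.cons_isPath_iff] at hp
    obtain ⟨i1, i2⟩ := ih hp.1
    have hno : ∀ e ∈ ({s(a, c)} : Finset (Sym2 K)), e ∉ p.edges.toFinset := by
      intro e he hh
      rw [mem_singleton] at he; subst he
      rw [List.mem_toFinset] at hh
      exact hp.2 (p.fst_mem_support_of_mem_edges hh)
    constructor
    · have := (Par.single h.ne).union i1 hno
      simpa [SimpleGraph.Walk.edges_cons] using this
    · intro X hX hY
      by_cases hs : (∃ a ∈ {k | k ∈ p.support}, a ∈ X) ∧ (∃ b ∈ {k | k ∈ p.support}, b ∉ X)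
      · obtain ⟨e, he, hc⟩ := i2 X hs.1 hs.2
        exact ⟨e, by simp at he ⊢; exact .inr he, hc⟩
      · refine ⟨s(a, c), by simp, ?_⟩
        have hc : c ∈ p.support := p.start_mem_support
        rw [cr_mk]
        obtain ⟨x, hx, hxX⟩ := hX
        obtain ⟨y, hy, hyX⟩ := hY
        simp only [SimpleGraph.Walk.support_cons, List.mem_cons, Set.mem_ofPred_eq] at hx hy hs
        by_cases hcX : c ∈ X
        · right
          refine ⟨hcX, ?_⟩
          rcases hy with rfl | hy
          · exact hyX
          · exact absurd ⟨⟨c, hc, hcX⟩, ⟨y, hy, hyX⟩⟩ hs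
        · left
          refine ⟨?_, hcX⟩
          rcases hx with rfl | hx
          · exact hxX
          · exact absurd ⟨⟨x, hx, hxX⟩, ⟨c, hc, hcX⟩⟩ hs

lemma CutC.join {U Z : Set K} {S P H : Finset (Sym2 K)} (h1 : CutC U S) (h2 : CutC Z P) (hS : S ⊆ H) (hP : P ⊆ H)
    {k r : K} (hk : k ∈ U) (hr : r ∈ Z) (he : s(k, r) ∈ H) : CutC (U ∪ Z) H := by
  intro X hX hY
  by_cases a1 : (∃ a ∈ U, a ∈ X) ∧ (∃ b ∈ U, b ∉ X)
  · obtain ⟨e, h, h'⟩ := h1 X a1.1 a1.2; exact ⟨e, hS h, h'⟩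
  by_cases a2 : (∃ a ∈ Z, a ∈ X) ∧ (∃ b ∈ Z, b ∉ X)
  · obtain ⟨e, h, h'⟩ := h2 X a2.1 a2.2; exact ⟨e, hP h, h'⟩
  refine ⟨_, he, ?_⟩
  rw [cr_mk]
  obtain ⟨x, hx, hxX⟩ := hX
  obtain ⟨y, hy, hyX⟩ := hY
  by_cases hkX : k ∈ X
  · left
    refine ⟨hkX, fun hrX => ?_⟩
    rcases hy with hy | hy
    · exact a1 ⟨⟨k, hk, hkX⟩, ⟨y, hy, hyX⟩⟩
    · exact a2 ⟨⟨r, hr, hrX⟩, ⟨y, hy, hyX⟩⟩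
  · right
    refine ⟨?_, hkX⟩
    by_contra hrX
    rcases hx with hx | hx
    · exact a1 ⟨⟨x, hx, hxX⟩, ⟨k, hk, hkX⟩⟩
    · exact a2 ⟨⟨x, hx, hxX⟩, ⟨r, hr, hrX⟩⟩

/-- usable form of 2-connectivity -/
def TC (G : SimpleGraph V) : Prop := ∀ v, ∀ X : Set V, (∃ a, a ≠ v ∧ a ∈ X) → (∃ b, b ≠ v ∧ b ∉ X) →
  ∃ a b, a ∈ X ∧ b ∉ X ∧ b ≠ v ∧ G.Adj a b

open scoped Classical in
lemma exists_good [Fintype K] {G : SimpleGraph V} {φ : V → Sym2 K} (hR : Rep G φ) (hT : TC G)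
    (hedge : ∃ u v, G.Adj u v) {E : Finset (Sym2 K)}
    (hE : ∀ e, e ∈ E ↔ ∃ v, φ v = e) (hn : ¬ Clos E E) : ∃ W H U A B, Good E W H U A B ∧ ¬ Clos E W := by
  have nd : ∀ e ∈ E, ¬ e.IsDiag := by
    intro e he; obtain ⟨v, rfl⟩ := (hE e).1 he; exact hR.nd v
  let dm : Set K → Finset (Sym2 K) := fun U => E.filter (fun e => ∃ k ∈ e, k ∈ U)
  have dmE' : ∀ U, dm U ⊆ E := fun U => filter_subset _ _
  have dmU' : ∀ U, ∀ e ∈ dm U, ∃ k ∈ e, k ∈ U := fun U e he => (mem_filter.1 he).2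
  let CP : Set K → Finset (Sym2 K) → Prop := fun U S => U.Nonempty ∧ S ⊆ E ∧ (∀ e ∈ S, ∀ k ∈ e, k ∈ U) ∧
    (∀ k, (dg S k : ZMod 2) = 0) ∧ CutC U S
  obtain ⟨n, ⟨U, S, hCP, hcard, hn2⟩, hmax⟩ := exists_max_nat (fun n => ∃ U S, CP U S ∧ (dm U).card = n ∧ 2 ≤ n) E.card
    (by
      obtain ⟨u, v, huv⟩ := hedge
      obtain ⟨uv, k, hu, hv⟩ := (hR.adj u v).1 huv
      refine ⟨_, {k}, ∅, ⟨⟨k, rfl⟩, by simp, by simp, by simp [dg], ?_⟩, rfl, ?_⟩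
      · rintro X ⟨a, rfl, ha⟩ ⟨b, rfl, hb⟩; exact absurd ha hb
      · have : ({φ u, φ v} : Finset (Sym2 K)) ⊆ dm {k} := by
          intro e he
          simp only [mem_insert, mem_singleton] at he
          simp only [dm, mem_filter]
          rcases he with rfl | rfl
          · exact ⟨(hE _).2 ⟨u, rfl⟩, k, hu, rfl⟩
          · exact ⟨(hE _).2 ⟨v, rfl⟩, k, hv, rfl⟩
        have h2 := card_le_card this
        rwa [card_pair (fun h => uv (hR.inj h))] at h2)
    (by rintro n ⟨U, S, -, rfl, -⟩; exact card_le_card (filter_subset _ _))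
  have hmax' : ∀ U' S', CP U' S' → ¬ (dm U ⊂ dm U') := by
    intro U' S' h1 h2
    have := card_lt_card h2
    have := hmax _ ⟨U', S', h1, rfl, by omega⟩
    omega
  obtain ⟨hUne, hSE, hSU, hSev, hSC⟩ := hCP
  -- an undominated edge
  obtain ⟨e0, he0, he0U⟩ : ∃ e ∈ E, ∀ k ∈ e, k ∉ U := by
    by_contra hno
    push Not at hno
    exact hn ⟨U, S, hUne, hSE, hSU, hSev, hSC, hno⟩
  induction e0 with | _ p q =>
  have hpU := he0U p (by simp)
  have hqU := he0U q (by simp)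
  have hpq : p ≠ q := by simpa using nd _ he0
  let Γ : SimpleGraph K := 
    { Adj := fun a b => s(a, b) ∈ E ∧ a ∉ U ∧ b ∉ U
      symm := ⟨fun a b h => ⟨by rw [Sym2.eq_swap]; exact h.1, h.2.2, h.2.1⟩⟩
      loopless := ⟨fun a h => nd _ h.1 (by simp)⟩ }
  have hΓ : ∀ a b, Γ.Adj a b ↔ s(a, b) ∈ E ∧ a ∉ U ∧ b ∉ U := fun a b => Iff.rfl
  let R : Set K := {r | Γ.Reachable p r}
  have hR1 : ∀ r ∈ R, r ∉ U ∧ ∃ r' ∈ R, s(r, r') ∈ E := by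
    intro r hr
    by_cases e : r = p
    · subst e
      exact ⟨hpU, q, SimpleGraph.Adj.reachable ((hΓ _ _).2 ⟨he0, hpU, hqU⟩), he0⟩
    · obtain ⟨w⟩ := (show Γ.Reachable p r from hr).symm
      cases w with
      | nil => exact absurd rfl e
      | @cons _ c _ h w =>
        exact ⟨h.2.1, c, (SimpleGraph.Walk.reachable w).symm, h.1⟩
  have hR2 : ∀ a b, a ∈ R → s(a, b) ∈ E → b ∉ U → b ∈ R := by
    intro a b ha hab hb
    exact (show Γ.Reachable p a from ha).trans (SimpleGraph.Adj.reachable ((hΓ _ _).2 ⟨hab, (hR1 a ha).1, hb⟩))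
  have pR : p ∈ R := SimpleGraph.Reachable.refl _
  have qR : q ∈ R := hR2 p q pR he0 hqU
  -- crossing vertices
  have cross : ∀ v, (∃ k ∈ φ v, k ∈ U) → ∃ v' r k, v' ≠ v ∧ φ v' = s(r, k) ∧ r ∈ R ∧ k ∈ U := by
    rintro v ⟨kv, hkv, hkvU⟩
    obtain ⟨w0, hw0⟩ := (hE _).1 he0
    obtain ⟨e1, he1, he1v⟩ : ∃ e ∈ dm U, e ≠ φ v := by
      have : 1 < (dm U).card := by omega
      exact exists_mem_ne this (φ v)
    simp only [dm, mem_filter] at he1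
    obtain ⟨he1, k1, hk1, hk1U⟩ := he1
    obtain ⟨w1, rfl⟩ := (hE _).1 he1
    have q1 : w0 ≠ v := by rintro rfl; rw [hw0] at hkv; exact he0U _ hkv hkvU
    have q2 : w0 ∈ {w | ∀ k ∈ φ w, k ∈ R} := by
      intro k hk
      rw [hw0, Sym2.mem_iff] at hk
      rcases hk with rfl | rfl
      · exact pR
      · exact qR
    have q3 : w1 ≠ v := by rintro rfl; exact he1v rfl
    have q4 : w1 ∉ {w | ∀ k ∈ φ w, k ∈ R} := fun h => (hR1 _ (h k1 hk1)).1 hk1U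
    obtain ⟨a, b, ha, hb, hbv, hab⟩ := hT v {w | ∀ k ∈ φ w, k ∈ R} ⟨w0, q1, q2⟩ ⟨w1, q3, q4⟩
    obtain ⟨-, k, hka, hkb⟩ := (hR.adj a b).1 hab
    have hkR : k ∈ R := ha k hka
    obtain ⟨j, hj⟩ := hkb
    refine ⟨b, k, j, hbv, hj, hkR, ?_⟩
    by_contra hjU
    apply hb
    have hjR : j ∈ R := hR2 k j hkR (by rw [← hj]; exact (hE _).2 ⟨b, rfl⟩) hjU
    intro i hi
    rw [hj, Sym2.mem_iff] at hi
    rcases hi with rfl | rfl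
    · exact hkR
    · exact hjR
  obtain ⟨v0, hv0⟩ : ∃ v, ∃ k ∈ φ v, k ∈ U := by
    have : 0 < (dm U).card := by omega
    obtain ⟨e, he⟩ := card_pos.1 this
    simp only [dm, mem_filter] at he
    obtain ⟨v, rfl⟩ := (hE _).1 he.1
    exact ⟨v, he.2⟩
  obtain ⟨v1, r1, k1, -, e1, hr1, hk1⟩ := cross v0 hv0
  obtain ⟨v2, r2, k2, hv21, e2, hr2, hk2⟩ := cross v1 ⟨k1, by simp [e1], hk1⟩
  have f1 : s(k1, r1) ∈ E := by rw [Sym2.eq_swap, ← e1]; exact (hE _).2 ⟨v1, rfl⟩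
  have f2 : s(r2, k2) ∈ E := by rw [← e2]; exact (hE _).2 ⟨v2, rfl⟩
  have f12 : s(k1, r1) ≠ s(r2, k2) := by
    rw [Sym2.eq_swap, ← e1, ← e2]; exact fun h => hv21 (hR.inj h).symm
  obtain ⟨w, hw⟩ := ((show Γ.Reachable p r1 from hr1).symm.trans hr2).exists_isPath
  obtain ⟨pP, cP⟩ := path_par w hw
  have wR : ∀ k ∈ w.support, k ∈ R := by
    intro k hk
    exact (show Γ.Reachable p r1 from hr1).trans ⟨w.takeUntil k hk⟩
  have wE : ∀ e ∈ w.edges.toFinset, e ∈ E ∧ ∀ k ∈ e, k ∈ w.support := by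
    intro e he
    rw [List.mem_toFinset] at he
    constructor
    · have := w.edges_subset_edgeSet he
      induction e with | _ x y => exact this.1
    · intro k hk
      obtain ⟨j, rfl⟩ := hk
      exact w.fst_mem_support_of_mem_edges he
  obtain ⟨Z, hZ⟩ : ∃ Z : Set K, Z = {k | k ∈ w.support} := ⟨_, rfl⟩
  rw [← hZ] at cP
  generalize w.edges.toFinset = P at pP cP wE
  have zR : ∀ k ∈ Z, k ∈ R := by intro k hk; rw [hZ] at hk; exact wR k hk
  have zE : ∀ e ∈ P, e ∈ E ∧ ∀ k ∈ e, k ∈ Z := by rw [hZ]; exact wE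
  have r1Z : r1 ∈ Z := by rw [hZ]; exact w.start_mem_support
  have r2Z : r2 ∈ Z := by rw [hZ]; exact w.end_mem_support
  have disjU : ∀ k ∈ Z, k ∉ U := fun k hk => (hR1 k (zR k hk)).1
  -- the ear
  have ear : Par (({s(k1, r1)} ∪ P) ∪ {s(r2, k2)}) k1 k2 := by
    refine ((Par.single (by simpa using nd _ f1)).union pP ?_).union (Par.single (by simpa using nd _ f2)) ?_
    · intro e he hP
      rw [mem_singleton] at he; subst he
      exact disjU _ ((zE _ hP).2 k1 (by simp)) hk1
    · intro e he he2
      rw [mem_singleton] at he2; subst he2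
      rcases mem_union.1 he with h | hP
      · rw [mem_singleton] at h; exact f12 h.symm
      · exact disjU _ ((zE _ hP).2 k2 (by simp)) hk2
  have parH : Par (S ∪ (({s(k1, r1)} ∪ P) ∪ {s(r2, k2)})) k1 k2 := by
    refine Par.union (B := k1) ?_ ear ?_
    · intro k
      have e1 : ∀ x : ZMod 2, x + x = 0 := by decide
      rw [e1]; exact hSev k
    · intro e he he'
      simp only [mem_union, mem_singleton] at he'
      rcases he' with (rfl | hP) | rfl
      · exact disjU r1 r1Z (hSU _ he r1 (by simp))
      · obtain ⟨k, hk⟩ : ∃ k, k ∈ e := by induction e with | _ x y => exact ⟨x, by simp⟩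
        exact disjU k ((zE e hP).2 k hk) (hSU _ he k hk)
      · exact disjU r2 r2Z (hSU _ he r2 (by simp))
  obtain ⟨H, hH⟩ : ∃ H, H = S ∪ (({s(k1, r1)} ∪ P) ∪ {s(r2, k2)}) := ⟨_, rfl⟩
  rw [← hH] at parH
  have SH : S ⊆ H := by rw [hH]; exact subset_union_left
  have PH : P ⊆ H := by rw [hH]; intro e he; simp [he]
  have HC' : CutC (U ∪ Z) H := hSC.join cP SH PH hk1 r1Z (by rw [hH]; simp)
  have HE : H ⊆ E := by
    rw [hH]; intro e he
    simp only [mem_union, mem_singleton] at he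
    rcases he with he | (rfl | he) | rfl
    exacts [hSE he, f1, (zE e he).1, f2]
  have HU : ∀ e ∈ H, ∀ k ∈ e, k ∈ U ∪ Z := by
    rw [hH]; intro e he k hk
    simp only [mem_union, mem_singleton] at he
    rcases he with he | (rfl | he) | rfl
    · exact .inl (hSU _ he k hk)
    · rcases Sym2.mem_iff.1 hk with rfl | rfl
      exacts [.inl hk1, .inr r1Z]
    · exact .inr ((zE e he).2 k hk)
    · rcases Sym2.mem_iff.1 hk with rfl | rfl
      exacts [.inr r2Z, .inl hk2]
  have bigger : dm U ⊂ dm (U ∪ Z) := by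
    rw [Finset.ssubset_iff_of_subset]
    · obtain ⟨h1, r', hr', hE'⟩ := hR1 r1 hr1
      refine ⟨s(r1, r'), ?_, ?_⟩
      · simp only [dm, mem_filter]; exact ⟨hE', r1, by simp, .inr r1Z⟩
      · simp only [dm, mem_filter, not_and]
        rintro - ⟨k, hk, hkU⟩
        rcases Sym2.mem_iff.1 hk with rfl | rfl
        exacts [h1 hkU, (hR1 _ hr').1 hkU]
    · intro e he
      simp only [dm, mem_filter] at he ⊢
      obtain ⟨h1, k, hk, hkU⟩ := he
      exact ⟨h1, k, hk, .inl hkU⟩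
  have k12 : k1 ≠ k2 := by
    intro e
    subst e
    refine hmax' (U ∪ Z) H ⟨⟨k1, .inl hk1⟩, HE, HU, ?_, HC'⟩ bigger
    intro k
    have e1 : ∀ x : ZMod 2, x + x = 0 := by decide
    rw [parH k, e1]
  have dmE : dm (U ∪ Z) ⊆ E := dmE' _
  have dmU : ∀ e ∈ dm (U ∪ Z), ∃ k ∈ e, k ∈ U ∪ Z := dmU' _
  refine ⟨dm (U ∪ Z), H, U ∪ Z, k1, k2, ⟨dmE, HE, nd, k12, .inl hk1, .inl hk2, HU, parH, ?_, ?_⟩, ?_⟩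
  · intro X g hX hY
    by_contra hno
    push Not at hno
    have hno' : ∀ e ∈ H, Cr X e → e = g := by
      intro e he hc; by_contra hne; exact hno e he hne hc
    obtain ⟨g', hg', hgX⟩ := HC' X hX hY
    obtain rfl := hno' g' hg' hgX
    have c1 := par_cut parH (fun e he => nd e (HE he)) X
    have : H.filter (Cr X) = {g'} := by
      ext e; simp only [mem_filter, mem_singleton]
      constructor
      · rintro ⟨h1, h2⟩; exact hno' e h1 h2
      · rintro rfl; exact ⟨hg', hgX⟩
    rw [this, card_singleton] at c1
    have sepU : ∃ e ∈ S, Cr X e := by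
      by_cases a1 : k1 ∈ X <;> by_cases a2 : k2 ∈ X
      · simp only [a1, a2, if_true] at c1; exact absurd c1 (by decide)
      · exact hSC X ⟨k1, hk1, a1⟩ ⟨k2, hk2, a2⟩
      · exact hSC X ⟨k2, hk2, a2⟩ ⟨k1, hk1, a1⟩
      · simp only [a1, a2, if_false] at c1; exact absurd c1 (by decide)
    obtain ⟨e, heS, heX⟩ := sepU
    obtain rfl := hno' e (SH heS) heX
    have pS : Par S k1 k1 := by
      intro k
      have e1 : ∀ x : ZMod 2, x + x = 0 := by decide
      rw [e1]; exact hSev k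
    have c2 := par_cut pS (fun e he => nd e (hSE he)) X
    have : S.filter (Cr X) = {e} := by
      ext e'; simp only [mem_filter, mem_singleton]
      constructor
      · rintro ⟨h1, h2⟩; exact hno' e' (SH h1) h2
      · rintro rfl; exact ⟨heS, hgX⟩
    have e1 : ∀ x : ZMod 2, x + x = 0 := by decide
    rw [this, card_singleton, e1] at c2
    exact absurd c2 (by decide)
  · exact dmU
  · rintro ⟨U', S', a1, a2, a3, a4, a5, a6⟩
    refine hmax' U' S' ⟨a1, a2, a3, a4, a5⟩ (lt_of_lt_of_le bigger ?_)
    intro e he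
    have := a6 e he
    simp only [dm, mem_filter] at he ⊢
    exact ⟨he.1, this⟩

lemma Rep.tri {G : SimpleGraph V} {φ : V → Sym2 K} (hR : Rep G φ) {E : Finset (Sym2 K)}
    (hE : ∀ e, e ∈ E ↔ ∃ v, φ v = e) : ∀ a b c, s(a, b) ∈ E → s(b, c) ∈ E → s(a, c) ∈ E → False := by
  intro a b c h1 h2 h3
  obtain ⟨u, hu⟩ := (hE _).1 h1
  obtain ⟨v, hv⟩ := (hE _).1 h2
  obtain ⟨w, hw⟩ := (hE _).1 h3
  have ab : a ≠ b := by have := hR.nd u; rw [hu] at this; simpa using this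
  have bc : b ≠ c := by have := hR.nd v; rw [hv] at this; simpa using this
  have ac : a ≠ c := by have := hR.nd w; rw [hw] at this; simpa using this
  have uv : u ≠ v := by rintro rfl; rw [hu, Sym2.eq_iff] at hv; grind
  have uw : u ≠ w := by rintro rfl; rw [hu, Sym2.eq_iff] at hw; grind
  have vw : v ≠ w := by rintro rfl; rw [hv, Sym2.eq_iff] at hw; grind
  have := hR.cl u v w b uv (by simp [hu]) (by simp [hv]) (.inr ((hR.adj _ _).2 ⟨uw, a, by simp [hu], by simp [hw]⟩))
    (.inr ((hR.adj _ _).2 ⟨vw, c, by simp [hv], by simp [hw]⟩))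
  rw [hw, Sym2.mem_iff] at this
  rcases this with h | h
  exacts [ab h.symm, bc h]

lemma exists_mn [Fintype K] {G : SimpleGraph V} {φ : V → Sym2 K} (hR : Rep G φ) (hT : TC G)
    (hedge : ∃ u v, G.Adj u v) {E : Finset (Sym2 K)}
    (hE : ∀ e, e ∈ E ↔ ∃ v, φ v = e) (hn : ¬ Clos E E) : ∃ W H U A B, Mn E W H U A B := by
  classical
  obtain ⟨W, H, U, A, B, h1, h2⟩ := exists_good hR hT hedge hE hn
  have P1 : ∃ n, ∃ W H U A B, Good E W H U A B ∧ ¬ Clos E W ∧ W.card = n := ⟨_, W, H, U, A, B, h1, h2, rfl⟩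
  have P2 : ∃ m, ∃ W H U A B, Good E W H U A B ∧ ¬ Clos E W ∧ W.card = Nat.find P1 ∧ H.card = m := by
    obtain ⟨W, H, U, A, B, h1, h2, h3⟩ := Nat.find_spec P1
    exact ⟨_, W, H, U, A, B, h1, h2, h3, rfl⟩
  obtain ⟨W, H, U, A, B, h1, h2, h3, h4⟩ := Nat.find_spec P2
  refine ⟨W, H, U, A, B, h1, h2, hR.tri hE, ?_, ?_⟩
  · intro W' hW'
    by_contra hcl
    have := Nat.find_min' P1 ⟨W', H, U, A, B, ⟨hW'.1.trans h1.WE, h1.HE, h1.nd, h1.AB, h1.AU, h1.BU, h1.ends, h1.par,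
      h1.c2, fun e he => h1.dom e (hW'.1 he)⟩, hcl, rfl⟩
    have := card_lt_card hW'
    omega
  · intro H' U' A' B' hg
    rw [h4]
    exact Nat.find_min' P2 ⟨W, H', U', A', B', hg, h2, h3, rfl⟩

end BR

namespace BR
open Finset

variable {V K : Type*}

/-- `S` is cut-connected in `G`. -/
def CutS (G : SimpleGraph V) (S : Set V) : Prop := ∀ X : Set V, (∃ x ∈ S, x ∈ X) → (∃ y ∈ S, y ∉ X) →
  ∃ x ∈ S, x ∈ X ∧ ∃ y ∈ S, y ∉ X ∧ G.Adj x y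

/-- a sequence from `x` to `y` inside `S`. -/
def Sq (G : SimpleGraph V) (S : Set V) (x y : V) (m : ℕ) (c : ℕ → V) : Prop :=
  c 0 = x ∧ c m = y ∧ (∀ k ≤ m, c k ∈ S) ∧ (∀ k < m, G.Adj (c k) (c (k + 1)))

lemma exists_sq {G : SimpleGraph V} {S : Set V} (hS : CutS G S) {x y : V} (hx : x ∈ S) (hy : y ∈ S) :
    ∃ m c, Sq G S x y m c := by
  by_contra hno
  obtain ⟨u, hu, ⟨m, c, h0, hm, hcS, hcA⟩, v, hv, hvX, huv⟩ := hS {z | ∃ m c, Sq G S x z m c}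
    ⟨x, hx, 0, fun _ => x, rfl, rfl, fun _ _ => hx, fun k hk => absurd hk (by omega)⟩ ⟨y, hy, hno⟩
  apply hvX
  refine ⟨m + 1, fun k => if k ≤ m then c k else v, by simp [h0], by simp, ?_, ?_⟩
  · intro k hk
    by_cases h : k ≤ m
    · simpa [h] using hcS k h
    · simpa [h] using hv
  · intro k hk
    by_cases h : k + 1 ≤ m
    · have h' : k ≤ m := by omega
      simpa [h, h'] using hcA k (by omega)
    · have h' : k = m := by omega
      subst h'
      simpa [hm] using huv

lemma exists_isq {G : SimpleGraph V} {S : Set V} (hS : CutS G S) {x y : V} (hx : x ∈ S) (hy : y ∈ S) :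
    ∃ m c, Sq G S x y m c ∧ ∀ i j, i < j → j ≤ m → c i ≠ c j ∧ (G.Adj (c i) (c j) → j = i + 1) := by
  classical
  have hex : ∃ m, ∃ c, Sq G S x y m c := exists_sq hS hx hy
  obtain ⟨c, hc⟩ := Nat.find_spec hex
  have hmin : ∀ m' c', Sq G S x y m' c' → Nat.find hex ≤ m' := fun m' c' h => Nat.find_min' hex ⟨c', h⟩
  generalize Nat.find hex = m at hc hmin
  refine ⟨m, c, hc, ?_⟩
  obtain ⟨h0, hm, hcS, hcA⟩ := hc
  intro i j hij hjm
  constructor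
  · intro e
    have := hmin (m - (j - i)) (fun k => if k ≤ i then c k else c (k + (j - i))) ⟨by simp [h0], ?_, ?_, ?_⟩
    · omega
    · by_cases h : j = m
      · have : m - (j - i) = i := by omega
        rw [this]; simp only [le_refl, if_true]; rw [e, h, hm]
      · have h1 : ¬ (m - (j - i) ≤ i) := by omega
        have h2 : m - (j - i) + (j - i) = m := by omega
        simp only [h1, if_false, h2, hm]
    · intro k hk
      by_cases h : k ≤ i
      · simp only [h, if_true]; exact hcS k (by omega)
      · simp only [h, if_false]; exact hcS _ (by omega)
    · intro k hk
      by_cases h : k + 1 ≤ i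
      · have h' : k ≤ i := by omega
        simp only [h, h', if_true]; exact hcA k (by omega)
      · by_cases h' : k ≤ i
        · have : k = i := by omega
          subst this
          have h3 : k + 1 + (j - k) = j + 1 := by omega
          simp only [h, le_refl, if_true, if_false, h3, e]; exact hcA j (by omega)
        · have h3 : k + 1 + (j - i) = k + (j - i) + 1 := by omega
          simp only [h, h', if_false, h3]; exact hcA _ (by omega)
  · intro e
    by_contra hj
    have := hmin (m - (j - i - 1)) (fun k => if k ≤ i then c k else c (k + (j - i - 1))) ⟨by simp [h0], ?_, ?_, ?_⟩
    · omega
    · have h1 : ¬ (m - (j - i - 1) ≤ i) := by omega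
      have h2 : m - (j - i - 1) + (j - i - 1) = m := by omega
      simp only [h1, if_false, h2, hm]
    · intro k hk
      by_cases h : k ≤ i
      · simp only [h, if_true]; exact hcS k (by omega)
      · simp only [h, if_false]; exact hcS _ (by omega)
    · intro k hk
      by_cases h : k + 1 ≤ i
      · have h' : k ≤ i := by omega
        simp only [h, h', if_true]; exact hcA k (by omega)
      · by_cases h' : k ≤ i
        · have : k = i := by omega
          subst this
          have h3 : k + 1 + (j - k - 1) = j := by omega
          simp only [h, le_refl, if_true, if_false, h3]; exact e
        · have h3 : k + 1 + (j - i - 1) = k + (j - i - 1) + 1 := by omega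
          simp only [h, h', if_false, h3]; exact hcA _ (by omega)

/-- the net with triangle `t` and endvertices `p`. -/
def Net (G : SimpleGraph V) (t p : Fin 3 → V) : Prop :=
  (∀ i j, i ≠ j → G.Adj (t i) (t j)) ∧ (∀ i, G.Adj (t i) (p i)) ∧
  (∀ i j, i ≠ j → ¬ G.Adj (t i) (p j)) ∧ (∀ i j, ¬ G.Adj (p i) (p j))

lemma exists_net {G : SimpleGraph V} (hc : NoClaw G) {S : Set V} (hS : CutS G S) {a b : Fin 3 → V}
    (ainj : Function.Injective a) (ha : ∀ i, a i ∈ S) (hb : ∀ i, b i ∉ S) (hab : ∀ i, G.Adj (a i) (b i))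
    (hu : ∀ i, ∀ x ∈ S, G.Adj x (b i) → x = a i) (hbb : ∀ i j, ¬ G.Adj (b i) (b j))
    (hcl : ∀ x y w, x ≠ y → x ∈ S → y ∈ S → G.Adj x w → G.Adj y w → w ∈ S) :
    ∃ t p, Net G t p ∧ (∀ i, t i ∈ S) ∧
      ∀ i, p i = b i ∨ p i = a i ∨ (p i ∈ S ∧ ∀ w, G.Adj (p i) w → w ∈ S) := by
  have hP : ∀ x y z, x ∈ S → y ∈ S → z ∈ S → G.Adj x y → G.Adj x z → y ≠ z → ¬ G.Adj y z →
      ∀ w, G.Adj x w → w ∈ S := by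
    intro x y z xS yS zS xy xz yz nyz w xw
    by_contra hw
    rcases hc x y z w xy xz xw yz (by rintro rfl; exact hw yS) (by rintro rfl; exact hw zS) with h | h | h
    · exact nyz h
    · exact hw (hcl x y w xy.ne xS yS xw h)
    · exact hw (hcl x z w xz.ne xS zS xw h)
  have bne : ∀ i j, i ≠ j → b i ≠ b j := by
    intro i j hij e
    have := hab i
    rw [e] at this
    exact hij (ainj (hu j _ (ha i) this))
  -- the extended induced path
  obtain ⟨M, d, hM, d0, d1, dM1, dM, dS, dadj, dind⟩ : ∃ (M : ℕ) (d : ℕ → V), 3 ≤ M ∧ d 0 = b 0 ∧ d 1 = a 0 ∧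
      d (M - 1) = a 1 ∧ d M = b 1 ∧ (∀ k, 0 < k → k < M → d k ∈ S) ∧ (∀ k < M, G.Adj (d k) (d (k + 1))) ∧
      ∀ i j, i < j → j ≤ M → d i ≠ d j ∧ (G.Adj (d i) (d j) → j = i + 1) := by
    obtain ⟨m, c, ⟨c0, cm, cS, cA⟩, cI⟩ := exists_isq hS (ha 0) (ha 1)
    have hm : 0 < m := by
      rcases Nat.eq_zero_or_pos m with h | h
      · subst h; rw [c0] at cm; exact absurd (ainj cm) (by decide)
      · exact h
    obtain ⟨d, dd⟩ : ∃ d : ℕ → V, d = fun k => if k = 0 then b 0 else if k ≤ m + 1 then c (k - 1) else b 1 := ⟨_, rfl⟩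
    have e0 : d 0 = b 0 := by simp [dd]
    have eM : d (m + 2) = b 1 := by simp [dd]
    have ek : ∀ k ≤ m, d (k + 1) = c k := by intro k hk; simp [dd, hk]
    have eS : ∀ k, 0 < k → k < m + 2 → d k ∈ S := by
      intro k h1 h2
      obtain ⟨l, rfl⟩ : ∃ l, k = l + 1 := ⟨k - 1, by omega⟩
      rw [ek l (by omega)]; exact cS l (by omega)
    refine ⟨m + 2, d, by omega, e0, by rw [ek 0 (by omega), c0], by
      have : m + 2 - 1 = m + 1 := by omega
      rw [this, ek m le_rfl, cm], eM, eS, ?_, ?_⟩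
    · intro k hk
      rcases Nat.eq_zero_or_pos k with rfl | h
      · rw [e0, ek 0 (by omega), c0]; exact (hab 0).symm
      · obtain ⟨l, rfl⟩ : ∃ l, k = l + 1 := ⟨k - 1, by omega⟩
        by_cases h : l = m
        · subst h; rw [eM, ek l le_rfl, cm]; exact hab 1
        · rw [ek l (by omega), ek (l + 1) (by omega)]; exact cA l (by omega)
    · intro i j hij hj
      rcases Nat.eq_zero_or_pos i with rfl | hi
      · by_cases h : j = m + 2
        · subst h; rw [e0, eM]
          exact ⟨bne 0 1 (by decide), fun h => absurd h (hbb _ _)⟩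
        · have jS := eS j (by omega) (by omega)
          refine ⟨fun h => hb 0 (by rw [← e0, h]; exact jS), fun h => ?_⟩
          rw [e0] at h
          have := hu 0 _ jS h.symm
          obtain ⟨l, rfl⟩ : ∃ l, j = l + 1 := ⟨j - 1, by omega⟩
          rw [ek l (by omega), ← c0] at this
          by_contra hl
          exact (cI 0 l (by omega) (by omega)).1 this.symm
      · have iS := eS i hi (by omega)
        obtain ⟨l, rfl⟩ : ∃ l, i = l + 1 := ⟨i - 1, by omega⟩
        by_cases h : j = m + 2
        · subst h
          refine ⟨fun h => hb 1 (by rw [← eM, ← h]; exact iS), fun h => ?_⟩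
          rw [eM] at h
          have := hu 1 _ iS h
          rw [ek l (by omega), ← cm] at this
          by_contra hl
          exact (cI l m (by omega) (by omega)).1 this
        · obtain ⟨k, rfl⟩ : ∃ k, j = k + 1 := ⟨j - 1, by omega⟩
          rw [ek l (by omega), ek k (by omega)]
          have := cI l k (by omega) (by omega)
          exact ⟨this.1, fun h => by have := this.2 h; omega⟩
  have bd : ∀ k ≤ M, d k ≠ a 2 → ¬ G.Adj (d k) (b 2) := by
    intro k hk hne h
    rcases Nat.eq_zero_or_pos k with rfl | h1
    · rw [d0] at h; exact hbb _ _ h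
    · by_cases h2 : k = M
      · subst h2; rw [dM] at h; exact hbb _ _ h
      · exact hne (hu 2 _ (dS k h1 (by omega)) h)
  have bdne : ∀ k ≤ M, d k ≠ b 2 := by
    intro k hk h
    rcases Nat.eq_zero_or_pos k with rfl | h1
    · rw [d0] at h; exact bne _ _ (by decide) h
    · by_cases h2 : k = M
      · subst h2; rw [dM] at h; exact bne _ _ (by decide) h
      · exact hb 2 (h ▸ dS k h1 (by omega))
  have a2d : ∀ k ≤ M, d k ≠ a 2 := by
    intro k hk e
    have k0 : k ≠ 0 := by rintro rfl; rw [d0] at e; exact hb 0 (e ▸ ha 2)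
    have kM : k ≠ M := by rintro rfl; rw [dM] at e; exact hb 1 (e ▸ ha 2)
    obtain ⟨l, rfl⟩ : ∃ l, k = l + 1 := ⟨k - 1, by omega⟩
    have i1 := dind l (l + 1) (by omega) (by omega)
    have i2 := dind (l + 1) (l + 2) (by omega) (by omega)
    have i3 := dind l (l + 2) (by omega) (by omega)
    rcases hc (d (l + 1)) (d l) (d (l + 2)) (b 2) (dadj l (by omega)).symm (dadj (l + 1) (by omega))
      (by rw [e]; exact hab 2) i3.1 (bdne _ (by omega)) (bdne _ (by omega)) with h | h | h
    · have := i3.2 h; omega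
    · exact bd l (by omega) (by rw [← e]; exact i1.1) h
    · exact bd (l + 2) (by omega) (by rw [← e]; exact i2.1.symm) h
  -- the third branch
  obtain ⟨t, p, tS, td, ⟨k0, hk0, hk0t⟩, tp, pd, pt⟩ : ∃ t p, t ∈ S ∧ (∀ k ≤ M, d k ≠ t) ∧
      (∃ k ≤ M, G.Adj t (d k)) ∧ G.Adj t p ∧ (∀ k ≤ M, d k ≠ p ∧ ¬ G.Adj p (d k)) ∧
      (p = b 2 ∨ p = a 2 ∨ (p ∈ S ∧ ∀ w, G.Adj p w → w ∈ S)) := by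
    by_cases h : ∃ k ≤ M, G.Adj (a 2) (d k)
    · exact ⟨a 2, b 2, ha 2, a2d, h, hab 2, fun k hk => ⟨bdne k hk, fun h => bd k hk (a2d k hk) h.symm⟩, .inl rfl⟩
    · obtain ⟨X, hX⟩ : ∃ X : Set V, ∀ x, x ∈ X ↔ (∃ k ≤ M, d k = x) ∨ ∃ k ≤ M, G.Adj x (d k) :=
        ⟨{x | (∃ k ≤ M, d k = x) ∨ ∃ k ≤ M, G.Adj x (d k)}, fun x => Iff.rfl⟩
      have a2X : a 2 ∉ X := by
        rw [hX]; rintro (⟨k, hk, e⟩ | h')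
        · exact a2d k hk e
        · exact h h'
      have key : ∀ x y, x ∈ S → x ∈ X → y ∉ X → G.Adj x y → 
          (y = b 2 ∨ y = a 2 ∨ (y ∈ S ∧ ∀ w, G.Adj y w → w ∈ S)) → 
          ∃ t p, t ∈ S ∧ (∀ k ≤ M, d k ≠ t) ∧
      (∃ k ≤ M, G.Adj t (d k)) ∧ G.Adj t p ∧ (∀ k ≤ M, d k ≠ p ∧ ¬ G.Adj p (d k)) ∧
      (p = b 2 ∨ p = a 2 ∨ (p ∈ S ∧ ∀ w, G.Adj p w → w ∈ S)) := by
        intro x y xS xX yX xy hy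
        rw [hX] at yX
        push Not at yX
        have nx : ∀ k ≤ M, d k ≠ x := by
          rintro k hk rfl; exact yX.2 k hk xy.symm
        refine ⟨x, y, xS, nx, ?_, xy, fun k hk => ⟨yX.1 k hk, yX.2 k hk⟩, hy⟩
        rcases (hX x).1 xX with ⟨k, hk, e⟩ | h'
        · exact absurd e (nx k hk)
        · exact h'
      by_cases h2 : ∃ x ∈ S, x ∈ X ∧ G.Adj x (a 2)
      · obtain ⟨x, xS, xX, hx⟩ := h2
        exact key x (a 2) xS xX a2X hx (.inr (.inl rfl))
      · obtain ⟨p, pS, hpX, q, qS, hqX, hpq⟩ := hS {y | y ∈ X ∨ ∃ x ∈ S, x ∈ X ∧ G.Adj x y}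
          ⟨a 0, ha 0, .inl ((hX _).2 (.inl ⟨1, by omega, d1⟩))⟩
          ⟨a 2, ha 2, by rintro (h' | h'); exacts [a2X h', h2 h']⟩
        have hqX1 : q ∉ X := fun h => hqX (.inl h)
        have hqX2 : ∀ x ∈ S, x ∈ X → ¬ G.Adj x q := fun x h1 h2 h3 => hqX (.inr ⟨x, h1, h2, h3⟩)
        have hpX1 : p ∉ X := fun h => hqX2 p pS h hpq
        rcases hpX with h' | ⟨x, xS, xX, hx⟩
        · exact absurd h' hpX1
        · exact key x p xS xX hpX1 hx (.inr (.inr ⟨pS, hP p x q pS xS qS hx.symm hpq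
            (by rintro rfl; exact hqX1 xX) (hqX2 x xS xX)⟩))
  -- neighbours of `t` on the path
  classical
  have hex : ∃ k, k ≤ M ∧ G.Adj t (d k) := ⟨k0, hk0, hk0t⟩
  obtain ⟨kM, tk⟩ := Nat.find_spec hex
  have kmin : ∀ l, l < Nat.find hex → l ≤ M → ¬ G.Adj t (d l) := fun l hl h1 h2 => Nat.find_min hex hl ⟨h1, h2⟩
  generalize Nat.find hex = k at kM tk kmin
  have t0 : ¬ G.Adj t (d 0) := by
    intro h; rw [d0] at h
    exact td 1 (by omega) (by rw [d1, hu 0 t tS h])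
  have tM : ¬ G.Adj t (d M) := by
    intro h; rw [dM] at h
    exact td (M - 1) (by omega) (by rw [dM1, hu 1 t tS h])
  have k0 : k ≠ 0 := by rintro rfl; exact t0 tk
  have kM' : k ≠ M := by rintro rfl; exact tM tk
  obtain ⟨l, rfl⟩ : ∃ l, k = l + 1 := ⟨k - 1, by omega⟩
  have tl : ¬ G.Adj t (d l) := kmin l (by omega) (by omega)
  have i3 := dind l (l + 2) (by omega) (by omega)
  have tk1 : G.Adj t (d (l + 2)) := by
    rcases hc (d (l + 1)) (d l) (d (l + 2)) t (dadj l (by omega)).symm (dadj (l + 1) (by omega))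
      tk.symm i3.1 (td _ (by omega)) (td _ (by omega)) with h | h | h
    · have := i3.2 h; omega
    · exact absurd h.symm tl
    · exact h.symm
  have lM : l + 2 ≠ M := by intro h; rw [h] at tk1; exact tM tk1
  have tk2 : ¬ G.Adj t (d (l + 3)) := by
    intro h
    have i4 := dind (l + 1) (l + 3) (by omega) (by omega)
    rcases hc t (d (l + 1)) (d (l + 3)) p tk h tp i4.1 (pd _ (by omega)).1 (pd _ (by omega)).1 with h | h | h
    · have := i4.2 h; omega
    · exact (pd _ (by omega)).2 h.symm
    · exact (pd _ (by omega)).2 h.symm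
  have n02 : ¬ G.Adj (d l) (d (l + 2)) := fun h => by have := i3.2 h; omega
  have n03 : ¬ G.Adj (d l) (d (l + 3)) := fun h => by
    have := (dind l (l + 3) (by omega) (by omega)).2 h; omega
  have n13 : ¬ G.Adj (d (l + 1)) (d (l + 3)) := fun h => by
    have := (dind (l + 1) (l + 3) (by omega) (by omega)).2 h; omega
  have a01 := dadj l (by omega)
  have a12 := dadj (l + 1) (by omega)
  have a23 := dadj (l + 2) (by omega)
  have p0 := (pd l (by omega)).2
  have p1 := (pd (l + 1) (by omega)).2
  have p2 := (pd (l + 2) (by omega)).2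
  have p3 := (pd (l + 3) (by omega)).2
  refine ⟨![d (l + 1), d (l + 2), t], ![d l, d (l + 3), p], ⟨?_, ?_, ?_, ?_⟩, ?_, ?_⟩
  · intro i j hij
    fin_cases i <;> fin_cases j <;> first | exact absurd rfl hij | skip
    exacts [a12, tk.symm, a12.symm, tk1.symm, tk, tk1]
  · intro i
    fin_cases i
    exacts [a01.symm, a23, tp]
  · intro i j hij
    fin_cases i <;> fin_cases j <;> first | exact absurd rfl hij | skip
    exacts [n13, fun h => p1 h.symm, fun h => n02 h.symm, fun h => p2 h.symm, tl, tk2]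
  · intro i j
    fin_cases i <;> fin_cases j
    exacts [G.loopless.irrefl _, n03, fun h => p0 h.symm, fun h => n03 h.symm, G.loopless.irrefl _, fun h => p3 h.symm,
      p0, p3, G.loopless.irrefl _]
  · intro i
    fin_cases i
    exacts [dS _ (by omega) (by omega), dS _ (by omega) (by omega), tS]
  · intro i
    fin_cases i
    · change d l = b 0 ∨ d l = a 0 ∨ (d l ∈ S ∧ ∀ w, G.Adj (d l) w → w ∈ S)
      by_cases h0 : l = 0
      · left; rw [h0, d0]
      by_cases h1 : l = 1
      · right; left; rw [h1, d1]
      right; right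
      obtain ⟨r, rfl⟩ : ∃ r, l = r + 1 := ⟨l - 1, by omega⟩
      have := dind r (r + 2) (by omega) (by omega)
      exact ⟨dS _ (by omega) (by omega), hP _ (d r) (d (r + 2)) (dS _ (by omega) (by omega)) (dS _ (by omega) (by omega))
        (dS _ (by omega) (by omega)) (dadj r (by omega)).symm a01 this.1 (fun h => by have := this.2 h; omega)⟩
    · change d (l + 3) = b 1 ∨ d (l + 3) = a 1 ∨ (d (l + 3) ∈ S ∧ ∀ w, G.Adj (d (l + 3)) w → w ∈ S)
      by_cases h0 : l + 3 = M
      · left; rw [h0, dM]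
      by_cases h1 : l + 3 = M - 1
      · right; left; rw [h1, dM1]
      right; right
      have := dind (l + 2) (l + 4) (by omega) (by omega)
      exact ⟨dS _ (by omega) (by omega), hP _ (d (l + 2)) (d (l + 4)) (dS _ (by omega) (by omega)) (dS _ (by omega) (by omega))
        (dS _ (by omega) (by omega)) a23.symm (dadj (l + 3) (by omega)) this.1 (fun h => by have := this.2 h; omega)⟩
    · exact pt

end BR

namespace BR
open Finset

variable {V K : Type*}

lemma Net.ne {G : SimpleGraph V} {t p : Fin 3 → V} (h : Net G t p) : ∀ i j, i ≠ j → p i ≠ p j := by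
  intro i j hij e
  exact h.2.2.1 i j hij (e ▸ h.2.1 i)

open scoped Classical in
/-- the closed neighbourhood -/
noncomputable def Nc [Fintype V] (G : SimpleGraph V) (x : V) : Finset V := insert x (univ.filter (G.Adj x))

lemma mem_Nc [Fintype V] {G : SimpleGraph V} {x y : V} : y ∈ Nc G x ↔ y = x ∨ G.Adj x y := by
  simp [Nc]

open scoped Classical in
lemma card_Nc [Fintype V] (G : SimpleGraph V) (x : V) : (Nc G x).card = (univ.filter (G.Adj x)).card + 1 := by
  rw [Nc, card_insert_of_notMem (by simp)]

open scoped Classical in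
lemma Net.count [Fintype V] {G : SimpleGraph V} (hc : NoClaw G) {t p : Fin 3 → V} (h : Net G t p)
    {S : Finset V} (ht : ∀ i, t i ∈ S) : ∑ i, (Nc G (p i) ∩ S).card + 3 ≤ 2 * S.card := by
  have tinj : Function.Injective t := by
    intro i j e
    by_contra hij
    have := h.1 i j hij
    rw [e] at this
    exact G.loopless.irrefl _ this
  have e1 : ∀ i, (Nc G (p i) ∩ S).card = ∑ x ∈ S, if x ∈ Nc G (p i) then 1 else 0 := by
    intro i
    rw [inter_comm, ← filter_mem_eq_inter, card_filter]
  have e2 : 3 = ∑ x ∈ S, if x ∈ univ.image t then 1 else 0 := by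
    rw [← card_filter, filter_mem_eq_inter, inter_eq_right.2, card_image_of_injective _ tinj]
    · rfl
    · intro x hx
      obtain ⟨i, -, rfl⟩ := mem_image.1 hx
      exact ht i
  have hadj : ∀ x i j, i ≠ j → x ∈ Nc G (p i) → x ∈ Nc G (p j) → G.Adj x (p i) := by
    intro x i j hij h1 h2
    rw [mem_Nc] at h1 h2
    rcases h1 with rfl | h1
    · rcases h2 with e | h2
      · exact absurd e (h.ne i j hij)
      · exact absurd h2 (h.2.2.2 _ _)
    · exact h1.symm
  have ht' : ∀ i j, i ≠ j → t i ∉ Nc G (p j) := by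
    intro i j hij h1
    rw [mem_Nc] at h1
    rcases h1 with e | h1
    · have := h.2.1 i
      rw [e] at this
      exact h.2.2.2 _ _ this
    · exact h.2.2.1 i j hij h1.symm
  simp only [e1]
  rw [Fin.sum_univ_three, ← sum_add_distrib, ← sum_add_distrib]
  calc _ = _ := congrArg (_ + ·) e2
    _ = _ := sum_add_distrib.symm
    _ ≤ ∑ x ∈ S, 2 := ?_
    _ = 2 * S.card := by rw [sum_const, smul_eq_mul, mul_comm]
  refine sum_le_sum ?_
  intro x _
  by_cases hx : x ∈ univ.image t
  · obtain ⟨i, -, rfl⟩ := mem_image.1 hx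
    have := ht' i
    fin_cases i
    · have h1 := this 1 (by decide)
      have h2 := this 2 (by decide)
      simp only [Fin.zero_eta, Fin.isValue] at h1 h2 ⊢
      simp only [h1, h2, if_false]
      split_ifs <;> omega
    · have h1 := this 0 (by decide)
      have h2 := this 2 (by decide)
      simp only [Fin.mk_one, Fin.isValue] at h1 h2 ⊢
      simp only [h1, h2, if_false]
      split_ifs <;> omega
    · have h1 := this 0 (by decide)
      have h2 := this 1 (by decide)
      simp only [Fin.reduceFinMk, Fin.isValue] at h1 h2 ⊢
      simp only [h1, h2, if_false]
      split_ifs <;> omega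
  · simp only [hx, if_false]
    by_cases q0 : x ∈ Nc G (p 0)
    · by_cases q1 : x ∈ Nc G (p 1)
      · by_cases q2 : x ∈ Nc G (p 2)
        · exfalso
          rcases hc x (p 0) (p 1) (p 2) (hadj x 0 1 (by decide) q0 q1) (hadj x 1 0 (by decide) q1 q0)
            (hadj x 2 0 (by decide) q2 q0) (h.ne _ _ (by decide)) (h.ne _ _ (by decide)) (h.ne _ _ (by decide)) with h' | h' | h'
          all_goals exact h.2.2.2 _ _ h'
        · simp only [q2, if_false]; split_ifs <;> omega
      · simp only [q1, if_false]; split_ifs <;> omega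
    · simp only [q0, if_false]; split_ifs <;> omega

open scoped Classical in
lemma spider [Fintype V] {G G' : SimpleGraph V} (hc : NoClaw G) (hle : G ≤ G') (hCC : CC G G')
    {φ : V → Sym2 K} (hR : Rep G' φ) {E : Finset (Sym2 K)} (hE : ∀ e, e ∈ E ↔ ∃ v, φ v = e)
    (hN : ∀ t p, Net G t p → ∀ i, Fintype.card V ≤ 3 * (univ.filter (G.Adj (p i))).card + 2) : SpiderIneq E := by
  intro A u v uinj vinj uA vA uv hAu huv
  choose a ha using fun i => (hE _).1 (hAu i)
  choose b hb using fun i => (hE _).1 (huv i)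
  obtain ⟨N, hNd⟩ : ∃ N : K → Finset V, ∀ k x, x ∈ N k ↔ k ∈ φ x :=
    ⟨fun k => univ.filter (fun x => k ∈ φ x), fun k x => by simp⟩
  have himg : E = univ.image φ := by
    ext e; rw [hE]; simp
  have hdg : ∀ k, dg E k = (N k).card := by
    intro k
    rw [← card_image_of_injective _ hR.inj]
    unfold dg
    congr 1
    ext e
    simp only [mem_filter, hE, mem_image, hNd]
    constructor
    · rintro ⟨⟨x, rfl⟩, h⟩; exact ⟨x, h, rfl⟩
    · rintro ⟨x, h, rfl⟩; exact ⟨⟨x, rfl⟩, h⟩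
  have hEc : E.card = Fintype.card V := by
    rw [himg, card_image_of_injective _ hR.inj, card_univ]
  have tri := hR.tri hE
  have sh : ∀ x y, G.Adj x y → ∃ k, k ∈ φ x ∧ k ∈ φ y := fun x y h => ((hR.adj x y).1 (hle h)).2
  have mE : ∀ x, φ x ∈ E := fun x => (hE _).2 ⟨x, rfl⟩
  have two : ∀ x k l, k ≠ l → k ∈ φ x → l ∈ φ x → φ x = s(k, l) := fun x k l h h1 h2 => (Sym2.mem_and_mem_iff h).1 ⟨h1, h2⟩
  have cut : ∀ k, CutS G {x | k ∈ φ x} := by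
    rintro k X ⟨x, hx, hxX⟩ ⟨y, hy, hyX⟩
    have hxy : x ≠ y := by rintro rfl; exact hyX hxX
    obtain ⟨c, hcX, d, hdX, hcd, ⟨c1, c2⟩, d1, d2⟩ := hCC x y ((hR.adj x y).2 ⟨hxy, k, hx, hy⟩) X hxX hyX
    exact ⟨c, hR.cl x y c k hxy hx hy c1 c2, hcX, d, hR.cl x y d k hxy hx hy d1 d2, hdX, hcd⟩
  have cl : ∀ k x y w, x ≠ y → k ∈ φ x → k ∈ φ y → G.Adj x w → G.Adj y w → k ∈ φ w := 
    fun k x y w hxy hx hy h1 h2 => hR.cl x y w k hxy hx hy (.inr (hle h1)) (.inr (hle h2))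
  have nb : ∀ k x y z, k ∈ φ x → k ∈ φ y → k ∈ φ z → G.Adj x y → G.Adj x z → y ≠ z → ¬ G.Adj y z →
      ∀ w, G.Adj x w → k ∈ φ w := by
    intro k x y z xS yS zS xy xz yz nyz w xw
    by_contra hw
    rcases hc x y z w xy xz xw yz (by rintro rfl; exact hw yS) (by rintro rfl; exact hw zS) with h | h | h
    · exact nyz h
    · exact hw (cl k x y w xy.ne xS yS xw h)
    · exact hw (cl k x z w xz.ne xS zS xw h)
  have hb' : ∀ i, ∃ c, G.Adj (a i) c ∧ u i ∈ φ c ∧ A ∉ φ c ∧ (c = b i ∨ ∀ w, G.Adj c w → u i ∈ φ w) := by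
    intro i
    by_cases h : G.Adj (a i) (b i)
    · refine ⟨b i, h, by simp [hb], ?_, .inl rfl⟩
      rw [hb, Sym2.mem_iff]; rintro (e | e)
      exacts [uA i e.symm, vA i e.symm]
    · obtain ⟨x, hx, hxX, y, hy, hyX, hxy⟩ := cut (u i) {x | x = a i ∨ G.Adj (a i) x} ⟨a i, by simp [ha], .inl rfl⟩
        ⟨b i, by simp [hb], by
          rintro (e | e)
          · have := ha i
            rw [← e, hb, Sym2.eq_iff] at this
            rcases this with ⟨e, -⟩ | ⟨-, e⟩
            exacts [uA i e, vA i e]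
          · exact h e⟩
      have hya : y ≠ a i := fun e => hyX (.inl e)
      have hya' : ¬ G.Adj (a i) y := fun e => hyX (.inr e)
      rcases hxX with rfl | hxX
      · exact absurd hxy hya'
      · refine ⟨x, hxX, hx, ?_, .inr (nb (u i) x (a i) y hx (by simp [ha]) hy hxX.symm hxy hya.symm hya')⟩
        intro hA
        have := two x A (u i) (uA i).symm hA hx
        rw [← ha] at this
        exact hxX.ne (hR.inj this).symm
  choose c hac huc hAc hcc using hb'
  have aA : ∀ i, A ∈ φ (a i) := fun i => by simp [ha]
  have au : ∀ i, u i ∈ φ (a i) := fun i => by simp [ha]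
  have bu : ∀ i, u i ∈ φ (b i) := fun i => by simp [hb]
  have bv : ∀ i, v i ∈ φ (b i) := fun i => by simp [hb]
  have auniq : ∀ i x, A ∈ φ x → u i ∈ φ x → x = a i := by
    intro i x h1 h2
    apply hR.inj
    rw [ha]; exact two x _ _ (uA i).symm h1 h2
  have udisj : ∀ i j x, i ≠ j → u i ∈ φ x → u j ∈ φ x → False := by
    intro i j x hij h1 h2
    have := two x _ _ (fun e => hij (uinj e)) h1 h2
    exact tri A (u i) (u j) (hAu i) (this ▸ mE x) (hAu j)
  have hu : ∀ i x, A ∈ φ x → G.Adj x (c i) → x = a i := by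
    intro i x hx hxc
    obtain ⟨k, hk1, hk2⟩ := sh _ _ hxc
    by_cases e : k = u i
    · subst e; exact auniq i x hx hk1
    · exfalso
      have kA : k ≠ A := by rintro rfl; exact hAc i hk2
      have e1 := two (c i) _ _ (Ne.symm e) (huc i) hk2
      have e2 := two x _ _ kA.symm hx hk1
      exact tri A (u i) k (hAu i) (e1 ▸ mE _) (e2 ▸ mE _)
  have hcc' : ∀ i j, ¬ G.Adj (c i) (c j) := by
    intro i j h
    by_cases hij : i = j
    · subst hij; exact G.loopless.irrefl _ h
    rcases hcc i with e1 | e1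
    · rcases hcc j with e2 | e2
      · rw [e1, e2] at h
        obtain ⟨k, h1, h2⟩ := sh _ _ h
        rw [hb, Sym2.mem_iff] at h1 h2
        rcases h1 with rfl | rfl <;> rcases h2 with h2 | h2
        · exact hij (uinj h2)
        · exact uv _ _ h2
        · exact uv _ _ h2.symm
        · exact hij (vinj h2)
      · exact udisj i j (c i) hij (huc i) (e2 _ h.symm)
    · exact udisj i j (c j) hij (e1 _ h) (huc j)
  obtain ⟨t, p, hnet, htS, hp⟩ := exists_net hc (cut A) (a := a) (b := c)
    (by
      intro i j e
      by_contra hij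
      exact udisj i j (a i) hij (au i) (e ▸ au j))
    aA hAc hac hu hcc' (cl A)
  have hcount := hnet.count hc (S := N A) (fun i => (hNd _ _).2 (htS i))
  have bound : ∀ i, (Nc G (p i)).card + 2 ≤ (Nc G (p i) ∩ N A).card + ((N (u i)).card + (N (v i)).card) := by
    intro i
    have v1 : 1 ≤ (N (v i)).card := card_pos.2 ⟨b i, (hNd _ _).2 (bv i)⟩
    have u1 : 1 ≤ (N (u i)).card := card_pos.2 ⟨b i, (hNd _ _).2 (bu i)⟩
    rcases hp i with e | e | ⟨hpA, hpw⟩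
    · rw [e]
      have c1 : 1 ≤ (Nc G (c i) ∩ N A).card := card_pos.2 ⟨a i, by
        rw [mem_inter, mem_Nc, hNd]; exact ⟨.inr (hac i).symm, aA i⟩⟩
      have c2 : 1 ≤ (N (u i) ∩ N (v i)).card := card_pos.2 ⟨b i, by
        rw [mem_inter, hNd, hNd]; exact ⟨bu i, bv i⟩⟩
      have c3 := card_union_add_card_inter (N (u i)) (N (v i))
      have c4 : Nc G (c i) ⊆ N (u i) ∪ N (v i) := by
        intro w hw
        rw [mem_Nc] at hw
        rw [mem_union, hNd, hNd]
        rcases hw with rfl | hw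
        · exact .inl (huc i)
        rcases hcc i with e1 | e1
        · rw [e1] at hw
          obtain ⟨k, h1, h2⟩ := sh _ _ hw
          rw [hb, Sym2.mem_iff] at h1
          rcases h1 with rfl | rfl
          exacts [.inl h2, .inr h2]
        · exact .inl (e1 w hw)
      have := card_le_card c4
      omega
    · rw [e]
      have c1 := card_inter_add_card_sdiff (Nc G (a i)) (N A)
      have c2 : Nc G (a i) \ N A ⊆ (N (u i)).erase (a i) := by
        intro w hw
        rw [mem_sdiff, mem_Nc, hNd] at hw
        rw [mem_erase, hNd]
        rcases hw with ⟨rfl | hw, hA⟩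
        · exact absurd (aA i) hA
        · refine ⟨hw.ne.symm, ?_⟩
          obtain ⟨k, h1, h2⟩ := sh _ _ hw
          rw [ha, Sym2.mem_iff] at h1
          rcases h1 with rfl | rfl
          exacts [absurd h2 hA, h2]
      have c3 := card_le_card c2
      rw [card_erase_of_mem ((hNd _ _).2 (au i))] at c3
      omega
    · have c1 : Nc G (p i) ∩ N A = Nc G (p i) := by
        rw [inter_eq_left]
        intro w hw
        rw [mem_Nc] at hw
        rw [hNd]
        rcases hw with rfl | hw
        exacts [hpA, hpw w hw]
      rw [c1]; omega
  have hdeg : ∀ i, Fintype.card V + 1 ≤ 3 * (Nc G (p i)).card := by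
    intro i
    have := hN t p hnet i
    rw [card_Nc]; omega
  rw [hEc]
  simp only [hdg]
  rw [Fin.sum_univ_three] at hcount ⊢
  have := bound 0
  have := bound 1
  have := bound 2
  have := hdeg 0
  have := hdeg 1
  have := hdeg 2
  omega

end BR

namespace BR

lemma exists_walk {V : Type*} {G : SimpleGraph V} : ∀ (l : List V) (a b : V), LP G l a b → ∃ p : G.Walk a b, p.support = l
  | [], a, b, h => by simp [LP] at h
  | [x], a, b, h => by
    obtain ⟨-, h1, h2⟩ := h
    simp at h1 h2
    subst h1 h2
    exact ⟨SimpleGraph.Walk.nil, rfl⟩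
  | x :: y :: l, a, b, h => by
    obtain ⟨h0, h1, h2⟩ := h
    simp only [List.head?_cons, Option.some.injEq] at h1
    subst h1
    rw [List.isChain_cons_cons] at h0
    obtain ⟨p, hp⟩ := exists_walk (y :: l) y b ⟨h0.2, rfl, by simpa using h2⟩
    exact ⟨SimpleGraph.Walk.cons h0.1 p, by simp [hp]⟩

lemma HC.isHamiltonian {V : Type*} [Fintype V] [DecidableEq V] {G : SimpleGraph V} (hV : 3 ≤ Fintype.card V)
    (h : HC G) : G.IsHamiltonian := by
  intro _
  obtain ⟨l, a, b, hl, hba, hnd, hall⟩ := h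
  obtain ⟨p, rfl⟩ := exists_walk l a b hl
  have hp : p.IsPath := SimpleGraph.Walk.IsPath.mk' hnd
  have hlen : Fintype.card V ≤ p.support.length := by
    rw [← List.toFinset_card_of_nodup hnd, ← Finset.card_univ]
    exact Finset.card_le_card (fun v _ => List.mem_toFinset.2 (hall v))
  refine ⟨b, SimpleGraph.Walk.cons hba p, ?_, ?_⟩
  · rw [SimpleGraph.Walk.cons_isCycle_iff]
    refine ⟨hp, ?_⟩
    cases p with
    | nil => simp
    | @cons _ c _ h q =>
      rw [SimpleGraph.Walk.cons_isPath_iff] at hp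
      rw [SimpleGraph.Walk.edges_cons, List.mem_cons]
      rintro (e | e)
      · rw [Sym2.eq_iff] at e
        rcases e with ⟨e, -⟩ | ⟨rfl, -⟩
        · exact hba.ne e
        · have := (SimpleGraph.Walk.isPath_iff_nil.1 hp.1).eq_nil
          rw [this] at hlen
          simp at hlen
          omega
      · exact hp.2 (q.snd_mem_support_of_mem_edges e)
  · rw [SimpleGraph.Walk.IsPath.isHamiltonian_iff]
    · simpa using hall
    · simpa using hp

lemma noClaw_of {V : Type*} {G : SimpleGraph V} (h : ClawFree G) : NoClaw G := by
  intro x a b c xa xb xc ab ac bc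
  by_contra hno
  push Not at hno
  obtain ⟨n1, n2, n3⟩ := hno
  have n1' : ¬ G.Adj b a := fun h => n1 h.symm
  have n2' : ¬ G.Adj c a := fun h => n2 h.symm
  have n3' : ¬ G.Adj c b := fun h => n3 h.symm
  apply h
  refine ⟨Sum.elim (fun _ => x) ![a, b, c], ?_, ?_⟩
  · rintro (i | i) (j | j) e
    · rw [Subsingleton.elim i j]
    · exfalso
      fin_cases j
      exacts [xa.ne e, xb.ne e, xc.ne e]
    · exfalso
      fin_cases i
      exacts [xa.ne e.symm, xb.ne e.symm, xc.ne e.symm]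
    · fin_cases i <;> fin_cases j <;> first | rfl | skip
      exacts [absurd e ab, absurd e ac, absurd e ab.symm, absurd e bc, absurd e ac.symm, absurd e bc.symm]
  · rintro (i | i) (j | j)
    · simp
    · fin_cases j <;> simp [xa, xb, xc]
    · fin_cases i <;> simp [xa.symm, xb.symm, xc.symm]
    · fin_cases i <;> fin_cases j <;> simp [n1, n2, n3, n1', n2', n3']

lemma tc_of {V : Type*} [Fintype V] {G : SimpleGraph V} (h : TwoConnected G) : TC G := by
  rintro v X ⟨a, hav, haX⟩ ⟨b, hbv, hbX⟩
  by_contra hno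
  push Not at hno
  obtain ⟨p⟩ := (h.2 v).preconnected ⟨a, hav⟩ ⟨b, hbv⟩
  have key : ∀ (x y : {w | w ≠ v}) (_ : (G.induce {w | w ≠ v}).Walk x y), x.1 ∈ X → y.1 ∈ X := by
    intro x y p
    induction p with
    | nil => exact id
    | @cons x z y hxz q ih =>
      intro hx
      apply ih
      by_contra hz
      exact hno x.1 z.1 hx hz z.2 hxz
  exact hbX (key _ _ p haX)

lemma nbr_of {V : Type*} [Fintype V] {G : SimpleGraph V} (h3 : 3 ≤ Fintype.card V) (h : TC G) (v : V) : ∃ w, G.Adj v w := by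
  classical
  obtain ⟨x, hx⟩ : ∃ x, x ≠ v := Fintype.exists_ne_of_one_lt_card (by omega) v
  obtain ⟨y, hy⟩ : ∃ y, y ∉ ({v, x} : Finset V) := by
    by_contra hno
    push Not at hno
    have : (Finset.univ : Finset V) ⊆ {v, x} := fun y _ => hno y
    have := Finset.card_le_card this
    have h2 : ({v, x} : Finset V).card ≤ 2 := Finset.card_le_two
    rw [Finset.card_univ] at this
    omega
  simp only [Finset.mem_insert, Finset.mem_singleton, not_or] at hy
  obtain ⟨a, b, ha, -, -, hab⟩ := h x {v} ⟨v, hx.symm, rfl⟩ ⟨y, hy.2, hy.1⟩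
  obtain rfl : a = v := ha
  exact ⟨b, hab⟩

open scoped Classical in
lemma main {V : Type*} [Fintype V] {G : SimpleGraph V} (h3 : 3 ≤ Fintype.card V) (hc : NoClaw G) (hT : TC G)
    (hN : ∀ t p, Net G t p → ∀ i, Fintype.card V ≤ 3 * (Finset.univ.filter (G.Adj (p i))).card + 2) : HC G := by
  by_contra hn
  obtain ⟨G', hle, hc', hn', hCC, hcl⟩ := exists_closure h3 hc hn
  have hT' : TC G' := by
    intro v X h1 h2
    obtain ⟨a, b, ha, hb, hbv, hab⟩ := hT v X h1 h2
    exact ⟨a, b, ha, hb, hbv, hle hab⟩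
  obtain ⟨φ, hR⟩ := exists_rep hcl hc' (nbr_of h3 hT')
  have hE : ∀ e, e ∈ Finset.univ.image φ ↔ ∃ v, φ v = e := by intro e; simp
  by_cases hC : Clos (Finset.univ.image φ) (Finset.univ.image φ)
  · exact hn' (Clos.hc hR h3 hE hC)
  · obtain ⟨v⟩ : Nonempty V := Fintype.card_pos_iff.1 (by omega)
    obtain ⟨W, H, U, A, B, hM⟩ := exists_mn hR hT' ⟨v, nbr_of h3 hT' v⟩ hE hC
    exact hM.final (spider hc hle hCC hR hE hN)

end BR

/-- Broersma's conjecture: a 2-connected claw-free graph in which every endvertex of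
each induced net has degree at least `(n-2)/3` is hamiltonian. -/
theorem broersma_conjecture_large {V : Type*} [Fintype V] [DecidableEq V] (G : SimpleGraph V)
    (hn : 33 ≤ Fintype.card V)
    (h2conn : TwoConnected G) (hclaw : ClawFree G)
    (hnet : ∀ f : Fin 6 → V, IsInducedCopy netGraph G f →
      ∀ i : Fin 6, 3 ≤ (i : ℕ) →
        ((Fintype.card V : ℝ) - 2) / 3 ≤ (G.neighborSet (f i)).ncard) :
    G.IsHamiltonian := by
  classical
  refine BR.HC.isHamiltonian h2conn.1 (BR.main h2conn.1 (BR.noClaw_of hclaw) (BR.tc_of h2conn) ?_)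
  intro t p h i
  have pne := h.ne
  obtain ⟨ht, htp, hntp, hnp⟩ := h
  have tp : ∀ i j, t i ≠ p j := by
    intro i j e
    have h1 := htp i
    rw [e] at h1
    exact hnp _ _ h1
  have key := hnet ![t 0, t 1, t 2, p 0, p 1, p 2] ⟨?_, ?_⟩ ⟨i.1 + 3, by omega⟩ (by simp)
  · have hd : (G.neighborSet (p i)).ncard = (Finset.univ.filter (G.Adj (p i))).card := by
      rw [← Set.ncard_coe_finset]
      congr 1
      ext x; simp
    have hi : (![t 0, t 1, t 2, p 0, p 1, p 2] : Fin 6 → V) ⟨i.1 + 3, by omega⟩ = p i := by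
      fin_cases i <;> rfl
    rw [hi, hd] at key
    have h2 : (Fintype.card V : ℝ) ≤ ((3 * (Finset.univ.filter (G.Adj (p i))).card + 2 : ℕ) : ℝ) := by
      push_cast
      linarith
    convert Nat.cast_le.1 h2
  · have t01 := (ht 0 1 (by decide)).ne
    have t02 := (ht 0 2 (by decide)).ne
    have t12 := (ht 1 2 (by decide)).ne
    have p01 := pne 0 1 (by decide)
    have p02 := pne 0 2 (by decide)
    have p12 := pne 1 2 (by decide)
    intro x y e
    fin_cases x <;> fin_cases y <;> first | rfl | exfalso
    all_goals first
      | exact tp _ _ e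
      | exact tp _ _ e.symm
      | exact t01 e
      | exact t02 e
      | exact t12 e
      | exact t01 e.symm
      | exact t02 e.symm
      | exact t12 e.symm
      | exact p01 e
      | exact p02 e
      | exact p12 e
      | exact p01 e.symm
      | exact p02 e.symm
      | exact p12 e.symm
  · have t01 := ht 0 1 (by decide)
    have t02 := ht 0 2 (by decide)
    have t12 := ht 1 2 (by decide)
    have q01 := hntp 0 1 (by decide)
    have q02 := hntp 0 2 (by decide)
    have q12 := hntp 1 2 (by decide)
    have q10 := hntp 1 0 (by decide)
    have q20 := hntp 2 0 (by decide)
    have q21 := hntp 2 1 (by decide)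
    have c0 := htp 0
    have c1 := htp 1
    have c2 := htp 2
    have q01' : ¬ G.Adj (p 1) (t 0) := fun h => q01 h.symm
    have q02' : ¬ G.Adj (p 2) (t 0) := fun h => q02 h.symm
    have q12' : ¬ G.Adj (p 2) (t 1) := fun h => q12 h.symm
    have q10' : ¬ G.Adj (p 0) (t 1) := fun h => q10 h.symm
    have q20' : ¬ G.Adj (p 0) (t 2) := fun h => q20 h.symm
    have q21' : ¬ G.Adj (p 1) (t 2) := fun h => q21 h.symm
    intro x y
    fin_cases x <;> fin_cases y <;>
      simp [netGraph, t01, t02, t12, t01.symm, t02.symm, t12.symm, q01, q02, q12, q10, q20, q21, hnp,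
        q01', q02', q12', q10', q20', q21', c0, c1, c2, c0.symm, c1.symm, c2.symm]
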